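/- arXiv:1505.03210 — 4 statements merged into one kernel-verified Lean document; each statement's English description precedes it below -/
import Mathlib

section
/- Let r ≥ 4 and let H be an (r−2)-reducible r-tree with cross-cut number σ(H) = t+1. Fix a tree-defining ordering of H and a minimum cross-cut S of H, and let w be the last vertex of S to be included as edges of H are added in this ordering. Let H_w be the subgraph of H consisting of all edges containing w, and suppose H_w is a linear star L^r_p (a sunflower of p edges whose kernel is the single vertex w). Then there exists a positive integer n_1 such that for all n ≥ n_1, ex(n,H) ≤ binom(n,r) − binom(n−t,r) + ex(n−t, L^r_p). -/
/-!
The proof combines embedding of hypertrees into full families with a stability argument.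

*Full families.* A family is `K`-full (`Full`) if every element of its shadow can be completed to a
member while avoiding any `K` given vertices. A hypertree embeds greedily into a full family of the
right uniformity, from any root edge (`tree_embed`), and every family becomes full after deleting
at most `K` sets per shadow element lost (`full_part`). In particular, a family of `k`-sets
without nonempty full subfamilies has only `O(n ^ (k - 1))` members.

*Structure of `H`.* Let `t > 0`. Since `w` is the last vertex of the cross-cut `S`, the star at `w`
meets the other edges of `H` only inside a set `A` of at most two vertices contained in one edge of
each kind (`TreeData`, `exists_treeData`). Deleting `S` from all edges leaves a tree of
`(r - 1)`-sets. So if a full family of `(r - 1)`-sets lies in the common link of `t` vertices, and a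
star suitable for `H_w` is attached to a member of it through the image of `A`, then there is a
copy of `H` (`TreeData.glue`).

*Heavy vertices.* By reducibility the vertices of an edge shared with other edges lie in a pair,
and these pairs form a tree. Hence a full family of fat pairs (`Fat`) yields a copy of `H`, and an
`H`-free family `F` has only `O(n)` fat pairs. Nearly all edges of `F` are covered by pairwise
intersecting fat pairs, hence by a star of fat pairs, whose centre is usually one of boundedly many
vertices. So nearly all edges of `F` meet a bounded set of vertices
(`TreeData.exceptional_bound`).

*Stability.* Assign to each `(r - 1)`-set its neighbourhood within this bounded set. By full parts,
few neighbourhoods have `t + 1` or more vertices (`TreeData.contains_of_common`); as `F` is large,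
nearly all have exactly `t`. Two `(r - 1)`-sets in the full parts for different `t`-sets cannot
share two vertices (`TreeData.contains_of_mixed`), and `r - 2 ≥ 2`, so the neighbourhood does not
change when one element is exchanged. Hence nearly all neighbourhoods equal one `t`-set `L`
(`connect_sets`, `TreeData.stability`).

*Exact bound.* Let `M` be the number of `r`-sets meeting `L` and missing from `F`. The common link
of `L` has a full part covering all but `O(M / n ^ (r - 3))` pairs outside `L`
(`exists_full_link`). The edges of `F` avoiding `L` that contain a covered pair contain no linear
star with `p` petals (`TreeData.no_star`). The remaining ones are cliques in the sparse graph of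
uncovered pairs and contain no full subfamily, so they are at most `K` times as many as their
shadow, which has at most `M / K` members (`clique_shadow`). Thus they are no more
numerous than the missing sets (`TreeData.exact`).

For `t = 0` the hypergraph `H` is itself the linear star.
-/

open Finset
open scoped Classical

noncomputable section

variable {α β : Type*}

/-- The vertex set of a hypergraph given by its finite edge set. -/
def hverts [DecidableEq α] (H : Finset (Finset α)) : Finset α := H.sup id

/-- `E 0, E 1, …, E (m-1)` is a tree-defining ordering: every edge after the first
has a parent among the earlier edges containing its intersection with the union of
all earlier edges. -/
def IsTreeOrder {m : ℕ} [DecidableEq α] (E : Fin m → Finset α) : Prop :=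
  ∀ i : Fin m, 0 < i.1 → ∃ j : Fin m, j < i ∧ E i ∩ (Finset.Iio i).sup E ⊆ E j

/-- A tight tree-defining ordering for an `r`-uniform hypergraph. -/
def IsTightTreeOrder {m : ℕ} [DecidableEq α] (r : ℕ) (E : Fin m → Finset α) : Prop :=
  ∀ i : Fin m, 0 < i.1 → ∃ j : Fin m, j < i ∧ E i ∩ (Finset.Iio i).sup E ⊆ E j ∧
    (E i ∩ E j).card = r - 1

/-- `H` is an `r`-tree: its edges admit a tree-defining ordering (with multiplicities
allowed in the ordering), and all edges have `r` vertices. -/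
def IsRTree [DecidableEq α] (r : ℕ) (H : Finset (Finset α)) : Prop :=
  ∃ (m : ℕ) (E : Fin m → Finset α),
    H = Finset.image E Finset.univ ∧ IsTreeOrder E ∧ ∀ i, (E i).card = r

/-- `H` is a tight `r`-tree. -/
def IsTightRTree [DecidableEq α] (r : ℕ) (H : Finset (Finset α)) : Prop :=
  ∃ (m : ℕ) (E : Fin m → Finset α),
    H = Finset.image E Finset.univ ∧ IsTightTreeOrder r E ∧ ∀ i, (E i).card = r

/-- The degree of a vertex: the number of edges containing it. -/
def hdeg [DecidableEq α] (H : Finset (Finset α)) (x : α) : ℕ :=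
  (H.filter (fun E => x ∈ E)).card

/-- `H` is `k`-reducible: every edge contains at least `k` vertices of degree 1. -/
def Reducible [DecidableEq α] (k : ℕ) (H : Finset (Finset α)) : Prop :=
  ∀ E ∈ H, k ≤ (E.filter (fun x => hdeg H x = 1)).card

/-- `S` is a cross-cut of `H`: it meets every edge in exactly one vertex. -/
def IsCrossCut [DecidableEq α] (H : Finset (Finset α)) (S : Finset α) : Prop :=
  ∀ E ∈ H, (E ∩ S).card = 1

/-- The cross-cut number: minimum size of a cross-cut. -/
def crossCutNum [DecidableEq α] (H : Finset (Finset α)) : ℕ :=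
  sInf {k | ∃ S : Finset α, IsCrossCut H S ∧ S.card = k}

/-- `S` is a vertex cover of `H`. -/
def IsVertexCover [DecidableEq α] (H : Finset (Finset α)) (S : Finset α) : Prop :=
  ∀ E ∈ H, (E ∩ S).Nonempty

/-- The vertex cover number: minimum size of a vertex cover. -/
def coverNum [DecidableEq α] (H : Finset (Finset α)) : ℕ :=
  sInf {k | ∃ S : Finset α, IsVertexCover H S ∧ S.card = k}

/-- `G` contains a copy of `H`, i.e. `H` is embeddable in `G`. -/
def ContainsCopy [DecidableEq α] [DecidableEq β] (G : Finset (Finset β))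
    (H : Finset (Finset α)) : Prop :=
  ∃ f : α → β, Set.InjOn f ↑(H.sup id) ∧ ∀ E ∈ H, E.image f ∈ G

/-- The Turán number `ex(n, H)`: the maximum size of an `r`-uniform family on `[n]`
containing no copy of `H`. -/
def exNum [DecidableEq α] (n r : ℕ) (H : Finset (Finset α)) : ℕ :=
  sSup {N | ∃ F : Finset (Finset (Fin n)), (∀ E ∈ F, E.card = r) ∧
    ¬ ContainsCopy F H ∧ F.card = N}


/-- A concrete copy of the `r`-uniform linear star `L^r_p`: a sunflower with `p` petals
whose kernel is the single vertex `0`. -/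
def linearStar (r p : ℕ) : Finset (Finset ℕ) :=
  (Finset.range p).image
    (fun i => insert 0 ((Finset.range (r - 1)).image (fun j => i * (r - 1) + j + 1)))

/-! ### Full families and the embedding of hypertrees -/

section Embedding

variable [DecidableEq α] [DecidableEq β]

/-- An injection of a part `I` of `E` into `D` extends to a bijection from `E` onto `D`, when both
have the same size. -/
theorem ext_bij (E : Finset α) (D : Finset β) (hc : E.card = D.card) (I : Finset α)
    (hI : I ⊆ E) (g : α → β) (hg : Set.InjOn g I) (hgD : I.image g ⊆ D) :
    ∃ h : α → β, (∀ x ∈ I, h x = g x) ∧ Set.InjOn h E ∧ E.image h = D := by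
  have hcard : (E \ I).card = (D \ I.image g).card := by
    rw [card_sdiff_of_subset hI, card_sdiff_of_subset hgD, card_image_of_injOn hg, hc]
  let e := Finset.equivOfCardEq hcard
  let h : α → β := fun x => if hx : x ∈ E \ I then (e ⟨x, hx⟩ : β) else g x
  have h1 : ∀ x ∈ I, h x = g x := by
    intro x hx
    have : x ∉ E \ I := by simp [hx]
    simp only [h, dif_neg this]
  have h2 : ∀ x (hx : x ∈ E \ I), h x = e ⟨x, hx⟩ := by
    intro x hx
    simp only [h, dif_pos hx]
  have h3 : Set.InjOn h E := by
    intro x hx y hy hxy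
    by_cases hxI : x ∈ I <;> by_cases hyI : y ∈ I
    · rw [h1 x hxI, h1 y hyI] at hxy
      exact hg hxI hyI hxy
    · have hy' : y ∈ E \ I := mem_sdiff.2 ⟨hy, hyI⟩
      rw [h1 x hxI, h2 y hy'] at hxy
      have := (e ⟨y, hy'⟩).2
      rw [← hxy] at this
      exact absurd (mem_image_of_mem g hxI) (mem_sdiff.1 this).2
    · have hx' : x ∈ E \ I := mem_sdiff.2 ⟨hx, hxI⟩
      rw [h1 y hyI, h2 x hx'] at hxy
      have := (e ⟨x, hx'⟩).2
      rw [hxy] at this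
      exact absurd (mem_image_of_mem g hyI) (mem_sdiff.1 this).2
    · have hx' : x ∈ E \ I := mem_sdiff.2 ⟨hx, hxI⟩
      have hy' : y ∈ E \ I := mem_sdiff.2 ⟨hy, hyI⟩
      rw [h2 x hx', h2 y hy'] at hxy
      have := e.injective (Subtype.ext hxy)
      exact congrArg Subtype.val this
  refine ⟨h, h1, h3, ?_⟩
  apply eq_of_subset_of_card_le
  · intro y hy
    obtain ⟨x, hx, rfl⟩ := mem_image.1 hy
    by_cases hxI : x ∈ I
    · rw [h1 x hxI]; exact hgD (mem_image_of_mem g hxI)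
    · have hx' : x ∈ E \ I := mem_sdiff.2 ⟨hx, hxI⟩
      rw [h2 x hx']
      exact (mem_sdiff.1 (e ⟨x, hx'⟩).2).1
  · rw [card_image_of_injOn h3, hc]

/-- Extends an embedding of `V` so that a further edge `E` is mapped onto `D`, provided that `D`
meets the image of `V` only where it has to. -/
theorem extend_one (f : α → β) (V E : Finset α) (D : Finset β) (hf : Set.InjOn f V)
    (hc : E.card = D.card) (hsub : (E ∩ V).image f ⊆ D)
    (hdis : ∀ y ∈ D, y ∉ (E ∩ V).image f → y ∉ V.image f) :
    ∃ f' : α → β, (∀ x ∈ V, f' x = f x) ∧ Set.InjOn f' (V ∪ E : Finset α) ∧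
      E.image f' = D := by
  obtain ⟨h, h1, h2, h3⟩ := ext_bij E D hc (E ∩ V) inter_subset_left f
    (hf.mono (by intro x hx; exact (mem_inter.1 hx).2)) hsub
  let f' : α → β := fun x => if x ∈ V then f x else h x
  have a1 : ∀ x ∈ V, f' x = f x := fun x hx => if_pos hx
  have a2 : ∀ x ∈ E, f' x = h x := by
    intro x hx
    by_cases hxV : x ∈ V
    · rw [a1 x hxV, h1 x (mem_inter.2 ⟨hx, hxV⟩)]
    · exact if_neg hxV
  have key : ∀ x ∈ V, ∀ y ∈ E, f x = h y → x = y := by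
    intro x hx y hy hxy
    have hyD : h y ∈ D := h3 ▸ mem_image_of_mem h hy
    by_cases hyI : h y ∈ (E ∩ V).image f
    · obtain ⟨z, hz, hzy⟩ := mem_image.1 hyI
      have hzE := mem_inter.1 hz
      have e1 : x = z := hf hx hzE.2 (by rw [hxy, hzy])
      have e2 : z = y := h2 hzE.1 hy (by rw [h1 z hz, hzy])
      exact e1.trans e2
    · exact absurd (hxy ▸ mem_image_of_mem f hx) (hdis _ hyD hyI)
  refine ⟨f', a1, ?_, ?_⟩
  · intro x hx y hy hxy
    rcases mem_union.1 (mem_coe.1 hx) with hx | hx <;> rcases mem_union.1 (mem_coe.1 hy) with hy | hy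
    · rw [a1 x hx, a1 y hy] at hxy; exact hf hx hy hxy
    · rw [a1 x hx, a2 y hy] at hxy; exact key x hx y hy hxy
    · rw [a2 x hx, a1 y hy] at hxy; exact (key y hy x hx hxy.symm).symm
    · rw [a2 x hx, a2 y hy] at hxy; exact h2 hx hy hxy
  · rw [← h3]; exact image_congr (fun x hx => a2 x hx)

/-- `G` is `K`-full: whenever a vertex is deleted from an edge of `G`, the resulting set can
be completed to an edge of `G` while avoiding any prescribed set of at most `K` vertices. -/
def Full (K : ℕ) (G : Finset (Finset β)) : Prop :=
  ∀ D ∈ G, ∀ x ∈ D, ∀ X : Finset β, X.card ≤ K →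
    ∃ y, y ∉ X ∧ y ∉ D.erase x ∧ insert y (D.erase x) ∈ G

/-- A member of a full family can be moved off `X` while keeping its subset `I`, by exchanging its
vertices in `X` one at a time; `c` counts the exchanges. -/
theorem full_swap {K : ℕ} {G : Finset (Finset β)} (hG : Full K G) (I X : Finset β)
    (hX : X.card ≤ K) : ∀ c : ℕ, ∀ D ∈ G, I ⊆ D → ((D \ I) ∩ X).card = c →
      ∃ D' ∈ G, I ⊆ D' ∧ D'.card = D.card ∧ ∀ y ∈ D', y ∉ I → y ∉ X := by
  intro c
  induction c with
  | zero =>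
    intro D hD hI hc
    refine ⟨D, hD, hI, rfl, fun y hy hyI hyX => ?_⟩
    have : y ∈ (D \ I) ∩ X := mem_inter.2 ⟨mem_sdiff.2 ⟨hy, hyI⟩, hyX⟩
    rw [card_eq_zero.1 hc] at this
    simp at this
  | succ c ih =>
    intro D hD hI hc
    obtain ⟨x, hx⟩ : ((D \ I) ∩ X).Nonempty := card_pos.1 (by omega)
    have hx1 := mem_sdiff.1 (mem_inter.1 hx).1
    obtain ⟨y, hyX, hyD, hyG⟩ := hG D hD x hx1.1 X hX
    have e : (insert y (D.erase x) \ I) ∩ X = ((D \ I) ∩ X).erase x := by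
      ext z
      simp only [mem_inter, mem_sdiff, mem_insert, mem_erase]
      constructor
      · rintro ⟨⟨rfl | h, h2⟩, h3⟩
        · exact absurd h3 hyX
        · exact ⟨h.1, ⟨h.2, h2⟩, h3⟩
      · rintro ⟨h1, ⟨h2, h3⟩, h4⟩
        exact ⟨⟨Or.inr ⟨h1, h2⟩, h3⟩, h4⟩
    obtain ⟨D', h1, h2, h3, h4⟩ := ih _ hyG
      (by
        intro z hz
        refine mem_insert_of_mem (mem_erase.2 ⟨?_, hI hz⟩)
        rintro rfl; exact hx1.2 hz)
      (by rw [e, card_erase_of_mem hx, hc]; rfl)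
    refine ⟨D', h1, h2, ?_, h4⟩
    rw [h3, card_insert_of_notMem hyD, card_erase_add_one hx1.1]

/-- The tree-ordering condition for a sequence indexed by `ℕ`, of which only the first `m`
terms matter. -/
def TreeOrd (m : ℕ) (E : ℕ → Finset α) : Prop :=
  ∀ i, 0 < i → i < m → ∃ j < i, ∀ l < i, E i ∩ E l ⊆ E j

/-- One step of an embedding: an edge `E` whose intersection with the embedded part `V` lies in an
embedded edge `E'` can be embedded too, its new vertices avoiding `X`. -/
theorem full_step {K : ℕ} {G : Finset (Finset β)} (hG : Full K G) (f : α → β)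
    (V E E' : Finset α) (X : Finset β) (hf : Set.InjOn f V) (hE' : E' ⊆ V)
    (hpar : E ∩ V ⊆ E') (hc : E.card = E'.card) (hEG : E'.image f ∈ G)
    (hX : X.card + V.card ≤ K) :
    ∃ f' : α → β, (∀ x ∈ V, f' x = f x) ∧ Set.InjOn f' (V ∪ E : Finset α) ∧
      E.image f' ∈ G ∧ ∀ x ∈ E, x ∉ V → f' x ∉ X ∧ f' x ∉ V.image f := by
  obtain ⟨D', h1, h2, h3, h4⟩ := full_swap hG ((E ∩ V).image f) (X ∪ V.image f)
    ((card_union_le _ _).trans ((Nat.add_le_add_left card_image_le _).trans hX)) _ _ hEG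
    (image_subset_image hpar) rfl
  have hcE' : (E'.image f).card = E'.card :=
    card_image_of_injOn (hf.mono (by exact_mod_cast hE'))
  obtain ⟨f', g1, g2, g3⟩ := extend_one f V E D' hf (by rw [h3, hcE', hc]) h2
    (fun y hy hyI hyV => h4 y hy hyI (mem_union_right _ hyV))
  refine ⟨f', g1, g2, g3 ▸ h1, fun x hx hxV => ?_⟩
  have hnot : f' x ∉ V.image f := by
    intro hmem
    obtain ⟨z, hz, hzx⟩ := mem_image.1 hmem
    have : z = x := g2 (by simp [hz]) (by simp [hx]) (by rw [g1 z hz, hzx])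
    exact hxV (this ▸ hz)
  refine ⟨fun hmem => ?_, hnot⟩
  have hxD : f' x ∈ D' := g3 ▸ mem_image_of_mem f' hx
  refine h4 _ hxD (fun h => hnot ?_) (mem_union_left _ hmem)
  exact image_subset_image inter_subset_right h

/-- The first `i` edges of a hypertree embed into a full family `G`, extending a prescribed
embedding of any one edge `E j`, with all other vertices avoiding `X`. -/
theorem tree_embed {K k m : ℕ} {G : Finset (Finset β)} (hG : Full K G) {E : ℕ → Finset α}
    (hT : TreeOrd m E) (hk : ∀ i < m, (E i).card = k) :
    ∀ i, i ≤ m → ∀ j < i, ∀ (g : α → β) (X : Finset β), Set.InjOn g (E j) →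
      (E j).image g ∈ G → X.card + i * k ≤ K →
      ∃ f : α → β, Set.InjOn f ((range i).biUnion E : Finset α) ∧ (∀ x ∈ E j, f x = g x) ∧
        (∀ l < i, (E l).image f ∈ G) ∧
        ∀ x ∈ (range i).biUnion E, x ∉ E j → f x ∉ X := by
  intro i
  induction i with
  | zero => intro _ j hj; omega
  | succ i ih =>
    intro him j hj g X hg hgG hX
    have hVcard : ((range i).biUnion E).card ≤ i * k := by
      have := card_biUnion_le_card_mul (range i) E k
        (fun l hl => (hk l (by have := mem_range.1 hl; omega)).le)
      simpa using this
    have hmk : (i + 1) * k = i * k + k := by ring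
    have hV : (range (i + 1)).biUnion E = (range i).biUnion E ∪ E i := by
      rw [range_add_one, biUnion_insert, union_comm]
    rcases Nat.lt_succ_iff_lt_or_eq.1 hj with hji | rfl
    · -- the root is an earlier edge: embed the earlier edges and attach the new one
      obtain ⟨f, f1, f2, f3, f4⟩ := ih (by omega) j hji g X hg hgG (by omega)
      obtain ⟨q, hq, hpar⟩ := hT i (by omega) (by omega)
      obtain ⟨f', g1, g2, g3, g4⟩ := full_step hG f ((range i).biUnion E) (E i) (E q) X f1
        (subset_biUnion_of_mem E (mem_range.2 hq))
        (by
          intro x hx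
          obtain ⟨hx1, hx2⟩ := mem_inter.1 hx
          obtain ⟨l, hl, hxl⟩ := mem_biUnion.1 hx2
          exact hpar l (mem_range.1 hl) (mem_inter.2 ⟨hx1, hxl⟩))
        (by rw [hk i (by omega), hk q (by omega)]) (f3 q hq) (by omega)
      have hsub : ∀ l < i, E l ⊆ (range i).biUnion E := fun l hl =>
        subset_biUnion_of_mem E (mem_range.2 hl)
      refine ⟨f', by rw [hV]; exact g2, ?_, ?_, ?_⟩
      · intro x hx
        rw [g1 x (hsub j hji hx), f2 x hx]
      · intro l hl
        rcases Nat.lt_succ_iff_lt_or_eq.1 hl with hl | rfl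
        · rw [image_congr (fun x hx => g1 x (hsub l hl hx))]
          exact f3 l hl
        · exact g3
      · intro x hx hxj
        rw [hV] at hx
        by_cases hxV : x ∈ (range i).biUnion E
        · rw [g1 x hxV]; exact f4 x hxV hxj
        · rcases mem_union.1 hx with hx | hx
          · exact absurd hx hxV
          · exact (g4 x hx hxV).1
    · -- the root is the newest edge: place its parent next to it and embed the earlier edges
      -- with the parent as root
      rcases Nat.eq_zero_or_pos j with rfl | hjpos
      · refine ⟨g, by simpa using hg, fun _ _ => rfl, ?_, ?_⟩
        · intro l hl
          have : l = 0 := by omega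
          subst this; exact hgG
        · intro x hx hx0
          simp at hx; exact absurd hx hx0
      obtain ⟨q, hq, hpar⟩ := hT j hjpos (by omega)
      have hcj := hk j (by omega)
      obtain ⟨g', g1, g2, g3, g4⟩ := full_step hG g (E j) (E q) (E j) X hg subset_rfl
        inter_subset_right (by rw [hk q (by omega), hcj]) hgG (by rw [hcj]; omega)
      have hX' : (X ∪ (E j).image g).card ≤ X.card + k :=
        (card_union_le _ _).trans (Nat.add_le_add_left (card_image_le.trans hcj.le) _)
      obtain ⟨f, f1, f2, f3, f4⟩ := ih (by omega) q hq g' (X ∪ (E j).image g)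
        (g2.mono (by intro x hx; simp [mem_coe.1 hx])) g3 (by omega)
      let F : α → β := fun x => if x ∈ E j then g x else f x
      have F1 : ∀ x ∈ E j, F x = g x := fun x hx => if_pos hx
      have F2 : ∀ x ∈ (range j).biUnion E, F x = f x := by
        intro x hx
        by_cases hxj : x ∈ E j
        · obtain ⟨l, hl, hxl⟩ := mem_biUnion.1 hx
          have hxq : x ∈ E q := hpar l (mem_range.1 hl) (mem_inter.2 ⟨hxj, hxl⟩)
          rw [F1 x hxj, f2 x hxq, g1 x hxj]
        · exact if_neg hxj
      have key : ∀ x ∈ (range j).biUnion E, ∀ y ∈ E j, f x = g y → x = y := by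
        intro x hx y hy hxy
        by_cases hxq : x ∈ E q
        · by_cases hxj : x ∈ E j
          · exact hg hxj hy (by rw [← hxy, f2 x hxq, g1 x hxj])
          · have := (g4 x hxq hxj).2
            rw [← f2 x hxq, hxy] at this
            exact absurd (mem_image_of_mem g hy) this
        · have := f4 x hx hxq
          rw [hxy] at this
          exact absurd (mem_union_right _ (mem_image_of_mem g hy)) this
      refine ⟨F, ?_, F1, ?_, ?_⟩
      · rw [hV]
        intro x hx y hy hxy
        rcases mem_union.1 (mem_coe.1 hx) with hx | hx <;>
          rcases mem_union.1 (mem_coe.1 hy) with hy | hy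
        · rw [F2 x hx, F2 y hy] at hxy; exact f1 hx hy hxy
        · rw [F2 x hx, F1 y hy] at hxy; exact key x hx y hy hxy
        · rw [F1 x hx, F2 y hy] at hxy; exact (key y hy x hx hxy.symm).symm
        · rw [F1 x hx, F1 y hy] at hxy; exact hg hx hy hxy
      · intro l hl
        rcases Nat.lt_succ_iff_lt_or_eq.1 hl with hl | rfl
        · rw [image_congr (fun x hx => F2 x (mem_biUnion.2 ⟨l, mem_range.2 hl, hx⟩))]
          exact f3 l hl
        · rw [image_congr (fun x hx => F1 x hx)]; exact hgG
      · intro x hx hxj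
        rw [hV] at hx
        rcases mem_union.1 hx with hx | hx
        · rw [F2 x hx]
          by_cases hxq : x ∈ E q
          · rw [f2 x hxq]; exact (g4 x hxq hxj).1
          · exact fun h => f4 x hx hxq (mem_union_left _ h)
        · exact absurd hx hxj

/-- Version of `tree_embed` in which the map is prescribed only on a subset `A` of the root edge
and sends it into a member of `G`. -/
theorem tree_embed_at {K k m : ℕ} {G : Finset (Finset β)} (hG : Full K G) {E : ℕ → Finset α}
    (hT : TreeOrd m E) (hk : ∀ i < m, (E i).card = k) (j : ℕ) (hj : j < m)
    (A : Finset α) (hA : A ⊆ E j) (g : α → β) (hg : Set.InjOn g A) (D : Finset β) (hD : D ∈ G)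
    (hDk : D.card = k) (hgD : A.image g ⊆ D) (X : Finset β) (hX : X.card + m * k ≤ K) :
    ∃ f : α → β, Set.InjOn f ((range m).biUnion E : Finset α) ∧ (∀ x ∈ A, f x = g x) ∧
        (∀ l < m, (E l).image f ∈ G) ∧
        ∀ x ∈ (range m).biUnion E, x ∉ A → f x ∉ X := by
  obtain ⟨D', h1, h2, h3, h4⟩ := full_swap hG (A.image g) X (by omega) _ D hD hgD rfl
  obtain ⟨g', e1, e2, e3⟩ := ext_bij (E j) D' (by rw [hk j hj, h3, hDk]) A hA g hg h2
  obtain ⟨f, f1, f2, f3, f4⟩ := tree_embed hG hT hk m le_rfl j hj g' X e2 (e3 ▸ h1) hX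
  refine ⟨f, f1, fun x hx => by rw [f2 x (hA hx), e1 x hx], f3, fun x hx hxA => ?_⟩
  by_cases hxj : x ∈ E j
  · rw [f2 x hxj]
    refine h4 _ (e3 ▸ mem_image_of_mem g' hxj) (fun h => ?_)
    obtain ⟨z, hz, hzx⟩ := mem_image.1 h
    have : z = x := e2 (hA hz) hxj (by rw [e1 z hz, hzx])
    exact hxA (this ▸ hz)
  · exact f4 x hx hxj

/-- Every family has a full subfamily missing at most `K` sets for every element lost from the
shadow: as long as some shadow element has at most `K` extensions, delete these. -/
theorem full_part (K : ℕ) : ∀ (c : ℕ) (G : Finset (Finset β)), G.card = c →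
    ∃ G' ⊆ G, Full K G' ∧ (G \ G').card ≤ K * (G.shadow \ G'.shadow).card := by
  intro c
  induction c using Nat.strong_induction_on with
  | _ c ih =>
    intro G hc
    by_cases hfull : Full K G
    · exact ⟨G, subset_rfl, hfull, by simp⟩
    · unfold Full at hfull
      push Not at hfull
      obtain ⟨D, hD, x, hx, X, hX, hno⟩ := hfull
      set Q := D.erase x with hQ
      have hQG : Q ∈ G.shadow := mem_shadow_iff.2 ⟨D, hD, x, hx, rfl⟩
      let G1 := G.filter (fun e => ¬ ∃ y, y ∉ Q ∧ insert y Q = e)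
      have hG1 : G1 ⊆ G := filter_subset _ _
      have hDG1 : D ∉ G1 := by
        simp only [G1, mem_filter, not_and, not_not]
        intro _
        exact ⟨x, by simp [hQ], by rw [hQ, insert_erase hx]⟩
      have hQG1 : Q ∉ G1.shadow := by
        rw [mem_shadow_iff]
        rintro ⟨s, hs, a, ha, hsa⟩
        refine (mem_filter.1 hs).2 ⟨a, ?_, ?_⟩
        · rw [← hsa]; simp
        · rw [← hsa, insert_erase ha]
      have hlt : G1.card < c := by
        rw [← hc]
        exact card_lt_card ⟨hG1, fun h => hDG1 (h hD)⟩
      obtain ⟨G', h1, h2, h3⟩ := ih _ hlt G1 rfl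
      refine ⟨G', h1.trans hG1, h2, ?_⟩
      have hrem : (G \ G1).card ≤ K := by
        have : G \ G1 ⊆ X.image (fun y => insert y Q) := by
          intro e he
          obtain ⟨heG, heG1⟩ := mem_sdiff.1 he
          simp only [G1, mem_filter, not_and, not_not] at heG1
          obtain ⟨y, hyQ, rfl⟩ := heG1 heG
          refine mem_image.2 ⟨y, ?_, rfl⟩
          by_contra hyX
          exact hno y hyX hyQ heG
        exact (card_le_card this).trans (card_image_le.trans hX)
      have hsh : (G1.shadow \ G'.shadow).card + 1 ≤ (G.shadow \ G'.shadow).card := by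
        rw [← card_insert_of_notMem (a := Q) (s := G1.shadow \ G'.shadow)
          (fun h => hQG1 (mem_sdiff.1 h).1)]
        apply card_le_card
        intro e he
        rcases mem_insert.1 he with rfl | he
        · exact mem_sdiff.2 ⟨hQG, fun h => hQG1 (shadow_mono h1 h)⟩
        · exact mem_sdiff.2 ⟨shadow_mono hG1 (mem_sdiff.1 he).1, (mem_sdiff.1 he).2⟩
      have hsplit : (G \ G').card ≤ (G \ G1).card + (G1 \ G').card := by
        refine (card_le_card ?_).trans (card_union_le _ _)
        intro e he
        by_cases h : e ∈ G1
        · exact mem_union_right _ (mem_sdiff.2 ⟨h, (mem_sdiff.1 he).2⟩)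
        · exact mem_union_left _ (mem_sdiff.2 ⟨(mem_sdiff.1 he).1, h⟩)
      calc (G \ G').card ≤ K + K * (G1.shadow \ G'.shadow).card := by omega
        _ = K * ((G1.shadow \ G'.shadow).card + 1) := by ring
        _ ≤ _ := Nat.mul_le_mul_left _ hsh

end Embedding

/-! ### The structure of the hypertree, and gluing -/

section Structure

variable [DecidableEq α] [DecidableEq β]

/-- The structural information about the hypertree `H` with a cross-cut `S` and last vertex `w`
used below: the edges containing `w` form a linear star, which meets the remaining edges only
inside a set `A` of at most two vertices, contained in one edge `E i₀` of the star and in one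
edge `E j₀` outside the star. The field `core` selects in each edge a pair containing all
vertices shared with other edges. -/
structure TreeData (r t m : ℕ) (E : ℕ → Finset α) (H : Finset (Finset α)) (S A : Finset α)
    (w : α) (i₀ j₀ : ℕ) : Prop where
  ord : TreeOrd m E
  card : ∀ i < m, (E i).card = r
  H_eq : H = (range m).image E
  cross : IsCrossCut H S
  S_card : S.card = t + 1
  w_mem : w ∈ S
  i_lt : i₀ < m
  j_lt : j₀ < m
  w_i : w ∈ E i₀
  w_j : w ∉ E j₀
  A_i : A ⊆ E i₀
  A_j : A ⊆ E j₀
  A_card : A.card ≤ 2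
  A_card' : 2 ≤ hdeg H w → A.card ≤ 1
  attach : ∀ B ∈ H, ∀ C ∈ H, w ∈ B → w ∉ C → B ∩ C ⊆ A
  star : ∀ B ∈ H, ∀ C ∈ H, w ∈ B → w ∈ C → B ≠ C → B ∩ C = {w}
  core : ∃ Cr : Finset α → Finset α, ∀ B ∈ H, Cr B ⊆ B ∧ (Cr B).card = 2 ∧
    ∀ x ∈ B, ∀ C ∈ H, C ≠ B → x ∈ C → x ∈ Cr B

theorem crosscut_unique {H : Finset (Finset α)} {S : Finset α} (hS : IsCrossCut H S)
    {B : Finset α} (hB : B ∈ H) {x y : α} (hx : x ∈ B) (hxS : x ∈ S) (hy : y ∈ B)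
    (hyS : y ∈ S) : x = y :=
  card_le_one.1 (hS B hB).le x (mem_inter.2 ⟨hx, hxS⟩) y (mem_inter.2 ⟨hy, hyS⟩)

theorem crosscut_sdiff_card {H : Finset (Finset α)} {S : Finset α} (hS : IsCrossCut H S)
    {B : Finset α} (hB : B ∈ H) : (B \ S).card = B.card - 1 := by
  have := card_sdiff_add_card_inter B S
  rw [hS B hB] at this
  omega

theorem treeOrd_sdiff {m : ℕ} {E : ℕ → Finset α} (hT : TreeOrd m E) (S : Finset α) :
    TreeOrd m (fun i => E i \ S) := by
  intro i hi him
  obtain ⟨j, hj, hpar⟩ := hT i hi him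
  refine ⟨j, hj, fun l hl x hx => ?_⟩
  simp only [mem_inter, mem_sdiff] at hx ⊢
  exact ⟨hpar l hl (mem_inter.2 ⟨hx.1.1, hx.2.1⟩), hx.1.2⟩

namespace TreeData

variable {r t m : ℕ} {E : ℕ → Finset α} {H : Finset (Finset α)} {S A : Finset α} {w : α}
  {i₀ j₀ : ℕ}

theorem mem (h : TreeData r t m E H S A w i₀ j₀) {i : ℕ} (hi : i < m) : E i ∈ H := by
  rw [h.H_eq]; exact mem_image_of_mem _ (mem_range.2 hi)

theorem exists_index (h : TreeData r t m E H S A w i₀ j₀) {B : Finset α} (hB : B ∈ H) :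
    ∃ i < m, E i = B := by
  rw [h.H_eq] at hB
  obtain ⟨i, hi, rfl⟩ := mem_image.1 hB
  exact ⟨i, mem_range.1 hi, rfl⟩

theorem card_of_mem (h : TreeData r t m E H S A w i₀ j₀) {B : Finset α} (hB : B ∈ H) :
    B.card = r := by
  obtain ⟨i, hi, rfl⟩ := h.exists_index hB
  exact h.card i hi

theorem mem_sup (h : TreeData r t m E H S A w i₀ j₀) {x : α} :
    x ∈ H.sup id ↔ x ∈ (range m).biUnion E := by
  rw [Finset.mem_sup, h.H_eq]
  simp

theorem sup_card (h : TreeData r t m E H S A w i₀ j₀) : (H.sup id).card ≤ m * r := by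
  have e : H.sup id = (range m).biUnion E := by ext x; exact h.mem_sup
  rw [e]
  simpa using card_biUnion_le_card_mul (range m) E r
    (fun l hl => (h.card l (mem_range.1 hl)).le)

theorem A_disj (h : TreeData r t m E H S A w i₀ j₀) {x : α} (hx : x ∈ A) : x ∉ S := by
  intro hxS
  have := crosscut_unique h.cross (h.mem h.i_lt) (h.A_i hx) hxS h.w_i h.w_mem
  exact h.w_j (this ▸ h.A_j hx)

/-- A nonempty full family of `r`-sets contains `H`. -/
theorem contains_of_full (h : TreeData r t m E H S A w i₀ j₀) {K : ℕ} {G : Finset (Finset β)}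
    (hG : Full K G) (hne : G.Nonempty) (hr : ∀ e ∈ G, e.card = r) (hK : m * r ≤ K) :
    ContainsCopy G H := by
  obtain ⟨D, hD⟩ := hne
  have : Nonempty β ∨ IsEmpty β := (isEmpty_or_nonempty β).symm
  rcases this with hb | hb
  · obtain ⟨f, f1, -, f3, -⟩ := tree_embed_at hG h.ord h.card i₀ h.i_lt ∅ (by simp)
      (fun _ => hb.some) (by simp) D hD (hr D hD) (by simp) ∅ (by simpa using hK)
    refine ⟨f, ?_, ?_⟩
    · intro x hx y hy hxy
      exact f1 (h.mem_sup.1 hx) (h.mem_sup.1 hy) hxy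
    · intro B hB
      obtain ⟨i, hi, rfl⟩ := h.exists_index hB
      exact f3 i hi
  · exfalso
    have h1 := hr D hD
    have h2 := h.card i₀ h.i_lt
    have h3 : D = ∅ := by ext x; exact (hb.false x).elim
    rw [h3, card_empty] at h1
    rw [← h1] at h2
    have := h.w_i
    rw [card_eq_zero.1 h2] at this
    simp at this

/-- A full family `G` all of whose members can be extended by every vertex of a common set of
size `σ(H)` to an edge of `F` produces a copy of `H` in `F`. -/
theorem contains_of_common (h : TreeData r t m E H S A w i₀ j₀) {K : ℕ}
    {F G : Finset (Finset β)} (hG : Full K G) (hne : G.Nonempty)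
    (hr : ∀ e ∈ G, e.card = r - 1) (L : Finset β) (hL : L.card = t + 1)
    (hGF : ∀ D ∈ G, ∀ v ∈ L, v ∉ D ∧ insert v D ∈ F) (hK : t + 1 + m * r ≤ K) :
    ContainsCopy F H := by
  obtain ⟨D, hD⟩ := hne
  obtain ⟨v₀, hv₀⟩ : L.Nonempty := card_pos.1 (by omega)
  have hm : m * (r - 1) ≤ m * r := Nat.mul_le_mul_left _ (Nat.sub_le _ _)
  obtain ⟨f, f1, -, f3, f4⟩ := tree_embed_at (α := α) hG (treeOrd_sdiff h.ord S)
    (k := r - 1)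
    (fun i hi => by rw [crosscut_sdiff_card h.cross (h.mem hi), h.card i hi]) i₀ h.i_lt ∅
    (by simp) (fun _ => v₀) (by simp) D hD (hr D hD) (by simp) L (by omega)
  obtain ⟨s, -, s2, s3⟩ := ext_bij S L (by rw [h.S_card, hL]) ∅ (by simp) (fun _ => v₀)
    (by simp) (by simp)
  have hV : ∀ x ∈ H.sup id, x ∉ S → x ∈ (range m).biUnion (fun i => E i \ S) := by
    intro x hx hxS
    obtain ⟨i, hi, hxi⟩ := mem_biUnion.1 (h.mem_sup.1 hx)
    exact mem_biUnion.2 ⟨i, hi, mem_sdiff.2 ⟨hxi, hxS⟩⟩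
  refine ⟨fun x => if x ∈ S then s x else f x, ?_, ?_⟩
  · intro x hx y hy hxy
    by_cases hxS : x ∈ S <;> by_cases hyS : y ∈ S <;> simp only [hxS, hyS, if_true, if_false] at hxy
    · exact s2 hxS hyS hxy
    · exact absurd (hxy ▸ s3 ▸ mem_image_of_mem s hxS) (f4 y (hV y hy hyS) (by simp))
    · exact absurd (hxy ▸ s3 ▸ mem_image_of_mem s hyS) (f4 x (hV x hx hxS) (by simp))
    · exact f1 (hV x hx hxS) (hV y hy hyS) hxy
  · intro B hB
    obtain ⟨i, hi, rfl⟩ := h.exists_index hB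
    obtain ⟨u, hu⟩ := card_eq_one.1 (h.cross _ hB)
    have huB : u ∈ E i ∩ S := by rw [hu]; simp
    have e : (E i).image (fun x => if x ∈ S then s x else f x)
        = insert (s u) ((E i \ S).image f) := by
      conv_lhs => rw [← sdiff_union_inter (E i) S]
      rw [image_union, hu, image_singleton, if_pos (mem_inter.1 huB).2, union_comm,
        ← insert_eq]
      congr 1
      exact image_congr (fun x hx => if_neg (mem_sdiff.1 (mem_coe.1 hx)).2)
    rw [e]
    exact (hGF _ (f3 i hi) _ (s3 ▸ mem_image_of_mem s (mem_inter.1 huB).2)).2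

/-- Gluing: a copy of the star at `w`, whose attachment set lies in a member of a full family
`G` of common links of `L`, extends to a copy of `H`. -/
theorem glue (h : TreeData r t m E H S A w i₀ j₀) {K : ℕ}
    {F G : Finset (Finset β)} (hG : Full K G) (hr : ∀ e ∈ G, e.card = r - 1)
    (L : Finset β) (hL : L.card = t) (hGF : ∀ D ∈ G, ∀ v ∈ L, v ∉ D ∧ insert v D ∈ F)
    (hK : m * r + t + m * r ≤ K) (f₂ : α → β) (W : Finset α)
    (hW : ∀ x, x ∈ W ↔ ∃ B ∈ H, w ∈ B ∧ x ∈ B)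
    (hf₂ : Set.InjOn f₂ W) (hf₂F : ∀ B ∈ H, w ∈ B → B.image f₂ ∈ F)
    (hf₂L : ∀ x ∈ W, f₂ x ∉ L) (D₀ : Finset β) (hD₀ : D₀ ∈ G) (hA : A.image f₂ ⊆ D₀) :
    ContainsCopy F H := by
  have hAW : A ⊆ W := fun x hx => (hW x).2 ⟨_, h.mem h.i_lt, h.w_i, h.A_i hx⟩
  have hWsup : W ⊆ H.sup id := by
    intro x hx
    obtain ⟨B, hB, -, hxB⟩ := (hW x).1 hx
    exact Finset.mem_sup.2 ⟨B, hB, hxB⟩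
  have hWcard : (W.image f₂ ∪ L).card ≤ m * r + t := by
    refine (card_union_le _ _).trans ?_
    rw [hL]
    exact Nat.add_le_add_right (card_image_le.trans ((card_le_card hWsup).trans h.sup_card)) _
  have hm : m * (r - 1) ≤ m * r := Nat.mul_le_mul_left _ (Nat.sub_le _ _)
  obtain ⟨f, f1, f2, f3, f4⟩ := tree_embed_at (α := α) hG (treeOrd_sdiff h.ord S)
    (k := r - 1)
    (fun i hi => by rw [crosscut_sdiff_card h.cross (h.mem hi), h.card i hi]) j₀ h.j_lt A
    (fun x hx => mem_sdiff.2 ⟨h.A_j hx, h.A_disj hx⟩) f₂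
    (hf₂.mono (by exact_mod_cast hAW)) D₀ hD₀ (hr D₀ hD₀) hA (W.image f₂ ∪ L) (by omega)
  obtain ⟨s, -, s2, s3⟩ := ext_bij (S.erase w) L
    (by rw [card_erase_of_mem h.w_mem, h.S_card, hL]; rfl) ∅ (by simp) f₂
    (by simp) (by simp)
  have hV : ∀ x ∈ H.sup id, x ∉ S → x ∈ (range m).biUnion (fun i => E i \ S) := by
    intro x hx hxS
    obtain ⟨i, hi, hxi⟩ := mem_biUnion.1 (h.mem_sup.1 hx)
    exact mem_biUnion.2 ⟨i, hi, mem_sdiff.2 ⟨hxi, hxS⟩⟩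
  have hSW : ∀ x ∈ W, x ∈ S → x = w := by
    intro x hx hxS
    obtain ⟨B, hB, hwB, hxB⟩ := (hW x).1 hx
    exact crosscut_unique h.cross hB hxB hxS hwB h.w_mem
  have hwW : w ∈ W := (hW w).2 ⟨_, h.mem h.i_lt, h.w_i, h.w_i⟩
  have hS' : ∀ x, x ∉ W → x ∈ S → x ∈ S.erase w := by
    intro x hx hxS
    exact mem_erase.2 ⟨fun e => hx (e ▸ hwW), hxS⟩
  have fnotin : ∀ x ∈ H.sup id, x ∉ S → x ∉ W → f x ∉ W.image f₂ ∪ L := by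
    intro x hx hxS hxW
    exact f4 x (hV x hx hxS) (fun hxA => hxW (hAW hxA))
  have snotin : ∀ x ∈ S.erase w, s x ∈ L := fun x hx => s3 ▸ mem_image_of_mem s hx
  let f' : α → β := fun x => if x ∈ W then f₂ x else if x ∈ S then s x else f x
  have e1 : ∀ x ∈ W, f' x = f₂ x := fun x hx => if_pos hx
  have e2 : ∀ x, x ∉ W → x ∈ S → f' x = s x := fun x hx hxS => by
    simp only [f', if_neg hx, if_pos hxS]
  have e3 : ∀ x, x ∉ W → x ∉ S → f' x = f x := fun x hx hxS => by
    simp only [f', if_neg hx, if_neg hxS]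
  -- the three parts of the combined map have disjoint images
  have cross1 : ∀ x ∈ W, ∀ y ∈ H.sup id, y ∉ W → f' x ≠ f' y := by
    intro x hx y hy hyW hxy
    rw [e1 x hx] at hxy
    by_cases hyS : y ∈ S
    · rw [e2 y hyW hyS] at hxy
      exact hf₂L x hx (hxy ▸ snotin y (hS' y hyW hyS))
    · rw [e3 y hyW hyS] at hxy
      exact fnotin y hy hyS hyW (hxy ▸ mem_union_left _ (mem_image_of_mem f₂ hx))
  have cross2 : ∀ x, x ∉ W → x ∈ S → ∀ y ∈ H.sup id, y ∉ W → y ∉ S → f' x ≠ f' y := by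
    intro x hx hxS y hy hyW hyS hxy
    rw [e2 x hx hxS, e3 y hyW hyS] at hxy
    exact fnotin y hy hyS hyW (hxy ▸ mem_union_right _ (snotin x (hS' x hx hxS)))
  refine ⟨f', ?_, ?_⟩
  · intro x hx y hy hxy
    by_cases hxW : x ∈ W <;> by_cases hyW : y ∈ W
    · rw [e1 x hxW, e1 y hyW] at hxy; exact hf₂ hxW hyW hxy
    · exact absurd hxy (cross1 x hxW y hy hyW)
    · exact absurd hxy.symm (cross1 y hyW x hx hxW)
    · by_cases hxS : x ∈ S <;> by_cases hyS : y ∈ S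
      · rw [e2 x hxW hxS, e2 y hyW hyS] at hxy
        exact s2 (hS' x hxW hxS) (hS' y hyW hyS) hxy
      · exact absurd hxy (cross2 x hxW hxS y hy hyW hyS)
      · exact absurd hxy.symm (cross2 y hyW hyS x hx hxW hxS)
      · rw [e3 x hxW hxS, e3 y hyW hyS] at hxy
        exact f1 (hV x hx hxS) (hV y hy hyS) hxy
  · intro B hB
    by_cases hwB : w ∈ B
    · rw [image_congr (fun x hx => e1 x ((hW x).2 ⟨B, hB, hwB, hx⟩))]
      exact hf₂F B hB hwB
    obtain ⟨i, hi, rfl⟩ := h.exists_index hB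
    obtain ⟨u, hu⟩ := card_eq_one.1 (h.cross _ hB)
    have huB : u ∈ E i ∩ S := by rw [hu]; simp
    have huW : u ∉ W := fun hh => hwB (hSW u hh (mem_inter.1 huB).2 ▸ (mem_inter.1 huB).1)
    have e4 : ∀ x ∈ E i \ S, f' x = f x := by
      intro x hx
      by_cases hxW : x ∈ W
      · obtain ⟨C, hC, hwC, hxC⟩ := (hW x).1 hxW
        have hxA : x ∈ A := h.attach C hC _ hB hwC hwB (mem_inter.2 ⟨hxC, (mem_sdiff.1 hx).1⟩)
        rw [e1 x hxW, f2 x hxA]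
      · exact e3 x hxW (mem_sdiff.1 hx).2
    have e : (E i).image f' = insert (s u) ((E i \ S).image f) := by
      conv_lhs => rw [← sdiff_union_inter (E i) S]
      rw [image_union, hu, image_singleton, e2 u huW (mem_inter.1 huB).2, union_comm,
        ← insert_eq]
      congr 1
      exact image_congr (fun x hx => e4 x hx)
    rw [e]
    exact (hGF _ (f3 i hi) _ (snotin u (hS' u huW (mem_inter.1 huB).2))).2

/-- Two full families of common links, belonging to different `t`-sets `L₁` and `L₂`, cannot
have members sharing two vertices: otherwise the star at `w` is embedded using a vertex of
`L₂ \ L₁` and the rest of `H` using `L₁`. -/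
theorem contains_of_mixed (h : TreeData r t m E H S A w i₀ j₀) {K : ℕ}
    {F G₁ G₂ : Finset (Finset β)} (hG₁ : Full K G₁) (hr₁ : ∀ e ∈ G₁, e.card = r - 1)
    (hG₂ : Full K G₂) (hr₂ : ∀ e ∈ G₂, e.card = r - 1)
    (L₁ L₂ : Finset β) (hL₁ : L₁.card = t) (hL₂ : L₂.card = t) (hne : L₁ ≠ L₂)
    (hGF₁ : ∀ D ∈ G₁, ∀ v ∈ L₁, v ∉ D ∧ insert v D ∈ F)
    (hGF₂ : ∀ D ∈ G₂, ∀ v ∈ L₂, v ∉ D ∧ insert v D ∈ F)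
    (D₁ D₂ : Finset β) (hD₁ : D₁ ∈ G₁) (hD₂ : D₂ ∈ G₂) (hD : 2 ≤ (D₁ ∩ D₂).card)
    (hK : m * r + 2 * t + m * r ≤ K) : ContainsCopy F H := by
  obtain ⟨v, hv⟩ : (L₂ \ L₁).Nonempty := by
    rw [nonempty_iff_ne_empty]
    intro he
    exact hne (eq_of_subset_of_card_le (sdiff_eq_empty_iff_subset.1 he) (by omega)).symm
  obtain ⟨hv2, hv1⟩ := mem_sdiff.1 hv
  obtain ⟨Q, hQ, hQc⟩ := exists_subset_card_eq (h.A_card.trans hD)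
  obtain ⟨g, -, g2, g3⟩ := ext_bij A Q hQc.symm ∅ (by simp) (fun _ => v) (by simp) (by simp)
  have hm : m * (r - 1) ≤ m * r := Nat.mul_le_mul_left _ (Nat.sub_le _ _)
  have hu : (L₁ ∪ L₂).card ≤ 2 * t := (card_union_le _ _).trans (by omega)
  obtain ⟨f, f1, f2, f3, f4⟩ := tree_embed_at (α := α) hG₂ (treeOrd_sdiff h.ord S)
    (k := r - 1)
    (fun i hi => by rw [crosscut_sdiff_card h.cross (h.mem hi), h.card i hi]) i₀ h.i_lt A
    (fun x hx => mem_sdiff.2 ⟨h.A_i hx, h.A_disj hx⟩) g g2 D₂ hD₂ (hr₂ D₂ hD₂)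
    (by rw [g3]; exact hQ.trans inter_subset_right) (L₁ ∪ L₂) (by omega)
  have hVW : ∀ B ∈ H, w ∈ B → ∀ x ∈ B, x ≠ w → x ∈ (range m).biUnion (fun i => E i \ S) := by
    intro B hB hwB x hx hxw
    obtain ⟨i, hi, rfl⟩ := h.exists_index hB
    refine mem_biUnion.2 ⟨i, mem_range.2 hi, mem_sdiff.2 ⟨hx, fun hxS => hxw ?_⟩⟩
    exact crosscut_unique h.cross hB hx hxS hwB h.w_mem
  have hgA : ∀ x ∈ A, f x ∈ D₁ ∩ D₂ := by
    intro x hx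
    rw [f2 x hx]
    exact hQ (g3 ▸ mem_image_of_mem g hx)
  have hfL : ∀ B ∈ H, w ∈ B → ∀ x ∈ B, x ≠ w → f x ∉ L₁ ∪ L₂ := by
    intro B hB hwB x hx hxw
    by_cases hxA : x ∈ A
    · intro hmem
      have hx' := mem_inter.1 (hgA x hxA)
      rcases mem_union.1 hmem with hm | hm
      · exact (hGF₁ D₁ hD₁ _ hm).1 hx'.1
      · exact (hGF₂ D₂ hD₂ _ hm).1 hx'.2
    · exact f4 x (hVW B hB hwB x hx hxw) hxA
  have hwA : w ∉ A := fun hw => h.A_disj hw h.w_mem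
  let W := (H.filter (fun B => w ∈ B)).biUnion id
  have hW : ∀ x, x ∈ W ↔ ∃ B ∈ H, w ∈ B ∧ x ∈ B := by
    intro x
    simp [W, and_assoc]
  let f₂ : α → β := fun x => if x = w then v else f x
  have e1 : f₂ w = v := if_pos rfl
  have e2 : ∀ x, x ≠ w → f₂ x = f x := fun x hx => if_neg hx
  refine h.glue hG₁ hr₁ L₁ hL₁ hGF₁ (by omega) f₂ W hW ?_ ?_ ?_ D₁ hD₁ ?_
  · intro x hx y hy hxy
    obtain ⟨B, hB, hwB, hxB⟩ := (hW x).1 hx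
    obtain ⟨C, hC, hwC, hyC⟩ := (hW y).1 hy
    by_cases hxw : x = w <;> by_cases hyw : y = w
    · rw [hxw, hyw]
    · rw [hxw, e1, e2 y hyw] at hxy
      exact absurd (hxy ▸ mem_union_right _ hv2) (hfL C hC hwC y hyC hyw)
    · rw [hyw, e1, e2 x hxw] at hxy
      exact absurd (hxy ▸ mem_union_right _ hv2) (hfL B hB hwB x hxB hxw)
    · rw [e2 x hxw, e2 y hyw] at hxy
      exact f1 (hVW B hB hwB x hxB hxw) (hVW C hC hwC y hyC hyw) hxy
  · intro B hB hwB
    obtain ⟨i, hi, rfl⟩ := h.exists_index hB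
    have e : (E i).image f₂ = insert v ((E i \ S).image f) := by
      have : E i ∩ S = {w} := by
        ext x
        rw [mem_inter, mem_singleton]
        constructor
        · rintro ⟨hx, hxS⟩
          exact crosscut_unique h.cross hB hx hxS hwB h.w_mem
        · rintro rfl; exact ⟨hwB, h.w_mem⟩
      conv_lhs => rw [← sdiff_union_inter (E i) S]
      rw [image_union, this, image_singleton, e1, union_comm, ← insert_eq]
      congr 1
      refine image_congr (fun x hx => e2 x ?_)
      rintro rfl
      exact (mem_sdiff.1 (mem_coe.1 hx)).2 h.w_mem
    rw [e]
    exact (hGF₂ _ (f3 i hi) _ hv2).2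
  · intro x hx
    obtain ⟨B, hB, hwB, hxB⟩ := (hW x).1 hx
    by_cases hxw : x = w
    · rw [hxw, e1]; exact hv1
    · rw [e2 x hxw]; exact fun hmem => hfL B hB hwB x hxB hxw (mem_union_left _ hmem)
  · intro y hy
    obtain ⟨x, hx, rfl⟩ := mem_image.1 hy
    rw [e2 x (fun e => hwA (e ▸ hx))]
    exact (mem_inter.1 (hgA x hx)).1

end TreeData

end Structure

/-! ### Counting with shadows and degrees -/

section Counting

variable {n : ℕ}

theorem card_powersetCard_le_pow (k : ℕ) :
    (powersetCard k (univ : Finset (Fin n))).card ≤ n ^ k := by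
  rw [card_powersetCard, card_univ, Fintype.card_fin]
  exact Nat.choose_le_pow n k

theorem shadow_card_le_pow {G : Finset (Finset (Fin n))} {k : ℕ} (hG : ∀ e ∈ G, e.card = k + 1) :
    G.shadow.card ≤ n ^ k := by
  refine (card_le_card ?_).trans (card_powersetCard_le_pow k)
  intro e he
  obtain ⟨s, hs, a, ha, rfl⟩ := mem_shadow_iff.1 he
  exact mem_powersetCard.2 ⟨subset_univ _, by rw [card_erase_of_mem ha, hG s hs]; rfl⟩

/-- A family without nonempty full subfamilies is at most `K` times as large as its shadow. -/
theorem card_le_of_no_full [DecidableEq β] {K : ℕ} {G : Finset (Finset β)}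
    (hno : ∀ G' ⊆ G, Full K G' → G' = ∅) : G.card ≤ K * G.shadow.card := by
  obtain ⟨G', h1, h2, h3⟩ := full_part K _ G rfl
  have := hno G' h1 h2
  subst this
  simpa using h3

/-- The number of members of the family `Γ` containing the vertex `x`. -/
def pdeg (Γ : Finset (Finset (Fin n))) (x : Fin n) : ℕ := (Γ.filter (fun P => x ∈ P)).card

theorem sum_pdeg {Γ : Finset (Finset (Fin n))} (h2 : ∀ P ∈ Γ, P.card = 2) :
    ∑ x, pdeg Γ x = 2 * Γ.card := by
  unfold pdeg
  have : ∀ x : Fin n, (Γ.filter (fun P => x ∈ P)).card = ∑ P ∈ Γ, if x ∈ P then 1 else 0 := by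
    intro x; rw [card_filter]
  simp_rw [this]
  rw [sum_comm]
  have h : ∀ P ∈ Γ, (∑ x : Fin n, if x ∈ P then 1 else 0) = 2 := by
    intro P hP
    rw [← h2 P hP]; simp
  rw [sum_congr rfl h]
  simp [mul_comm]

/-- There are few vertices lying in at least `n / q` pairs of `Γ`. -/
theorem heavy_card {Γ : Finset (Finset (Fin n))} (h2 : ∀ P ∈ Γ, P.card = 2) (q : ℕ) :
    (univ.filter (fun x => n ≤ q * pdeg Γ x)).card * n ≤ 2 * q * Γ.card := by
  calc (univ.filter (fun x => n ≤ q * pdeg Γ x)).card * n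
      = ∑ x ∈ univ.filter (fun x => n ≤ q * pdeg Γ x), n := by simp
    _ ≤ ∑ x ∈ univ.filter (fun x => n ≤ q * pdeg Γ x), q * pdeg Γ x :=
        sum_le_sum (fun x hx => (mem_filter.1 hx).2)
    _ ≤ ∑ x, q * pdeg Γ x := sum_le_sum_of_subset (filter_subset _ _)
    _ = 2 * q * Γ.card := by rw [← mul_sum, sum_pdeg h2]; ring

/-- Sets of size `k + 1` spanned by a star of `Γ`-pairs around a vertex of small degree are
rare. -/
theorem light_count {Γ : Finset (Finset (Fin n))} (h2 : ∀ P ∈ Γ, P.card = 2) (q k : ℕ)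
    (hk : 2 ≤ k) (T : Finset (Finset (Fin n)))
    (hT : ∀ e ∈ T, e.card = k + 1 ∧ ∃ x ∈ e, q * pdeg Γ x < n ∧
      ∀ y ∈ e, y ≠ x → ({x, y} : Finset (Fin n)) ∈ Γ) :
    q * T.card ≤ 2 * Γ.card * n ^ (k - 1) := by
  rcases Nat.eq_zero_or_pos q with rfl | hq
  · simp
  set N : Fin n → Finset (Fin n) := fun x =>
    univ.filter (fun y => y ≠ x ∧ ({x, y} : Finset (Fin n)) ∈ Γ) with hN
  have hNd : ∀ x, (N x).card ≤ pdeg Γ x := by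
    intro x
    refine card_le_card_of_injOn (fun y => {x, y}) ?_ ?_
    · intro y hy
      have := (mem_filter.1 hy).2
      exact mem_filter.2 ⟨this.2, by simp⟩
    · intro y hy z hz hyz
      have hy' := (mem_filter.1 hy).2
      have hz' := (mem_filter.1 hz).2
      have : y ∈ ({x, z} : Finset (Fin n)) := by
        have h : y ∈ ({x, y} : Finset (Fin n)) := by simp
        simp only at hyz
        rwa [hyz] at h
      rcases mem_insert.1 this with h | h
      · exact absurd h hy'.1
      · exact mem_singleton.1 h
  set Lt := univ.filter (fun x => q * pdeg Γ x < n) with hLt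
  have hsub : T ⊆ Lt.biUnion (fun x => (powersetCard k (N x)).image (insert x)) := by
    intro e he
    obtain ⟨hc, x, hx, hxl, hy⟩ := hT e he
    refine mem_biUnion.2 ⟨x, mem_filter.2 ⟨mem_univ _, hxl⟩, mem_image.2 ⟨e.erase x, ?_, ?_⟩⟩
    · refine mem_powersetCard.2 ⟨fun y hye => ?_, by rw [card_erase_of_mem hx, hc]; rfl⟩
      obtain ⟨h1, h2⟩ := mem_erase.1 hye
      exact mem_filter.2 ⟨mem_univ _, h1, hy y h2 h1⟩
    · exact insert_erase hx
  have hT1 : T.card ≤ ∑ x ∈ Lt, (pdeg Γ x) ^ k := by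
    refine (card_le_card hsub).trans (card_biUnion_le.trans (sum_le_sum fun x _ => ?_))
    refine card_image_le.trans ?_
    rw [card_powersetCard]
    exact (Nat.choose_le_pow _ _).trans (Nat.pow_le_pow_left (hNd x) _)
  obtain ⟨l, rfl⟩ : ∃ l, k = l + 2 := ⟨k - 2, by omega⟩
  calc q * T.card ≤ ∑ x ∈ Lt, q * (pdeg Γ x) ^ (l + 2) := by
        rw [← mul_sum]; exact Nat.mul_le_mul_left _ hT1
    _ ≤ ∑ x ∈ Lt, pdeg Γ x * n ^ (l + 1) := by
        refine sum_le_sum fun x hx => ?_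
        have hx' := (mem_filter.1 hx).2
        have hdn : pdeg Γ x ≤ n := by nlinarith
        calc q * (pdeg Γ x) ^ (l + 2) = (q * pdeg Γ x) * pdeg Γ x * (pdeg Γ x) ^ l := by ring
          _ ≤ n * pdeg Γ x * n ^ l :=
            Nat.mul_le_mul (Nat.mul_le_mul_right _ hx'.le) (Nat.pow_le_pow_left hdn _)
          _ = _ := by ring
    _ ≤ ∑ x, pdeg Γ x * n ^ (l + 1) := sum_le_sum_of_subset (filter_subset _ _)
    _ = _ := by rw [← sum_mul, sum_pdeg h2]; rfl

end Counting

/-! ### Fat pairs and heavy vertices -/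

section FatPairs

/-- A set `P` is `s`-fat in `F` if it extends to an edge of `F` whose remaining vertices avoid
any prescribed set of at most `s` vertices. -/
def Fat [DecidableEq β] (s : ℕ) (F : Finset (Finset β)) (P : Finset β) : Prop :=
  ∀ X : Finset β, X.card ≤ s → ∃ e ∈ F, P ⊆ e ∧ Disjoint (e \ P) X

/-- A full family of fat pairs hosts the tree of cores of `H`; fatness then completes each core
to an edge with new vertices. -/
theorem TreeData.contains_of_fat [DecidableEq α] [DecidableEq β] {r t m : ℕ} {E : ℕ → Finset α}
    {H : Finset (Finset α)} {S A : Finset α} {w : α} {i₀ j₀ : ℕ}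
    (h : TreeData r t m E H S A w i₀ j₀) {K s : ℕ} {F Γ : Finset (Finset β)}
    (hfull : Full K Γ) (hne : Γ.Nonempty) (h2 : ∀ P ∈ Γ, P.card = 2)
    (hfat : ∀ P ∈ Γ, Fat s F P) (hF : ∀ e ∈ F, e.card = r) (hs : m * r ≤ s) (hK : m * 2 ≤ K) :
    ContainsCopy F H := by
  obtain ⟨Cr, hCr⟩ := h.core
  have hT : TreeOrd m (fun i => Cr (E i)) := by
    intro i hi him
    obtain ⟨j, hj, hpar⟩ := h.ord i hi him
    refine ⟨j, hj, fun l hl x hx => ?_⟩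
    obtain ⟨hx1, hx2⟩ := mem_inter.1 hx
    have hxi := (hCr _ (h.mem him)).1 hx1
    have hxl := (hCr _ (h.mem (hl.trans him))).1 hx2
    have hxj := hpar l hl (mem_inter.2 ⟨hxi, hxl⟩)
    by_cases he : E i = E j
    · show x ∈ Cr (E j)
      rw [← he]; exact hx1
    · exact (hCr _ (h.mem (hj.trans him))).2.2 x hxj _ (h.mem him) he hxi
  obtain ⟨D, hD⟩ := hne
  obtain ⟨b, -⟩ : D.Nonempty := card_pos.1 (by rw [h2 D hD]; omega)
  obtain ⟨f, f1, -, f3, -⟩ := tree_embed_at hfull hT (k := 2)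
    (fun i hi => (hCr _ (h.mem hi)).2.1) i₀ h.i_lt ∅ (by simp) (fun _ => b) (by simp) D hD
    (h2 D hD) (by simp) ∅ (by simpa using hK)
  set V₀ := (range m).biUnion (fun i => Cr (E i)) with hV₀
  have hV₀sup : V₀ ⊆ H.sup id := by
    intro x hx
    obtain ⟨i, hi, hxi⟩ := mem_biUnion.1 hx
    have hi' := h.mem (mem_range.1 hi)
    exact Finset.mem_sup.2 ⟨_, hi', (hCr _ hi').1 hxi⟩
  have main : ∀ T : Finset (Finset α), T ⊆ H → ∃ f' : α → β, (∀ x ∈ V₀, f' x = f x) ∧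
      Set.InjOn f' (V₀ ∪ T.biUnion id : Finset α) ∧ ∀ B ∈ T, B.image f' ∈ F := by
    intro T
    induction T using Finset.induction_on with
    | empty => intro _; exact ⟨f, fun _ _ => rfl, by simpa using f1, by simp⟩
    | insert B T hBT ih =>
      intro hTH
      have hBH : B ∈ H := hTH (mem_insert_self _ _)
      have hTH' : T ⊆ H := (subset_insert _ _).trans hTH
      obtain ⟨f', g1, g2, g3⟩ := ih hTH'
      set V := V₀ ∪ T.biUnion id with hV
      have hVsup : V ⊆ H.sup id := by
        refine union_subset hV₀sup ?_
        intro x hx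
        obtain ⟨C, hC, hxC⟩ := mem_biUnion.1 hx
        exact Finset.mem_sup.2 ⟨C, hTH' hC, hxC⟩
      obtain ⟨i, hi, rfl⟩ := h.exists_index hBH
      have hCV₀ : Cr (E i) ⊆ V₀ := by
        intro x hx; exact mem_biUnion.2 ⟨i, mem_range.2 hi, hx⟩
      have hBV : E i ∩ V = Cr (E i) := by
        apply Subset.antisymm
        · intro x hx
          obtain ⟨hx1, hx2⟩ := mem_inter.1 hx
          rcases mem_union.1 hx2 with hx2 | hx2
          · obtain ⟨l, hl, hxl⟩ := mem_biUnion.1 hx2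
            by_cases he : E l = E i
            · rw [← he]; exact hxl
            · have hl' := h.mem (mem_range.1 hl)
              exact (hCr _ hBH).2.2 x hx1 _ hl' he ((hCr _ hl').1 hxl)
          · obtain ⟨C, hC, hxC⟩ := mem_biUnion.1 hx2
            refine (hCr _ hBH).2.2 x hx1 C (hTH' hC) ?_ hxC
            rintro rfl; exact hBT hC
        · intro x hx
          exact mem_inter.2 ⟨(hCr _ hBH).1 hx, mem_union_left _ (hCV₀ hx)⟩
      have hP : (Cr (E i)).image f' = (Cr (E i)).image f :=
        image_congr (fun x hx => g1 x (hCV₀ hx))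
      obtain ⟨e, he, hPe, hdis⟩ := hfat _ (f3 i hi) (V.image f')
        (card_image_le.trans ((card_le_card hVsup).trans (h.sup_card.trans hs)))
      obtain ⟨f'', k1, k2, k3⟩ := extend_one f' V (E i) e g2 (by rw [h.card i hi, hF e he])
        (by rw [hBV, hP]; exact hPe)
        (by
          intro y hy hyn hyV
          rw [hBV, hP] at hyn
          exact disjoint_left.1 hdis (mem_sdiff.2 ⟨hy, hyn⟩) hyV)
      refine ⟨f'', fun x hx => ?_, ?_, ?_⟩
      · rw [k1 x (mem_union_left _ hx), g1 x hx]
      · have e : V₀ ∪ (insert (E i) T).biUnion id = V ∪ E i := by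
          rw [biUnion_insert, id, hV, union_assoc, union_comm (E i)]
        rw [e]; exact k2
      · intro C hC
        rcases mem_insert.1 hC with rfl | hC
        · rw [k3]; exact he
        · have e : C.image f'' = C.image f' :=
            image_congr (fun x hx => k1 x (mem_union_right _ (mem_biUnion.2 ⟨C, hC, hx⟩)))
          rw [e]; exact g3 C hC
  obtain ⟨f', -, g2, g3⟩ := main H subset_rfl
  refine ⟨f', g2.mono ?_, g3⟩
  intro x hx
  obtain ⟨B, hB, hxB⟩ := Finset.mem_sup.1 (mem_coe.1 hx)
  exact mem_coe.2 (mem_union_right _ (mem_biUnion.2 ⟨B, hB, hxB⟩))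

/-- Used in `nonfat_count`: with `c y` the vertex of an edge determined by `y`, two vertices `c a`
and `c b` can be deleted from the edge and recovered: first `c a` from `a`, then `c b` from `b`. -/
theorem exists_two_values {γ : Type*} [DecidableEq γ] (Z : Finset γ) (hZ : 3 ≤ Z.card)
    (c : γ → γ) (hc : ∀ y ∈ Z, c y ∈ Z ∧ c y ≠ y) :
    ∃ a ∈ Z, ∃ b ∈ Z, c a ≠ c b ∧ a ≠ c b := by
  obtain ⟨a, ha⟩ : Z.Nonempty := card_pos.1 (by omega)
  have hca := hc a ha
  by_cases h : c (c a) = a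
  · obtain ⟨b, hb⟩ : (Z \ {a, c a}).Nonempty := by
      apply card_pos.1
      have := le_card_sdiff ({a, c a} : Finset γ) Z
      have := card_le_two (a := a) (b := c a)
      omega
    obtain ⟨hbZ, hb'⟩ := mem_sdiff.1 hb
    simp only [mem_insert, mem_singleton, not_or] at hb'
    by_cases h1 : c b = a
    · exact ⟨b, hbZ, a, ha, by rw [h1]; exact fun e => hca.2 e.symm, hb'.2⟩
    · by_cases h2 : c b = c a
      · exact ⟨b, hbZ, c a, hca.1, by rw [h2, h]; exact hca.2, by rw [h]; exact hb'.1⟩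
      · exact ⟨a, ha, b, hbZ, fun e => h2 e.symm, fun e => h1 e.symm⟩
  · exact ⟨a, ha, c a, hca.1, fun e => (hc _ hca.1).2 e.symm, fun e => h e.symm⟩

variable {n : ℕ}

/-- Edges with a vertex lying in no fat pair of the edge are rare: two of their vertices can be
recovered, up to boundedly many choices, from the others. -/
theorem nonfat_count {F T : Finset (Finset (Fin n))} {r s : ℕ} (hr : 4 ≤ r)
    (hF : ∀ e ∈ F, e.card = r) (hTF : T ⊆ F)
    (hT : ∀ e ∈ T, ∃ x ∈ e, ∀ y ∈ e, y ≠ x → ¬ Fat s F {x, y}) :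
    T.card ≤ n ^ (r - 2) * (r * r * s * (r * r * s)) := by
  have hcov : ∀ P : Finset (Fin n), ∃ X : Finset (Fin n), X.card ≤ s ∧
      (¬ Fat s F P → ∀ e ∈ F, P ⊆ e → ∃ z ∈ X, z ∈ e ∧ z ∉ P) := by
    intro P
    by_cases hP : Fat s F P
    · exact ⟨∅, by simp, fun h => absurd hP h⟩
    · have hP' := hP
      unfold Fat at hP'
      push Not at hP'
      obtain ⟨X, hX, hX'⟩ := hP'
      refine ⟨X, hX, fun _ e he hPe => ?_⟩
      obtain ⟨z, hz1, hz2⟩ := not_disjoint_iff.1 (hX' e he hPe)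
      exact ⟨z, hz2, (mem_sdiff.1 hz1).1, (mem_sdiff.1 hz1).2⟩
  choose cov hcov1 hcov2 using hcov
  set Cl : Finset (Fin n) → Finset (Fin n) := fun g =>
    (g ×ˢ g).biUnion (fun z => cov {z.1, z.2}) with hCl
  have hClcard : ∀ g : Finset (Fin n), g.card ≤ r → (Cl g).card ≤ r * r * s := by
    intro g hg
    refine (card_biUnion_le_card_mul _ _ s (fun z _ => hcov1 _)).trans ?_
    rw [card_product]
    exact Nat.mul_le_mul_right _ (Nat.mul_le_mul hg hg)
  have hsub : T ⊆ (powersetCard (r - 2) (univ : Finset (Fin n))).biUnion (fun g =>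
      (Cl g).biUnion (fun u => (Cl (insert u g)).image (fun v => insert v (insert u g)))) := by
    intro e he
    obtain ⟨x, hx, hxy⟩ := hT e he
    have heF := hTF he
    have hc : ∀ y, ∃ z, y ∈ e.erase x → z ∈ cov {x, y} ∧ z ∈ e.erase x ∧ z ≠ y := by
      intro y
      by_cases hy : y ∈ e.erase x
      · obtain ⟨h1, h2⟩ := mem_erase.1 hy
        obtain ⟨z, hz1, hz2, hz3⟩ := hcov2 _ (hxy y h2 h1) e heF
          (by intro a ha; rcases mem_insert.1 ha with rfl | ha
              · exact hx
              · rw [mem_singleton.1 ha]; exact h2)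
        simp only [mem_insert, mem_singleton, not_or] at hz3
        exact ⟨z, fun _ => ⟨hz1, mem_erase.2 ⟨hz3.1, hz2⟩, hz3.2⟩⟩
      · exact ⟨x, fun h => absurd h hy⟩
    choose c hc using hc
    obtain ⟨a, ha, b, hb, hab, hab'⟩ := exists_two_values (e.erase x)
      (by rw [card_erase_of_mem hx, hF e heF]; omega) c (fun y hy => (hc y hy).2)
    have ha' := hc a ha
    have hb' := hc b hb
    have hca := mem_erase.1 ha'.2.1
    have hcb := mem_erase.1 hb'.2.1
    set g := (e.erase (c b)).erase (c a) with hg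
    have hmem : ∀ y, y ∈ g ↔ y ≠ c a ∧ y ≠ c b ∧ y ∈ e := by
      intro y; rw [hg, mem_erase, mem_erase]
    have hxg : x ∈ g := (hmem x).2 ⟨hca.1.symm, hcb.1.symm, hx⟩
    have hag : a ∈ g := (hmem a).2 ⟨ha'.2.2.symm, hab', (mem_erase.1 ha).2⟩
    have hins : insert (c a) g = e.erase (c b) :=
      insert_erase (mem_erase.2 ⟨hab, hca.2⟩)
    refine mem_biUnion.2 ⟨g, ?_, mem_biUnion.2 ⟨c a, ?_, mem_image.2 ⟨c b, ?_, ?_⟩⟩⟩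
    · refine mem_powersetCard.2 ⟨subset_univ _, ?_⟩
      rw [hg, card_erase_of_mem (mem_erase.2 ⟨hab, hca.2⟩), card_erase_of_mem hcb.2, hF e heF]
      omega
    · exact mem_biUnion.2 ⟨(x, a), mem_product.2 ⟨hxg, hag⟩, ha'.1⟩
    · refine mem_biUnion.2 ⟨(x, b), mem_product.2 ⟨mem_insert_of_mem hxg, ?_⟩, hb'.1⟩
      rw [hins]
      exact mem_erase.2 ⟨hb'.2.2.symm, (mem_erase.1 hb).2⟩
    · rw [hins, insert_erase hcb.2]
  refine (card_le_card hsub).trans ((card_biUnion_le_card_mul _ _ (r * r * s * (r * r * s))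
    (fun g hg => ?_)).trans (Nat.mul_le_mul_right _ (card_powersetCard_le_pow _)))
  have hgc := (mem_powersetCard.1 hg).2
  refine (card_biUnion_le_card_mul _ _ (r * r * s) (fun u _ => ?_)).trans
    (Nat.mul_le_mul_right _ (hClcard g (by omega)))
  refine card_image_le.trans (hClcard _ ((card_insert_le _ _).trans (by omega)))

/-- Sets containing two disjoint pairs of a sparse graph `Γ` are rare. -/
theorem two_pairs_count {Γ T : Finset (Finset (Fin n))} {r : ℕ} (h2 : ∀ P ∈ Γ, P.card = 2)
    (hT : ∀ e ∈ T, e.card = r ∧ ∃ P ∈ Γ, ∃ Q ∈ Γ, P ⊆ e ∧ Q ⊆ e ∧ Disjoint P Q) :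
    T.card ≤ Γ.card * Γ.card * n ^ (r - 4) := by
  have hsub : T ⊆ ((Γ ×ˢ Γ) ×ˢ powersetCard (r - 4) (univ : Finset (Fin n))).image
      (fun z => z.2 ∪ (z.1.1 ∪ z.1.2)) := by
    intro e he
    obtain ⟨hc, P, hP, Q, hQ, hPe, hQe, hPQ⟩ := hT e he
    refine mem_image.2 ⟨((P, Q), e \ (P ∪ Q)), ?_, ?_⟩
    · refine mem_product.2 ⟨mem_product.2 ⟨hP, hQ⟩, mem_powersetCard.2 ⟨subset_univ _, ?_⟩⟩
      rw [card_sdiff_of_subset (union_subset hPe hQe), card_union_of_disjoint hPQ, h2 P hP,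
        h2 Q hQ, hc]
    · exact sdiff_union_of_subset (union_subset hPe hQe)
  refine (card_le_card hsub).trans (card_image_le.trans ?_)
  rw [card_product, card_product]
  exact Nat.mul_le_mul_left _ (card_powersetCard_le_pow _)

/-- An intersecting family of pairs covering `e` contains a spanning star of `e`. -/
theorem exists_center {γ : Type*} [DecidableEq γ] {Γ : Finset (Finset γ)} {e : Finset γ}
    (he : 3 ≤ e.card) (hcov : ∀ x ∈ e, ∃ y ∈ e, y ≠ x ∧ ({x, y} : Finset γ) ∈ Γ)
    (hno : ∀ P ∈ Γ, ∀ Q ∈ Γ, P ⊆ e → Q ⊆ e → ¬ Disjoint P Q) :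
    ∃ x ∈ e, ∀ y ∈ e, y ≠ x → ({x, y} : Finset γ) ∈ Γ := by
  have meet : ∀ a b c d, a ∈ e → b ∈ e → c ∈ e → d ∈ e → ({a, b} : Finset γ) ∈ Γ →
      ({c, d} : Finset γ) ∈ Γ → a = c ∨ a = d ∨ b = c ∨ b = d := by
    intro a b c d ha hb hc hd h1 h2
    have := hno _ h1 _ h2 (by simp [insert_subset_iff, ha, hb]) (by simp [insert_subset_iff, hc, hd])
    simp only [disjoint_insert_left, disjoint_singleton_left, mem_insert, mem_singleton] at this
    tauto
  obtain ⟨a, ha⟩ : e.Nonempty := card_pos.1 (by omega)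
  obtain ⟨b, hb, hab, habΓ⟩ := hcov a ha
  obtain ⟨c, hc⟩ : (e \ {a, b}).Nonempty := by
    apply card_pos.1
    have := le_card_sdiff ({a, b} : Finset γ) e
    have := card_le_two (a := a) (b := b)
    omega
  obtain ⟨hce, hc'⟩ := mem_sdiff.1 hc
  simp only [mem_insert, mem_singleton, not_or] at hc'
  obtain ⟨x, hx, hxc, hcxΓ⟩ := hcov c hce
  have hxab : x = a ∨ x = b := by
    rcases meet a b c x ha hb hce hx habΓ hcxΓ with h | h | h | h
    · exact absurd h.symm hc'.1
    · exact Or.inl h.symm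
    · exact absurd h.symm hc'.2
    · exact Or.inr h.symm
  refine ⟨x, hx, fun y hy hyx => ?_⟩
  by_cases hyc : y = c
  · rw [hyc, pair_comm]; exact hcxΓ
  by_cases hyab : y = a ∨ y = b
  · have : ({x, y} : Finset γ) = {a, b} := by
      rcases hxab with rfl | rfl <;> rcases hyab with rfl | rfl
      · exact absurd rfl hyx
      · rfl
      · exact pair_comm _ _
      · exact absurd rfl hyx
    rw [this]; exact habΓ
  · push Not at hyab
    obtain ⟨z, hz, hzy, hyz⟩ := hcov y hy
    have h1 := meet a b y z ha hb hy hz habΓ hyz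
    have h2 := meet c x y z hce hx hy hz hcxΓ hyz
    have : z = x := by
      rcases h2 with h | h | h | h
      · exact absurd h.symm hyc
      · subst h
        rcases h1 with h | h | h | h
        · exact absurd h.symm hyab.1
        · exact absurd h.symm hc'.1
        · exact absurd h.symm hyab.2
        · exact absurd h.symm hc'.2
      · exact absurd h.symm hyx
      · exact h.symm
    rw [← this, pair_comm]; exact hyz

/-- In an `H`-free family all but few edges contain one of boundedly many heavy vertices. -/
theorem TreeData.exceptional_bound [DecidableEq α] {r t m : ℕ} {E : ℕ → Finset α}
    {H : Finset (Finset α)} {S A : Finset α} {w : α} {i₀ j₀ : ℕ}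
    (h : TreeData r t m E H S A w i₀ j₀) (hr : 4 ≤ r) :
    ∃ C : ℕ, ∀ q : ℕ, ∃ n₀ : ℕ, ∀ n, n₀ ≤ n → ∀ F : Finset (Finset (Fin n)),
      (∀ e ∈ F, e.card = r) → ¬ ContainsCopy F H →
      ∃ L : Finset (Fin n), L.card ≤ C * q ∧
        q * (F.filter (fun e => Disjoint e L)).card ≤ C * n ^ (r - 1) := by
  set s := m * r with hs
  set K := m * 2 with hK
  set C₁ := r * r * s * (r * r * s) with hC₁
  refine ⟨2 * K + 1, fun q => ⟨q * (C₁ + K * K) + 1, fun n hn F hF hfree => ?_⟩⟩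
  set Γ := (powersetCard 2 (univ : Finset (Fin n))).filter (Fat s F) with hΓ
  have h2 : ∀ P ∈ Γ, P.card = 2 := fun P hP => (mem_powersetCard.1 (mem_filter.1 hP).1).2
  have hΓcard : Γ.card ≤ K * n := by
    refine (card_le_of_no_full (K := K) ?_).trans
      (Nat.mul_le_mul_left _ ((shadow_card_le_pow (k := 1) h2).trans (by simp)))
    intro G' hG' hfull
    by_contra hne
    exact hfree (h.contains_of_fat hfull (nonempty_iff_ne_empty.2 hne)
      (fun P hP => h2 P (hG' hP)) (fun P hP => (mem_filter.1 (hG' hP)).2) hF le_rfl le_rfl)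
  set L := univ.filter (fun x => n ≤ q * pdeg Γ x) with hL
  refine ⟨L, ?_, ?_⟩
  · have h1 := heavy_card h2 q
    have h3 : L.card * n ≤ (2 * K * q) * n := by
      calc L.card * n ≤ 2 * q * Γ.card := h1
        _ ≤ 2 * q * (K * n) := Nat.mul_le_mul_left _ hΓcard
        _ = _ := by ring
    have := Nat.le_of_mul_le_mul_right h3 (by omega)
    nlinarith
  · set X := F.filter (fun e => Disjoint e L) with hX
    set T₁ := F.filter (fun e => ∃ x ∈ e, ∀ y ∈ e, y ≠ x → ¬ Fat s F {x, y}) with hT₁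
    set T₂ := F.filter (fun e => ∃ P ∈ Γ, ∃ Q ∈ Γ, P ⊆ e ∧ Q ⊆ e ∧ Disjoint P Q) with hT₂
    set T₃ := (X \ T₁) \ T₂ with hT₃
    have c1 : T₁.card ≤ n ^ (r - 2) * C₁ :=
      nonfat_count hr hF (filter_subset _ _) (fun e he => (mem_filter.1 he).2)
    have c2 : T₂.card ≤ K * K * n ^ (r - 2) := by
      refine (two_pairs_count (r := r) h2 (fun e he => ⟨hF e (mem_filter.1 he).1,
        (mem_filter.1 he).2⟩)).trans ?_
      calc Γ.card * Γ.card * n ^ (r - 4) ≤ (K * n) * (K * n) * n ^ (r - 4) :=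
            Nat.mul_le_mul_right _ (Nat.mul_le_mul hΓcard hΓcard)
        _ = K * K * n ^ (r - 4 + 2) := by ring
        _ = _ := by congr 2; omega
    have c3 : q * T₃.card ≤ 2 * Γ.card * n ^ (r - 1 - 1) := by
      refine light_count h2 q (r - 1) (by omega) T₃ ?_
      intro e he
      obtain ⟨he', he2⟩ := mem_sdiff.1 he
      obtain ⟨heX, he1⟩ := mem_sdiff.1 he'
      obtain ⟨heF, hdis⟩ := mem_filter.1 heX
      have hec := hF e heF
      refine ⟨by omega, ?_⟩
      have hcov : ∀ x ∈ e, ∃ y ∈ e, y ≠ x ∧ ({x, y} : Finset (Fin n)) ∈ Γ := by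
        intro x hx
        by_contra hno
        push Not at hno
        refine he1 (mem_filter.2 ⟨heF, x, hx, fun y hy hyx hf => hno y hy hyx ?_⟩)
        exact mem_filter.2 ⟨mem_powersetCard.2 ⟨subset_univ _, card_pair hyx.symm⟩, hf⟩
      obtain ⟨x, hx, hxy⟩ := exists_center (by omega) hcov (fun P hP Q hQ hPe hQe hd =>
        he2 (mem_filter.2 ⟨heF, P, hP, Q, hQ, hPe, hQe, hd⟩))
      refine ⟨x, hx, ?_, hxy⟩
      by_contra hge
      exact disjoint_left.1 hdis hx (mem_filter.2 ⟨mem_univ _, not_lt.1 hge⟩)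
    have hXle : X.card ≤ T₁.card + T₂.card + T₃.card := by
      have a1 : X.card ≤ T₁.card + (X \ T₁).card := by
        have := le_card_sdiff T₁ X; omega
      have a2 : (X \ T₁).card ≤ T₂.card + T₃.card := by
        have := le_card_sdiff T₂ (X \ T₁); rw [← hT₃] at this; omega
      omega
    have hpow : n ^ (r - 1) = n * n ^ (r - 2) := by
      rw [← pow_succ']; congr 1; omega
    have hsub : r - 1 - 1 = r - 2 := by omega
    rw [hsub] at c3
    calc q * X.card ≤ q * T₁.card + q * T₂.card + q * T₃.card := by nlinarith
      _ ≤ q * (n ^ (r - 2) * C₁) + q * (K * K * n ^ (r - 2)) + 2 * (K * n) * n ^ (r - 2) := by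
          refine Nat.add_le_add (Nat.add_le_add (Nat.mul_le_mul_left _ c1)
            (Nat.mul_le_mul_left _ c2)) (c3.trans ?_)
          exact Nat.mul_le_mul_right _ (Nat.mul_le_mul_left _ hΓcard)
      _ = (q * (C₁ + K * K) + 2 * K * n) * n ^ (r - 2) := by ring
      _ ≤ (n + 2 * K * n) * n ^ (r - 2) := Nat.mul_le_mul_right _ (by omega)
      _ = (2 * K + 1) * n ^ (r - 1) := by rw [hpow]; ring

end FatPairs

/-! ### Connecting sets by changes of one element -/

section Connect

variable {n k : ℕ}

/-- The hybrid of two tuples agreeing with `y` on the first `i` coordinates and with `x` on the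
remaining ones. -/
def hybrid (i : ℕ) (x y : Fin k → Fin n) : Fin k → Fin n := fun j => if j.1 < i then y j else x j

theorem hybrid_zero (x y : Fin k → Fin n) : hybrid 0 x y = x := by
  funext j; simp [hybrid]

theorem hybrid_last (x y : Fin k → Fin n) : hybrid k x y = y := by
  funext j; simp [hybrid]

theorem hybrid_succ (i : Fin k) (x y : Fin k → Fin n) :
    hybrid (i.1 + 1) x y = Function.update (hybrid i.1 x y) i (y i) := by
  funext j
  by_cases hj : j = i
  · subst hj; simp [hybrid]
  · rw [Function.update_of_ne hj]
    have : j.1 ≠ i.1 := fun e => hj (Fin.ext e)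
    unfold hybrid
    by_cases h : j.1 < i.1
    · rw [if_pos h, if_pos (by omega)]
    · rw [if_neg h, if_neg (by omega)]

theorem hybrid_hybrid (i : ℕ) (x y : Fin k → Fin n) :
    hybrid i (hybrid i x y) (hybrid i y x) = x := by
  funext j
  unfold hybrid
  by_cases h : j.1 < i <;> simp [h]

/-- If a colouring of the good tuples does not change under good one-coordinate changes and few
tuples are bad, then almost all tuples are good and of one colour: for most pairs of tuples all
hybrids are good. -/
theorem connect_tuples {γ : Type*} (good : (Fin k → Fin n) → Prop) (col : (Fin k → Fin n) → γ)
    (hcol : ∀ x i v, good x → good (Function.update x i v) → col (Function.update x i v) = col x)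
    (hlt : (k + 1) * (univ.filter (fun x => ¬ good x)).card < n ^ k) :
    ∃ x₀, good x₀ ∧ (univ.filter (fun y => ¬ good y ∨ col y ≠ col x₀)).card ≤
      (k + 1) * (univ.filter (fun x => ¬ good x)).card := by
  set B := (univ.filter (fun x : Fin k → Fin n => ¬ good x)).card with hB
  have hcardU : (univ : Finset (Fin k → Fin n)).card = n ^ k := by simp
  let bad : (Fin k → Fin n) → (Fin k → Fin n) → Prop := fun x y =>
    ∃ i ∈ range (k + 1), ¬ good (hybrid i x y)
  have hpairs : ((univ : Finset ((Fin k → Fin n) × (Fin k → Fin n))).filter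
      (fun z => bad z.1 z.2)).card ≤ (k + 1) * (B * n ^ k) := by
    have hsub : (univ : Finset ((Fin k → Fin n) × (Fin k → Fin n))).filter
        (fun z => bad z.1 z.2) ⊆ (range (k + 1)).biUnion
          (fun i => univ.filter (fun z => ¬ good (hybrid i z.1 z.2))) := by
      intro z hz
      obtain ⟨i, hi, hg⟩ := (mem_filter.1 hz).2
      exact mem_biUnion.2 ⟨i, hi, mem_filter.2 ⟨mem_univ _, hg⟩⟩
    refine (card_le_card hsub).trans ((card_biUnion_le_card_mul _ _ (B * n ^ k) ?_).trans
      (by rw [card_range]))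
    intro i _
    rw [← hcardU, hB, ← card_product]
    refine card_le_card_of_injOn (fun z => (hybrid i z.1 z.2, hybrid i z.2 z.1)) ?_ ?_
    · intro z hz
      exact mem_product.2 ⟨mem_filter.2 ⟨mem_univ _, (mem_filter.1 hz).2⟩, mem_univ _⟩
    · intro z _ z' _ hzz
      simp only [Prod.mk.injEq] at hzz
      refine Prod.ext ?_ ?_
      · rw [← hybrid_hybrid i z.1 z.2, hzz.1, hzz.2, hybrid_hybrid]
      · rw [← hybrid_hybrid i z.2 z.1, hzz.1, hzz.2, hybrid_hybrid]
  have hsum : ∑ x : Fin k → Fin n, (univ.filter (fun y => bad x y)).card ≤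
      ∑ _x : Fin k → Fin n, (k + 1) * B := by
    rw [sum_const, hcardU, smul_eq_mul]
    refine le_trans (le_of_eq ?_) (hpairs.trans (le_of_eq (by ring)))
    rw [card_filter, Fintype.sum_prod_type]
    refine sum_congr rfl (fun x _ => ?_)
    rw [card_filter]
  have hne : (univ : Finset (Fin k → Fin n)).Nonempty := by
    apply card_pos.1; rw [hcardU]; omega
  obtain ⟨x₀, -, hx₀⟩ := exists_le_of_sum_le hne hsum
  have hgoodpair : ∀ y, ¬ bad x₀ y → good x₀ ∧ good y ∧ col y = col x₀ := by
    intro y hy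
    have hall : ∀ i, i ≤ k → good (hybrid i x₀ y) := by
      intro i hi
      by_contra hno
      exact hy ⟨i, mem_range.2 (by omega), hno⟩
    have hc : ∀ i, i ≤ k → col (hybrid i x₀ y) = col x₀ := by
      intro i
      induction i with
      | zero => intro _; rw [hybrid_zero]
      | succ i ih =>
        intro hi
        have e := hybrid_succ ⟨i, hi⟩ x₀ y
        simp only at e
        rw [← ih (by omega), e]
        refine hcol _ _ _ (hall i (by omega)) ?_
        rw [← e]; exact hall (i + 1) hi
    refine ⟨?_, ?_, ?_⟩
    · have := hall 0 (by omega); rwa [hybrid_zero] at this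
    · have := hall k le_rfl; rwa [hybrid_last] at this
    · have := hc k le_rfl; rwa [hybrid_last] at this
  obtain ⟨y₁, hy₁⟩ : ∃ y, ¬ bad x₀ y := by
    by_contra hno
    push Not at hno
    rw [filter_true_of_mem (fun y _ => hno y), hcardU] at hx₀
    omega
  refine ⟨x₀, (hgoodpair y₁ hy₁).1, (card_le_card ?_).trans hx₀⟩
  intro y hy
  refine mem_filter.2 ⟨mem_univ _, ?_⟩
  by_contra hno
  have := hgoodpair y hno
  rcases (mem_filter.1 hy).2 with h | h
  · exact h this.2.1
  · exact h this.2.2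

theorem card_not_injective :
    (univ.filter (fun x : Fin k → Fin n => ¬ Function.Injective x)).card ≤
      k * k * n ^ (k - 1) := by
  have hsub : univ.filter (fun x : Fin k → Fin n => ¬ Function.Injective x) ⊆
      (univ : Finset (Fin k × Fin k)).biUnion
        (fun z => univ.filter (fun x => z.1 ≠ z.2 ∧ x z.1 = x z.2)) := by
    intro x hx
    have := (mem_filter.1 hx).2
    unfold Function.Injective at this
    push Not at this
    obtain ⟨a, b, hab, hne⟩ := this
    exact mem_biUnion.2 ⟨(a, b), mem_univ _, mem_filter.2 ⟨mem_univ _, hne, hab⟩⟩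
  refine (card_le_card hsub).trans ((card_biUnion_le_card_mul _ _ (n ^ (k - 1)) ?_).trans
    (by simp))
  rintro ⟨a, b⟩ -
  have hc : (univ : Finset ({l : Fin k // l ≠ a} → Fin n)).card = n ^ (k - 1) := by
    simp
  rw [← hc]
  refine card_le_card_of_injOn (fun x l => x l.1) (fun _ _ => mem_univ _) ?_
  intro x hx y hy hxy
  have hx' := (mem_filter.1 (mem_coe.1 hx)).2
  have hy' := (mem_filter.1 (mem_coe.1 hy)).2
  have key : ∀ l, l ≠ a → x l = y l := fun l hl => congrFun hxy ⟨l, hl⟩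
  funext l
  by_cases hl : l = a
  · rw [hl]
    have h1 := hx'.2
    have h2 := hy'.2
    simp only at h1 h2
    rw [h1, h2]
    exact key b (Ne.symm hx'.1)
  · exact key l hl

/-- Version of `connect_tuples` for `k`-element sets: two sets are adjacent when they differ in
one element. -/
theorem connect_sets {γ : Type*} (col : Finset (Fin n) → γ) (bad : Finset (Finset (Fin n)))
    (hcol : ∀ D D' : Finset (Fin n), D.card = k → D'.card = k → D ∉ bad → D' ∉ bad →
      k ≤ (D ∩ D').card + 1 → col D' = col D)
    (hlt : (k + 1) * (k * k * n ^ (k - 1) + k ^ k * bad.card) < n ^ k) :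
    ∃ D₀ : Finset (Fin n), D₀.card = k ∧ D₀ ∉ bad ∧
      ((powersetCard k univ).filter (fun D => D ∈ bad ∨ col D ≠ col D₀)).card ≤
        (k + 1) * (k * k * n ^ (k - 1) + k ^ k * bad.card) := by
  obtain ⟨good, hgood⟩ : ∃ good : (Fin k → Fin n) → Prop,
      ∀ x, good x ↔ Function.Injective x ∧ univ.image x ∉ bad := ⟨_, fun _ => Iff.rfl⟩
  have hB : (univ.filter (fun x => ¬ good x)).card ≤ k * k * n ^ (k - 1) + k ^ k * bad.card := by
    have hsub : univ.filter (fun x => ¬ good x) ⊆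
        univ.filter (fun x : Fin k → Fin n => ¬ Function.Injective x) ∪
        bad.biUnion (fun D => univ.filter
          (fun x : Fin k → Fin n => Function.Injective x ∧ univ.image x = D)) := by
      intro x hx
      have hx' := (mem_filter.1 hx).2
      by_cases hi : Function.Injective x
      · refine mem_union_right _ (mem_biUnion.2 ⟨univ.image x, ?_, mem_filter.2
          ⟨mem_univ _, hi, rfl⟩⟩)
        by_contra hno
        exact hx' ((hgood x).2 ⟨hi, hno⟩)
      · exact mem_union_left _ (mem_filter.2 ⟨mem_univ _, hi⟩)
    refine (card_le_card hsub).trans ((card_union_le _ _).trans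
      (Nat.add_le_add card_not_injective ?_))
    rw [mul_comm]
    refine card_biUnion_le_card_mul _ _ _ (fun D _ => ?_)
    by_cases hD : D.card = k
    · have : univ.filter (fun x : Fin k → Fin n => Function.Injective x ∧ univ.image x = D) ⊆
          Fintype.piFinset (fun _ => D) := by
        intro x hx
        have hx' := (mem_filter.1 hx).2.2
        exact Fintype.mem_piFinset.2 (fun i => hx' ▸ mem_image_of_mem x (mem_univ i))
      refine (card_le_card this).trans ?_
      rw [Fintype.card_piFinset]
      simp [hD]
    · rw [filter_false_of_mem, card_empty]
      · exact Nat.zero_le _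
      · rintro x - ⟨hi, rfl⟩
        exact hD (by rw [card_image_of_injective _ hi]; simp)
  have hB' := Nat.mul_le_mul_left (k + 1) hB
  obtain ⟨x₀, hx₀, hcount⟩ := connect_tuples good (fun x => col (univ.image x)) (by
    intro x i v hx hy
    rw [hgood] at hx hy
    refine hcol _ _ ?_ ?_ hx.2 hy.2 ?_
    · rw [card_image_of_injective _ hx.1]; simp
    · rw [card_image_of_injective _ hy.1]; simp
    · have hsub : (univ.erase i).image x ⊆
          univ.image x ∩ univ.image (Function.update x i v) := by
        intro y hy
        obtain ⟨j, hj, rfl⟩ := mem_image.1 hy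
        have hj' := (mem_erase.1 hj).1
        refine mem_inter.2 ⟨mem_image_of_mem x (mem_univ _), mem_image.2 ⟨j, mem_univ _, ?_⟩⟩
        rw [Function.update_of_ne hj']
      have := card_le_card hsub
      rw [card_image_of_injective _ hx.1, card_erase_of_mem (mem_univ _)] at this
      simp at this
      omega) (by omega)
  rw [hgood] at hx₀
  refine ⟨univ.image x₀, by rw [card_image_of_injective _ hx₀.1]; simp, hx₀.2,
    le_trans ?_ (hcount.trans hB')⟩
  have hrep : ∀ D : Finset (Fin n), ∃ x : Fin k → Fin n, D.card = k →
      Function.Injective x ∧ univ.image x = D := by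
    intro D
    by_cases hD : D.card = k
    · refine ⟨fun i => D.orderEmbOfFin hD i, fun _ => ⟨(D.orderEmbOfFin hD).injective, ?_⟩⟩
      exact image_orderEmbOfFin_univ D hD
    · refine ⟨x₀, fun h => absurd h hD⟩
  choose rep hrep using hrep
  refine card_le_card_of_injOn rep ?_ ?_
  · intro D hD
    obtain ⟨hDk, hD'⟩ := mem_filter.1 (mem_coe.1 hD)
    have hr := hrep D (mem_powersetCard.1 hDk).2
    refine mem_coe.2 (mem_filter.2 ⟨mem_univ _, ?_⟩)
    rcases hD' with h | h
    · left; intro hg; have h2 := ((hgood _).1 hg).2; rw [hr.2] at h2; exact h2 h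
    · right; rw [hr.2]; exact h
  · intro D hD D' hD' he
    have h1 := hrep D (mem_powersetCard.1 (mem_filter.1 (mem_coe.1 hD)).1).2
    have h2 := hrep D' (mem_powersetCard.1 (mem_filter.1 (mem_coe.1 hD')).1).2
    rw [← h1.2, ← h2.2, he]

end Connect

/-! ### Stability -/

section Stability

theorem choose_sub_lower (k t n : ℕ) (h : t ≤ n) :
    t * (n - t).choose k + (n - t).choose (k + 1) ≤ n.choose (k + 1) := by
  induction t with
  | zero => simp
  | succ t ih =>
    have ih := ih (by omega)
    obtain ⟨a, ha⟩ : ∃ a, n - t = a + 1 := ⟨n - t - 1, by omega⟩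
    have e : n - (t + 1) = a := by omega
    rw [ha, Nat.choose_succ_succ a k] at ih
    rw [e]
    have := Nat.choose_le_succ a k
    nlinarith

theorem choose_sub_upper (k t n : ℕ) (h : t ≤ n) :
    n.choose (k + 1) ≤ (n - t).choose (k + 1) + t * n ^ k := by
  induction t with
  | zero => simp
  | succ t ih =>
    have ih := ih (by omega)
    obtain ⟨a, ha⟩ : ∃ a, n - t = a + 1 := ⟨n - t - 1, by omega⟩
    have e : n - (t + 1) = a := by omega
    rw [ha, Nat.choose_succ_succ a k] at ih
    rw [e]
    have h1 := Nat.choose_le_pow a k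
    have h2 : a ^ k ≤ n ^ k := Nat.pow_le_pow_left (by omega) k
    nlinarith

set_option maxHeartbeats 1000000 in
/-- Stability: an `H`-free family with at least `C(n, r) - C(n - t, r)` edges contains almost all
`r`-sets meeting some `t`-set `L`. -/
theorem TreeData.stability [DecidableEq α] {r t m : ℕ} {E : ℕ → Finset α}
    {H : Finset (Finset α)} {S A : Finset α} {w : α} {i₀ j₀ : ℕ}
    (h : TreeData r t m E H S A w i₀ j₀) (hr : 4 ≤ r) (q' : ℕ) :
    ∃ n₀ : ℕ, ∀ n, n₀ ≤ n → ∀ F : Finset (Finset (Fin n)),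
      (∀ e ∈ F, e.card = r) → ¬ ContainsCopy F H →
      n.choose r ≤ F.card + (n - t).choose r →
      ∃ L : Finset (Fin n), L.card = t ∧
        q' * ((powersetCard r univ).filter (fun e => ¬ Disjoint e L ∧ e ∉ F)).card ≤
          n ^ (r - 1) := by
  obtain ⟨C, hC⟩ := h.exceptional_bound hr
  obtain ⟨k, rfl⟩ : ∃ k, r = k + 2 := ⟨r - 2, by omega⟩
  -- throughout, links are `(k + 1)`-sets
  set K := m * (k + 2) + 2 * t + 1 + m * (k + 2) with hK
  set C₄ := 1 + (k + 2) * (k + 1) ^ (k + 1) * (C + 1) with hC₄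
  set q := (q' * t + 1) * C₄ + 1 with hq
  obtain ⟨n₀, hn₀⟩ := hC q
  set c₂ := 2 ^ (C * q) * K with hc₂
  set c₃ := t * t + C * q * c₂ + c₂ + c₂ with hc₃
  refine ⟨n₀ + t + 1 + q * c₃ + (k + 2) * (q * ((k + 1) * (k + 1))),
    fun n hn F hF hfree hbig => ?_⟩
  obtain ⟨L', hcardL, hexc⟩ := hn₀ n (by omega) F hF hfree
  have hrk : k + 2 - 1 = k + 1 := rfl
  rw [hrk] at hexc ⊢
  set X := F.filter (fun e => Disjoint e L') with hX
  set U := powersetCard (k + 1) (univ : Finset (Fin n)) with hU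
  set N : Finset (Fin n) → Finset (Fin n) := fun D =>
    L'.filter (fun v => v ∉ D ∧ insert v D ∈ F) with hN
  have hNmem : ∀ D v, v ∈ N D → v ∉ D ∧ insert v D ∈ F := fun D v hv => (mem_filter.1 hv).2
  have hUc : ∀ D ∈ U, D.card = k + 1 := fun D hD => (mem_powersetCard.1 hD).2
  have hNcard : ∀ D, (N D).card ≤ C * q := fun D =>
    (card_le_card (filter_subset _ _)).trans hcardL
  -- the edges meeting `L'` are counted through their links
  have hFle : F.card ≤ X.card + ∑ D ∈ U, (N D).card := by
    have hsub : F ⊆ X ∪ U.biUnion (fun D => (N D).image (fun v => insert v D)) := by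
      intro e he
      by_cases hd : Disjoint e L'
      · exact mem_union_left _ (mem_filter.2 ⟨he, hd⟩)
      · obtain ⟨v, hv1, hv2⟩ := not_disjoint_iff.1 hd
        refine mem_union_right _ (mem_biUnion.2 ⟨e.erase v, ?_, mem_image.2 ⟨v, ?_, ?_⟩⟩)
        · exact mem_powersetCard.2 ⟨subset_univ _, by rw [card_erase_of_mem hv1, hF e he]; rfl⟩
        · exact mem_filter.2 ⟨hv2, by simp, by rw [insert_erase hv1]; exact he⟩
        · exact insert_erase hv1
    refine (card_le_card hsub).trans ((card_union_le _ _).trans (Nat.add_le_add_left ?_ _))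
    exact card_biUnion_le.trans (sum_le_sum fun D _ => card_image_le)
  have hpow2 : ∀ j, (powersetCard j L').card ≤ 2 ^ (C * q) := by
    intro j
    refine (card_le_card (fun B hB => mem_powerset.2 (mem_powersetCard.1 hB).1)).trans ?_
    rw [card_powerset]
    exact Nat.pow_le_pow_right (by omega) hcardL
  set Big := U.filter (fun D => t < (N D).card) with hBig
  have hBigcard : Big.card ≤ c₂ * n ^ k := by
    have hsub : Big ⊆ (powersetCard (t + 1) L').biUnion (fun B => U.filter (fun D => B ⊆ N D)) := by
      intro D hD
      obtain ⟨hDU, hDt⟩ := mem_filter.1 hD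
      obtain ⟨B, hB, hBc⟩ := exists_subset_card_eq (Nat.succ_le_of_lt hDt)
      exact mem_biUnion.2 ⟨B, mem_powersetCard.2 ⟨hB.trans (filter_subset _ _), hBc⟩,
        mem_filter.2 ⟨hDU, hB⟩⟩
    refine (card_le_card hsub).trans ((card_biUnion_le_card_mul _ _ (K * n ^ k) ?_).trans ?_)
    · intro B hB
      have hBc := (mem_powersetCard.1 hB).2
      have hcard : ∀ D ∈ U.filter (fun D => B ⊆ N D), D.card = k + 1 :=
        fun D hD => hUc D (mem_filter.1 hD).1
      refine (card_le_of_no_full (K := K) ?_).trans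
        (Nat.mul_le_mul_left _ (shadow_card_le_pow hcard))
      intro G' hG' hfull
      by_contra hne
      refine hfree (h.contains_of_common hfull (nonempty_iff_ne_empty.2 hne)
        (fun D hD => hcard D (hG' hD)) B hBc ?_ (by omega))
      intro D hD v hv
      exact hNmem D v ((mem_filter.1 (hG' hD)).2 hv)
    · rw [hc₂, mul_assoc]
      exact Nat.mul_le_mul_right _ (hpow2 _)
  set Small := U.filter (fun D => (N D).card < t) with hSmall
  have hsumN : ∑ D ∈ U, (N D).card + Small.card ≤ U.card * t + C * q * Big.card := by
    have e1 : Small.card = ∑ D ∈ U, if (N D).card < t then 1 else 0 := by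
      rw [hSmall, card_filter]
    have e2 : C * q * Big.card = ∑ D ∈ U, if t < (N D).card then C * q else 0 := by
      rw [← sum_filter, sum_const, smul_eq_mul, mul_comm]
    have e3 : U.card * t = ∑ _D ∈ U, t := by rw [sum_const, smul_eq_mul]
    rw [e1, e2, e3, ← sum_add_distrib, ← sum_add_distrib]
    refine sum_le_sum fun D _ => ?_
    have := hNcard D
    split_ifs <;> omega
  have htn : t ≤ n := by omega
  have hUcard : U.card = n.choose (k + 1) := by
    rw [hU, card_powersetCard, card_univ, Fintype.card_fin]
  have hUt : U.card * t ≤ F.card + t * t * n ^ k := by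
    have h1 := choose_sub_lower (k + 1) t n htn
    have h2 := Nat.mul_le_mul_left t (choose_sub_upper k t n htn)
    rw [hUcard]
    have h3 : t * ((n - t).choose (k + 1) + t * n ^ k) =
      t * (n - t).choose (k + 1) + t * t * n ^ k := by ring
    rw [h3] at h2
    rw [mul_comm]
    have h4 : n.choose (k + 1 + 1) ≤ F.card + (n - t).choose (k + 1 + 1) := hbig
    omega
  have hSmallcard : Small.card ≤ X.card + (t * t + C * q * c₂) * n ^ k := by
    have h1 : C * q * Big.card ≤ C * q * (c₂ * n ^ k) := Nat.mul_le_mul_left _ hBigcard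
    have h2 : (t * t + C * q * c₂) * n ^ k = t * t * n ^ k + C * q * (c₂ * n ^ k) := by ring
    omega
  -- the full parts of the families of links with a given neighbourhood
  have hpart : ∀ B : Finset (Fin n), ∃ G' ⊆ U.filter (fun D => N D = B), Full K G' ∧
      (U.filter (fun D => N D = B) \ G').card ≤ K * n ^ k := by
    intro B
    obtain ⟨G', h1, h2, h3⟩ := full_part K _ (U.filter (fun D => N D = B)) rfl
    refine ⟨G', h1, h2, h3.trans (Nat.mul_le_mul_left _
      ((card_le_card sdiff_subset).trans (shadow_card_le_pow ?_)))⟩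
    exact fun D hD => hUc D (mem_filter.1 hD).1
  choose Gs hGs1 hGs2 hGs3 using hpart
  set bad := U.filter (fun D => ¬ ((N D).card = t ∧ D ∈ Gs (N D))) with hbad
  have hbadcard : bad.card ≤ X.card + c₃ * n ^ k := by
    have hsub : bad ⊆ (Small ∪ Big) ∪
        (powersetCard t L').biUnion (fun B => U.filter (fun D => N D = B) \ Gs B) := by
      intro D hD
      obtain ⟨hDU, hD'⟩ := mem_filter.1 hD
      rcases lt_trichotomy (N D).card t with hlt | heq | hgt
      · exact mem_union_left _ (mem_union_left _ (mem_filter.2 ⟨hDU, hlt⟩))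
      · refine mem_union_right _ (mem_biUnion.2 ⟨N D, mem_powersetCard.2
          ⟨filter_subset _ _, heq⟩, mem_sdiff.2 ⟨mem_filter.2 ⟨hDU, rfl⟩, fun hm => hD' ⟨heq, hm⟩⟩⟩)
      · exact mem_union_left _ (mem_union_right _ (mem_filter.2 ⟨hDU, hgt⟩))
    have h1 := (card_le_card hsub).trans (card_union_le _ _)
    have h2 := card_union_le Small Big
    have h3 : ((powersetCard t L').biUnion
        (fun B => U.filter (fun D => N D = B) \ Gs B)).card ≤ c₂ * n ^ k := by
      refine (card_biUnion_le_card_mul _ _ (K * n ^ k) (fun B _ => hGs3 B)).trans ?_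
      rw [hc₂, mul_assoc]
      exact Nat.mul_le_mul_right _ (hpow2 _)
    have h4 : c₃ * n ^ k = (t * t + C * q * c₂) * n ^ k + c₂ * n ^ k + c₂ * n ^ k := by
      rw [hc₃]; ring
    omega
  have hqbad : q * bad.card ≤ (C + 1) * n ^ (k + 1) := by
    calc q * bad.card ≤ q * X.card + q * c₃ * n ^ k := by
          refine (Nat.mul_le_mul_left q hbadcard).trans (le_of_eq ?_)
          ring
      _ ≤ C * n ^ (k + 1) + n * n ^ k :=
          Nat.add_le_add hexc (Nat.mul_le_mul_right _ (by omega))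
      _ = _ := by ring
  set Y := (k + 1 + 1) * ((k + 1) * (k + 1) * n ^ (k + 1 - 1) + (k + 1) ^ (k + 1) * bad.card)
    with hY
  have hqY : q * Y ≤ C₄ * n ^ (k + 1) := by
    have hk1 : k + 1 - 1 = k := rfl
    calc q * Y = (k + 2) * (q * ((k + 1) * (k + 1))) * n ^ k
          + (k + 2) * (k + 1) ^ (k + 1) * (q * bad.card) := by rw [hY, hk1]; ring
      _ ≤ n * n ^ k + (k + 2) * (k + 1) ^ (k + 1) * ((C + 1) * n ^ (k + 1)) :=
          Nat.add_le_add (Nat.mul_le_mul_right _ (by omega)) (Nat.mul_le_mul_left _ hqbad)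
      _ = _ := by rw [hC₄]; ring
  have hC₄pos : 0 < C₄ := by omega
  have hnpos : 0 < n ^ (k + 1) := pow_pos (by omega) _
  have hYt : (q' * t) * Y ≤ n ^ (k + 1) := by
    have : C₄ * ((q' * t) * Y) ≤ C₄ * n ^ (k + 1) := by
      refine le_trans ?_ hqY
      have : C₄ * ((q' * t) * Y) = ((q' * t) * C₄) * Y := by ring
      rw [this]
      refine Nat.mul_le_mul_right _ ?_
      exact Nat.le_succ_of_le (Nat.mul_le_mul_right _ (Nat.le_succ _))
    exact Nat.le_of_mul_le_mul_left this hC₄pos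
  have hYlt : Y < n ^ (k + 1) := by
    have h1 : (C₄ + 1) * Y ≤ C₄ * n ^ (k + 1) := by
      refine le_trans (Nat.mul_le_mul_right _ ?_) hqY
      exact Nat.succ_le_succ (Nat.le_mul_of_pos_left _ (Nat.succ_pos _))
    by_contra hge
    have h2 : n ^ (k + 1) ≤ Y := not_lt.1 hge
    have h3 := Nat.mul_le_mul_left (C₄ + 1) h2
    have h4 : (C₄ + 1) * n ^ (k + 1) = C₄ * n ^ (k + 1) + n ^ (k + 1) := by ring
    omega
  obtain ⟨D₀, hD₀c, hD₀, hcount⟩ := connect_sets (k := k + 1) N bad (by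
    intro D D' hDc hDc' hD hD' hinter
    have hDU : D ∈ U := mem_powersetCard.2 ⟨subset_univ _, hDc⟩
    have hDU' : D' ∈ U := mem_powersetCard.2 ⟨subset_univ _, hDc'⟩
    have g : (N D).card = t ∧ D ∈ Gs (N D) := by
      by_contra hno; exact hD (mem_filter.2 ⟨hDU, hno⟩)
    have g' : (N D').card = t ∧ D' ∈ Gs (N D') := by
      by_contra hno; exact hD' (mem_filter.2 ⟨hDU', hno⟩)
    by_contra hne
    have hGF : ∀ B : Finset (Fin n), ∀ D ∈ Gs B, ∀ v ∈ B, v ∉ D ∧ insert v D ∈ F := by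
      intro B D hD v hv
      have := (mem_filter.1 (hGs1 B hD)).2
      rw [← this] at hv
      exact hNmem D v hv
    have hGc : ∀ B : Finset (Fin n), ∀ D ∈ Gs B, D.card = k + 2 - 1 := fun B D hD =>
      hUc D (mem_filter.1 (hGs1 B hD)).1
    exact hfree (h.contains_of_mixed (hGs2 (N D')) (hGc _) (hGs2 (N D)) (hGc _) (N D') (N D)
      g'.1 g.1 hne (hGF _) (hGF _) D' D g'.2 g.2 (by rw [inter_comm]; omega) (by omega))) hYlt
  have hD₀U : D₀ ∈ U := mem_powersetCard.2 ⟨subset_univ _, hD₀c⟩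
  have g₀ : (N D₀).card = t ∧ D₀ ∈ Gs (N D₀) := by
    by_contra hno; exact hD₀ (mem_filter.2 ⟨hD₀U, hno⟩)
  refine ⟨N D₀, g₀.1, ?_⟩
  set M := (powersetCard (k + 2) univ).filter (fun e => ¬ Disjoint e (N D₀) ∧ e ∉ F) with hM
  have hMcard : M.card ≤ t * Y := by
    have hsub : M ⊆ (N D₀ ×ˢ (U.filter (fun D => D ∈ bad ∨ N D ≠ N D₀))).image
        (fun z => insert z.1 z.2) := by
      intro e he
      obtain ⟨he1, he2, he3⟩ := mem_filter.1 he
      obtain ⟨v, hv1, hv2⟩ := not_disjoint_iff.1 he2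
      refine mem_image.2 ⟨(v, e.erase v), mem_product.2 ⟨hv2, mem_filter.2 ⟨?_, Or.inr ?_⟩⟩,
        insert_erase hv1⟩
      · exact mem_powersetCard.2 ⟨subset_univ _, by
          rw [card_erase_of_mem hv1, (mem_powersetCard.1 he1).2]; rfl⟩
      · intro heq
        rw [← heq] at hv2
        have := (hNmem _ v hv2).2
        rw [insert_erase hv1] at this
        exact he3 this
    refine (card_le_card hsub).trans (card_image_le.trans ?_)
    rw [card_product, g₀.1]
    exact Nat.mul_le_mul_left _ (by convert hcount)
  calc q' * M.card ≤ q' * (t * Y) := Nat.mul_le_mul_left _ hMcard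
    _ = (q' * t) * Y := by ring
    _ ≤ _ := hYt

end Stability

/-! ### Linear stars -/

section Stars

variable [DecidableEq α] [DecidableEq β]

/-- A linear star can be mapped onto any linear star of the same size, prescribing the map on
part of one edge. -/
theorem star_embed {r : ℕ} {𝒮 : Finset (Finset α)} {w : α} (hw : ∀ B ∈ 𝒮, w ∈ B)
    (hS : ∀ B ∈ 𝒮, ∀ C ∈ 𝒮, B ≠ C → B ∩ C = {w}) (hSc : ∀ B ∈ 𝒮, B.card = r)
    {Pt : Finset (Finset β)} {κ : β} (hκ : ∀ e ∈ Pt, κ ∈ e)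
    (hP : ∀ e ∈ Pt, ∀ e' ∈ Pt, e ≠ e' → e ∩ e' = {κ}) (hPc : ∀ e ∈ Pt, e.card = r)
    (hcard : 𝒮.card = Pt.card) {E₀ : Finset α} (hE₀ : E₀ ∈ 𝒮) {e₀ : Finset β} (he₀ : e₀ ∈ Pt)
    (I : Finset α) (hI : I ⊆ E₀) (hwI : w ∈ I) (g : α → β) (hg : Set.InjOn g I)
    (hgI : I.image g ⊆ e₀) (hgw : g w = κ) :
    ∃ f : α → β, (∀ x ∈ I, f x = g x) ∧ Set.InjOn f (𝒮.biUnion id : Finset α) ∧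
      ∀ B ∈ 𝒮, B.image f ∈ Pt := by
  obtain ⟨π, π1, π2, π3⟩ := ext_bij 𝒮 Pt hcard {E₀} (by simpa using hE₀) (fun _ => e₀)
    (by simp) (by simpa using he₀)
  have πE₀ : π E₀ = e₀ := π1 E₀ (by simp)
  have πmem : ∀ B ∈ 𝒮, π B ∈ Pt := fun B hB => π3 ▸ mem_image_of_mem π hB
  obtain ⟨f₀, f1, f2, f3⟩ := ext_bij E₀ e₀ (by rw [hSc _ hE₀, hPc _ he₀]) I hI g hg hgI
  have main : ∀ T : Finset (Finset α), T ⊆ 𝒮 → ∃ f : α → β, (∀ x ∈ E₀, f x = f₀ x) ∧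
      Set.InjOn f (E₀ ∪ T.biUnion id : Finset α) ∧ ∀ B ∈ insert E₀ T, B.image f = π B := by
    intro T
    induction T using Finset.induction_on with
    | empty =>
      intro _
      refine ⟨f₀, fun _ _ => rfl, by simpa using f2, fun B hB => ?_⟩
      have : B = E₀ := by simpa using hB
      rw [this, f3, πE₀]
    | insert B T hBT ih =>
      intro hTS
      have hB : B ∈ 𝒮 := hTS (mem_insert_self _ _)
      have hTS' : T ⊆ 𝒮 := (subset_insert _ _).trans hTS
      obtain ⟨f, g1, g2, g3⟩ := ih hTS'
      by_cases hBE : B = E₀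
      · refine ⟨f, g1, ?_, ?_⟩
        · have e : E₀ ∪ (insert B T).biUnion id = E₀ ∪ T.biUnion id := by
            rw [biUnion_insert, id, hBE, ← union_assoc, union_self]
          rw [e]; exact g2
        · rw [hBE, insert_idem]; exact g3
      set V := E₀ ∪ T.biUnion id with hV
      have hVmem : ∀ x, x ∈ V ↔ ∃ C ∈ insert E₀ T, x ∈ C := by
        intro x; simp [hV]
      have hCS : ∀ C ∈ insert E₀ T, C ∈ 𝒮 ∧ C ≠ B := by
        intro C hC
        rcases mem_insert.1 hC with rfl | hC
        · exact ⟨hE₀, fun e => hBE e.symm⟩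
        · exact ⟨hTS' hC, by rintro rfl; exact hBT hC⟩
      have hBV : B ∩ V = {w} := by
        apply Subset.antisymm
        · intro x hx
          obtain ⟨hx1, hx2⟩ := mem_inter.1 hx
          obtain ⟨C, hC, hxC⟩ := (hVmem x).1 hx2
          rw [← hS B hB C (hCS C hC).1 (hCS C hC).2.symm]
          exact mem_inter.2 ⟨hx1, hxC⟩
        · intro x hx
          rw [mem_singleton.1 hx]
          exact mem_inter.2 ⟨hw B hB, (hVmem w).2 ⟨E₀, mem_insert_self _ _, hw _ hE₀⟩⟩
      have hfw : f w = κ := by rw [g1 w (hI hwI), f1 w hwI, hgw]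
      obtain ⟨f', k1, k2, k3⟩ := extend_one f V B (π B) g2
        (by rw [hSc _ hB, hPc _ (πmem B hB)])
        (by rw [hBV, image_singleton, hfw]; simpa using hκ _ (πmem B hB))
        (by
          intro y hy hyn hyV
          rw [hBV, image_singleton, hfw, mem_singleton] at hyn
          obtain ⟨x, hx, rfl⟩ := mem_image.1 hyV
          obtain ⟨C, hC, hxC⟩ := (hVmem x).1 hx
          obtain ⟨hC1, hC2⟩ := hCS C hC
          have hne : π B ≠ π C := fun e => hC2 (π2 hB hC1 e).symm
          have : f x ∈ π B ∩ π C :=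
            mem_inter.2 ⟨hy, g3 C hC ▸ mem_image_of_mem f hxC⟩
          rw [hP _ (πmem B hB) _ (πmem C hC1) hne, mem_singleton] at this
          exact hyn this)
      refine ⟨f', fun x hx => ?_, ?_, ?_⟩
      · rw [k1 x ((hVmem x).2 ⟨E₀, mem_insert_self _ _, hx⟩), g1 x hx]
      · have e : E₀ ∪ (insert B T).biUnion id = V ∪ B := by
          rw [biUnion_insert, id, hV, union_assoc, union_comm B]
        rw [e]; exact k2
      · intro C hC
        rw [Finset.insert_comm] at hC
        rcases mem_insert.1 hC with rfl | hC
        · exact k3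
        · have e : C.image f' = C.image f :=
            image_congr (fun x hx => k1 x ((hVmem x).2 ⟨C, hC, hx⟩))
          rw [e]; exact g3 C hC
  obtain ⟨f, g1, g2, g3⟩ := main 𝒮 subset_rfl
  refine ⟨f, fun x hx => by rw [g1 x (hI hx), f1 x hx], g2.mono ?_, fun B hB => ?_⟩
  · intro x hx; exact mem_coe.2 (mem_union_right _ (mem_coe.1 hx))
  · rw [g3 B (mem_insert_of_mem hB)]; exact πmem B hB

/-- The `i`-th petal of `linearStar`. -/
def petal (r i : ℕ) : Finset ℕ := insert 0 ((range (r - 1)).image (fun j => i * (r - 1) + j + 1))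

theorem petal_card {r : ℕ} (hr : 1 ≤ r) (i : ℕ) : (petal r i).card = r := by
  unfold petal
  rw [card_insert_of_notMem (by simp), card_image_of_injective _ (fun a b h => by
    omega), card_range]
  omega

theorem petal_inter {r i j : ℕ} (hij : i ≠ j) : petal r i ∩ petal r j = {0} := by
  unfold petal
  ext x
  simp only [mem_inter, mem_insert, mem_image, mem_range, mem_singleton]
  constructor
  · rintro ⟨h1, h2⟩
    rcases h1 with rfl | ⟨a, ha, rfl⟩
    · rfl
    rcases h2 with h | ⟨b, hb, hab⟩
    · exact h
    exfalso
    have e : i * (r - 1) + a = j * (r - 1) + b := by omega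
    have hi : (i * (r - 1) + a) / (r - 1) = i := by
      rw [mul_comm, Nat.mul_add_div (by omega), Nat.div_eq_of_lt ha, add_zero]
    have hj : (j * (r - 1) + b) / (r - 1) = j := by
      rw [mul_comm, Nat.mul_add_div (by omega), Nat.div_eq_of_lt hb, add_zero]
    exact hij (by rw [← hi, ← hj, e])
  · rintro rfl; simp

/-- A copy of `linearStar r p` is a family of `p` sets of size `r` meeting pairwise exactly in
one common vertex. -/
theorem exists_star_of_containsCopy {r p : ℕ} (hr : 4 ≤ r) {F : Finset (Finset β)}
    (h : ContainsCopy F (linearStar r p)) :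
    ∃ Pt ⊆ F, ∃ κ, Pt.card = p ∧ (∀ e ∈ Pt, κ ∈ e) ∧ (∀ e ∈ Pt, e.card = r) ∧
      ∀ e ∈ Pt, ∀ e' ∈ Pt, e ≠ e' → e ∩ e' = {κ} := by
  obtain ⟨f, hf, hfF⟩ := h
  have hmem : ∀ i ∈ range p, petal r i ∈ linearStar r p := fun i hi =>
    mem_image.2 ⟨i, hi, rfl⟩
  have hsub : ∀ i ∈ range p, (petal r i : Set ℕ) ⊆ ((linearStar r p).sup id : Finset ℕ) := by
    intro i hi x hx
    exact mem_coe.2 (Finset.mem_sup.2 ⟨_, hmem i hi, hx⟩)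
  have hc : ∀ i ∈ range p, ((petal r i).image f).card = r := by
    intro i hi
    rw [card_image_of_injOn (hf.mono (hsub i hi)), petal_card (by omega)]
  have hinter : ∀ i ∈ range p, ∀ j ∈ range p, i ≠ j →
      (petal r i).image f ∩ (petal r j).image f = {f 0} := by
    intro i hi j hj hij
    rw [← image_inter_of_injOn, petal_inter hij, image_singleton]
    exact hf.mono (Set.union_subset (hsub i hi) (hsub j hj))
  refine ⟨(range p).image (fun i => (petal r i).image f), ?_, f 0, ?_, ?_, ?_, ?_⟩
  · intro e he
    obtain ⟨i, hi, rfl⟩ := mem_image.1 he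
    exact hfF _ (hmem i hi)
  · rw [card_image_of_injOn, card_range]
    intro i hi j hj hij
    by_contra hne
    have h1 := hinter i hi j hj hne
    simp only at hij
    rw [hij, inter_self] at h1
    have h2 := hc j hj
    rw [h1, card_singleton] at h2
    omega
  · intro e he
    obtain ⟨i, hi, rfl⟩ := mem_image.1 he
    exact mem_image_of_mem f (by simp [petal])
  · intro e he
    obtain ⟨i, hi, rfl⟩ := mem_image.1 he
    exact hc i hi
  · intro e he e' he' hne
    obtain ⟨i, hi, rfl⟩ := mem_image.1 he
    obtain ⟨j, hj, rfl⟩ := mem_image.1 he'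
    exact hinter i hi j hj (by rintro rfl; exact hne rfl)

/-- If every edge of `F₂` avoids `L` and contains a pair covered by the full family `G` of common
links of `L`, then `F₂` contains no linear star with `deg w` edges: such a star, attached to `G`
through the covered pair of one of its edges, would extend to a copy of `H`. -/
theorem TreeData.no_star {r t m : ℕ} {E : ℕ → Finset α}
    {H : Finset (Finset α)} {S A : Finset α} {w : α} {i₀ j₀ : ℕ}
    (h : TreeData r t m E H S A w i₀ j₀) (hr : 4 ≤ r) {K p : ℕ}
    (hp : (H.filter (fun B => w ∈ B)).card = p)
    {F F₂ G : Finset (Finset β)} (hG : Full K G) (hGr : ∀ e ∈ G, e.card = r - 1)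
    (L : Finset β) (hL : L.card = t) (hGF : ∀ D ∈ G, ∀ v ∈ L, v ∉ D ∧ insert v D ∈ F)
    (hK : m * r + t + m * r ≤ K) (hF₂ : F₂ ⊆ F) (hF₂L : ∀ e ∈ F₂, Disjoint e L)
    (hpair : ∀ e ∈ F₂, ∃ P : Finset β, P ⊆ e ∧ P.card = 2 ∧ ∃ D ∈ G, P ⊆ D)
    (hfree : ¬ ContainsCopy F H) : ¬ ContainsCopy F₂ (linearStar r p) := by
  intro hcopy
  obtain ⟨Pt, hPt, κ, hc, hκ, hcr, hinter⟩ := exists_star_of_containsCopy hr hcopy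
  set 𝒮 := H.filter (fun B => w ∈ B) with h𝒮
  have hE₀ : E i₀ ∈ 𝒮 := mem_filter.2 ⟨h.mem h.i_lt, h.w_i⟩
  have hp1 : 1 ≤ p := by rw [← hp]; exact card_pos.2 ⟨_, hE₀⟩
  obtain ⟨e, he⟩ : Pt.Nonempty := card_pos.1 (by omega)
  obtain ⟨P, hPe, hP2, D, hD, hPD⟩ := hpair e (hPt he)
  have hwA : w ∉ A := fun hw => h.A_disj hw h.w_mem
  -- the kernel of the star may be moved if the star is a single edge
  obtain ⟨κ', hκ', hinter', Q, hQP, hκQ, hQA⟩ : ∃ κ', (∀ e ∈ Pt, κ' ∈ e) ∧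
      (∀ e ∈ Pt, ∀ e' ∈ Pt, e ≠ e' → e ∩ e' = {κ'}) ∧
      ∃ Q ⊆ P, κ' ∉ Q ∧ Q.card = A.card := by
    by_cases hp2 : 2 ≤ p
    · have hA : A.card ≤ 1 := h.A_card' (by unfold hdeg; rw [← h𝒮, hp]; exact hp2)
      have : A.card ≤ (P.erase κ).card := by
        have := pred_card_le_card_erase (s := P) (a := κ)
        omega
      obtain ⟨Q, hQ, hQc⟩ := exists_subset_card_eq this
      exact ⟨κ, hκ, hinter, Q, hQ.trans (erase_subset _ _), fun hm => by simpa using hQ hm, hQc⟩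
    · have h1 : Pt.card ≤ 1 := by omega
      have heq : ∀ e' ∈ Pt, e' = e := fun e' he' => card_le_one.1 h1 e' he' e he
      obtain ⟨κ', hk⟩ : (e \ P).Nonempty := by
        apply card_pos.1
        rw [card_sdiff_of_subset hPe, hcr e he]
        omega
      obtain ⟨Q, hQ, hQc⟩ := exists_subset_card_eq (h.A_card.trans hP2.ge)
      refine ⟨κ', fun e' he' => ?_, fun e₁ h₁ e₂ h₂ hne => ?_, Q, hQ, fun hm => ?_, hQc⟩
      · rw [heq e' he']; exact (mem_sdiff.1 hk).1
      · exact absurd ((heq e₁ h₁).trans (heq e₂ h₂).symm) hne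
      · exact (mem_sdiff.1 hk).2 (hQ hm)
  obtain ⟨g₀, -, g2, g3⟩ := ext_bij A Q hQA.symm ∅ (by simp) (fun _ => κ') (by simp) (by simp)
  let g : α → β := fun a => if a = w then κ' else g₀ a
  have gw : g w = κ' := if_pos rfl
  have gA : ∀ a ∈ A, g a = g₀ a := fun a ha =>
    if_neg (show ¬ a = w from fun e => hwA (e ▸ ha))
  have gAQ : ∀ a ∈ A, g a ∈ Q := fun a ha => by
    rw [gA a ha]; exact g3 ▸ mem_image_of_mem g₀ ha
  obtain ⟨f₂, f1, f2, f3⟩ := star_embed (𝒮 := 𝒮) (w := w) (r := r)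
    (fun B hB => (mem_filter.1 hB).2)
    (fun B hB C hC hne => h.star B (mem_filter.1 hB).1 C (mem_filter.1 hC).1
      (mem_filter.1 hB).2 (mem_filter.1 hC).2 hne)
    (fun B hB => h.card_of_mem (mem_filter.1 hB).1) hκ' hinter' hcr (by rw [hp, hc]) hE₀ he
    (insert w A) (insert_subset h.w_i h.A_i) (mem_insert_self _ _) g
    (by
      intro x hx y hy hxy
      rcases mem_insert.1 (mem_coe.1 hx) with hx | hx <;>
        rcases mem_insert.1 (mem_coe.1 hy) with hy | hy
      · rw [hx, hy]
      · rw [hx, gw] at hxy; exact absurd (hxy ▸ gAQ y hy) hκQ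
      · rw [hy, gw] at hxy; exact absurd (hxy ▸ gAQ x hx) hκQ
      · rw [gA x hx, gA y hy] at hxy; exact g2 hx hy hxy)
    (by
      intro z hz
      obtain ⟨x, hx, rfl⟩ := mem_image.1 hz
      rcases mem_insert.1 hx with hx | hx
      · rw [hx, gw]; exact hκ' e he
      · exact hPe (hQP (gAQ x hx))) gw
  have hW : ∀ x, x ∈ 𝒮.biUnion id ↔ ∃ B ∈ H, w ∈ B ∧ x ∈ B := by
    intro x; simp [h𝒮, and_assoc]
  refine hfree (h.glue hG hGr L hL hGF hK f₂ (𝒮.biUnion id) hW f2 ?_ ?_ D hD ?_)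
  · intro B hB hwB
    exact hF₂ (hPt (f3 B (mem_filter.2 ⟨hB, hwB⟩)))
  · intro x hx
    obtain ⟨B, hB, hxB⟩ := mem_biUnion.1 hx
    exact disjoint_left.1 (hF₂L _ (hPt (f3 B hB))) (mem_image_of_mem f₂ hxB)
  · intro z hz
    obtain ⟨x, hx, rfl⟩ := mem_image.1 hz
    rw [f1 x (mem_insert_of_mem hx)]
    exact hPD (hQP (gAQ x hx))

end Stars

/-! ### Turán numbers -/

section Turan

theorem le_exNum [DecidableEq α] {n r : ℕ} {H : Finset (Finset α)} {F : Finset (Finset (Fin n))}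
    (hF : ∀ e ∈ F, e.card = r) (hfree : ¬ ContainsCopy F H) : F.card ≤ exNum n r H := by
  refine le_csSup ⟨Fintype.card (Finset (Fin n)), ?_⟩ ⟨F, hF, hfree, rfl⟩
  rintro N ⟨F', -, -, rfl⟩
  exact card_le_univ F'

theorem exNum_le [DecidableEq α] {n r N : ℕ} {H : Finset (Finset α)}
    (h : ∀ F : Finset (Finset (Fin n)), (∀ e ∈ F, e.card = r) → ¬ ContainsCopy F H →
      F.card ≤ N) : exNum n r H ≤ N := by
  refine csSup_le' ?_
  rintro N' ⟨F, h1, h2, rfl⟩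
  exact h F h1 h2

theorem card_le_exNum_of_subset [DecidableEq α] {n k r : ℕ} {H : Finset (Finset α)}
    (Y : Finset (Fin n)) (hY : Y.card = k) (F : Finset (Finset (Fin n)))
    (hF : ∀ e ∈ F, e.card = r) (hFY : ∀ e ∈ F, e ⊆ Y) (hfree : ¬ ContainsCopy F H) :
    F.card ≤ exNum k r H := by
  set φ : Fin k ↪ Fin n := (Y.orderEmbOfFin hY).toEmbedding with hφ
  have hrange : ∀ y ∈ Y, ∃ i, φ i = y := by
    intro y hy
    have : y ∈ Set.range (Y.orderEmbOfFin hY) := by rw [range_orderEmbOfFin]; exact hy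
    exact this
  set F' : Finset (Finset (Fin k)) := univ.filter (fun e => e.map φ ∈ F) with hF'
  have hmem : ∀ e, e ∈ F' ↔ e.map φ ∈ F := fun e => by simp [hF']
  have hsub : F ⊆ F'.image (fun e => e.map φ) := by
    intro e he
    have e' : (univ.filter (fun i => φ i ∈ e)).map φ = e := by
      ext y
      simp only [mem_map, mem_filter, mem_univ, true_and]
      constructor
      · rintro ⟨i, hi, rfl⟩; exact hi
      · intro hy
        obtain ⟨i, rfl⟩ := hrange y (hFY e he hy)
        exact ⟨i, hy, rfl⟩
    exact mem_image.2 ⟨_, (hmem _).2 (by rw [e']; exact he), e'⟩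
  refine (card_le_card hsub).trans (card_image_le.trans (le_exNum ?_ ?_))
  · intro e he
    rw [← card_map φ]; exact hF _ ((hmem e).1 he)
  · rintro ⟨f, hf, hfF⟩
    refine hfree ⟨φ ∘ f, φ.injective.comp_injOn hf, fun B hB => ?_⟩
    have := (hmem _).1 (hfF B hB)
    rwa [map_eq_image, image_image] at this

end Turan

/-! ### The exact bound -/

section Exact

variable {n : ℕ}

theorem pow_le_choose (k s : ℕ) : ∃ n₀, ∀ n ≥ n₀,
    n ^ k ≤ 2 ^ k * k.factorial * (n - s).choose k := by
  refine ⟨2 * (s + k), fun n hn => ?_⟩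
  have h1 : n ≤ 2 * (n - s + 1 - k) := by omega
  calc n ^ k ≤ (2 * (n - s + 1 - k)) ^ k := Nat.pow_le_pow_left h1 k
    _ = 2 ^ k * (n - s + 1 - k) ^ k := by rw [mul_pow]
    _ ≤ 2 ^ k * (n - s).descFactorial k :=
        Nat.mul_le_mul_left _ (Nat.pow_sub_le_descFactorial (n - s) k)
    _ = _ := by rw [Nat.descFactorial_eq_factorial_mul_choose, mul_assoc]

theorem card_supersets (Y Q : Finset (Fin n)) (hQ : Q ⊆ Y) (a : ℕ) :
    ((powersetCard (Q.card + a) Y).filter (fun D => Q ⊆ D)).card = (Y.card - Q.card).choose a := by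
  rw [← card_sdiff_of_subset hQ, ← card_powersetCard]
  symm
  refine card_bij (fun T _ => Q ∪ T) ?_ ?_ ?_
  · intro T hT
    obtain ⟨h1, h2⟩ := mem_powersetCard.1 hT
    have hd : Disjoint Q T := disjoint_of_subset_right h1 disjoint_sdiff
    refine mem_filter.2 ⟨mem_powersetCard.2 ⟨union_subset hQ (h1.trans sdiff_subset), ?_⟩,
      subset_union_left⟩
    rw [card_union_of_disjoint hd, h2]
  · intro T hT T' hT' e
    have hd : ∀ T ∈ powersetCard a (Y \ Q), (Q ∪ T) \ Q = T := fun T hT =>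
      union_sdiff_cancel_left (disjoint_of_subset_right (mem_powersetCard.1 hT).1 disjoint_sdiff)
    have e' : Q ∪ T = Q ∪ T' := e
    rw [← hd T hT, ← hd T' hT', e']
  · intro D hD
    obtain ⟨h1, h2⟩ := mem_filter.1 hD
    obtain ⟨h3, h4⟩ := mem_powersetCard.1 h1
    refine ⟨D \ Q, mem_powersetCard.2 ⟨sdiff_subset_sdiff h3 subset_rfl, ?_⟩,
      union_sdiff_of_subset h2⟩
    rw [card_sdiff_of_subset h2, h4]; omega

/-- The subsets `Q` of `Y` of size `b` all of whose supersets of size `b + a` in `Y` belong to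
`U` are few if `U` is small. -/
theorem count_blocked (Y : Finset (Fin n)) (a b : ℕ) (T U : Finset (Finset (Fin n)))
    (hT : ∀ Q ∈ T, Q ⊆ Y ∧ Q.card = b)
    (hU : ∀ D ∈ U, D.card = b + a)
    (hTU : ∀ Q ∈ T, ∀ D ⊆ Y, D.card = b + a → Q ⊆ D → D ∈ U) :
    T.card * (Y.card - b).choose a ≤ U.card * (b + a).choose b := by
  refine card_mul_le_card_mul (fun Q D => Q ⊆ D) ?_ ?_
  · intro Q hQ
    obtain ⟨h1, h2⟩ := hT Q hQ
    have := card_supersets Y Q h1 a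
    rw [h2] at this
    rw [← this]
    refine card_le_card fun D hD => ?_
    obtain ⟨h3, h4⟩ := mem_filter.1 hD
    obtain ⟨h5, h6⟩ := mem_powersetCard.1 h3
    exact mem_filter.2 ⟨hTU Q hQ D h5 h6 h4, h4⟩
  · intro D hD
    rw [← hU D hD, ← card_powersetCard b D]
    refine card_le_card fun Q hQ => ?_
    obtain ⟨h3, h4⟩ := mem_filter.1 hQ
    exact mem_powersetCard.2 ⟨h4, (hT Q h3).2⟩

/-- The common link of `L` in `F` contains a full family such that the number of pairs of vertices
outside `L` not covered by it is `O(M / n ^ (r - 3))`, where `r = k + 4` and `M` is the number of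
`r`-sets meeting `L` that are missing from `F`. -/
theorem exists_full_link (K t k : ℕ) : ∃ C n₀, 0 < C ∧ ∀ n ≥ n₀, ∀ F : Finset (Finset (Fin n)),
    ∀ L : Finset (Fin n), L.card = t →
    ∃ G : Finset (Finset (Fin n)), Full K G ∧
      (∀ D ∈ G, D.card = k + 3 ∧ ∀ v ∈ L, v ∉ D ∧ insert v D ∈ F) ∧
      ((powersetCard 2 (univ \ L)).filter (fun P => ∀ D ∈ G, ¬ P ⊆ D)).card * n ^ (k + 1) ≤
        C * ((powersetCard (k + 4) univ).filter (fun e => ¬ Disjoint e L ∧ e ∉ F)).card := by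
  obtain ⟨n₁, hn₁⟩ := pow_le_choose (k + 1) (t + 2)
  refine ⟨2 ^ (k + 1) * (k + 1).factorial * (2 * (k + 3).choose 2),
    max n₁ (t + (k + 2) + 2 * K * (k + 3)), ?_, ?_⟩
  · have : 0 < (k + 3).choose 2 := Nat.choose_pos (by omega)
    positivity
  intro n hn F L hL
  have hn1 := hn₁ n (le_of_max_le_left hn)
  have hn2 := le_of_max_le_right hn
  set M := (powersetCard (k + 4) univ).filter (fun e => ¬ Disjoint e L ∧ e ∉ F) with hM
  set Y : Finset (Fin n) := univ \ L with hY
  have hYc : Y.card = n - t := by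
    rw [hY, card_sdiff_of_subset (subset_univ _), hL, card_univ, Fintype.card_fin]
  have hYL : ∀ v, v ∈ Y ↔ v ∉ L := fun v => by simp [hY]
  set P := powersetCard (k + 3) Y with hP
  set 𝒟 := P.filter (fun D => ∀ v ∈ L, insert v D ∈ F) with h𝒟
  obtain ⟨G, hG𝒟, hGfull, hGc⟩ := full_part K _ 𝒟 rfl
  have hGP : G ⊆ P := hG𝒟.trans (filter_subset _ _)
  have hPm : ∀ D ∈ P, D ⊆ Y ∧ D.card = k + 3 := fun D hD => mem_powersetCard.1 hD
  set U := P \ G with hU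
  have hmiss : (P \ 𝒟).card ≤ M.card := by
    refine (card_le_card (?_ : P \ 𝒟 ⊆ M.image (fun e => e \ L))).trans card_image_le
    intro D hD
    obtain ⟨h1, h2⟩ := mem_sdiff.1 hD
    obtain ⟨h3, h4⟩ := hPm D h1
    have : ¬ ∀ v ∈ L, insert v D ∈ F := fun h => h2 (mem_filter.2 ⟨h1, h⟩)
    push Not at this
    obtain ⟨v, hv, hvF⟩ := this
    have hvD : v ∉ D := fun h => (hYL v).1 (h3 h) hv
    refine mem_image.2 ⟨insert v D, mem_filter.2 ⟨mem_powersetCard.2 ⟨subset_univ _, ?_⟩, ?_, hvF⟩,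
      ?_⟩
    · rw [card_insert_of_notMem hvD, h4]
    · exact fun h => disjoint_left.1 h (mem_insert_self _ _) hv
    · rw [insert_sdiff_of_mem _ hv]
      exact sdiff_eq_self_of_disjoint (disjoint_left.2 fun x hx hxL => (hYL x).1 (h3 hx) hxL)
  have hUc : U.card ≤ (P \ 𝒟).card + (𝒟 \ G).card := by
    refine (card_le_card (?_ : U ⊆ (P \ 𝒟) ∪ (𝒟 \ G))).trans (card_union_le _ _)
    intro D hD
    obtain ⟨h1, h2⟩ := mem_sdiff.1 hD
    by_cases h : D ∈ 𝒟
    · exact mem_union_right _ (mem_sdiff.2 ⟨h, h2⟩)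
    · exact mem_union_left _ (mem_sdiff.2 ⟨h1, h⟩)
  have hQ := count_blocked Y 1 (k + 2) (𝒟.shadow \ G.shadow) U
    (by
      intro Q hQ
      obtain ⟨D, hD, x, hx, rfl⟩ := mem_shadow_iff.1 (mem_sdiff.1 hQ).1
      obtain ⟨h3, h4⟩ := hPm D (mem_filter.1 hD).1
      exact ⟨(erase_subset _ _).trans h3, by rw [card_erase_of_mem hx, h4]; rfl⟩)
    (fun D hD => (hPm D (mem_sdiff.1 hD).1).2)
    (by
      intro Q hQ D hDY hDc hQD
      refine mem_sdiff.2 ⟨mem_powersetCard.2 ⟨hDY, hDc⟩, fun hDG => (mem_sdiff.1 hQ).2 ?_⟩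
      obtain ⟨D', hD', x, hx, hQe⟩ := mem_shadow_iff.1 (mem_sdiff.1 hQ).1
      have hQc : Q.card = k + 2 := by
        rw [← hQe, card_erase_of_mem hx, (hPm D' (mem_filter.1 hD').1).2]; rfl
      refine mem_shadow_iff_exists_mem_card_add_one.2 ⟨D, hDG, hQD, ?_⟩
      rw [hDc, hQc])
  have hB := count_blocked Y (k + 1) 2
    ((powersetCard 2 Y).filter (fun P => ∀ D ∈ G, ¬ P ⊆ D)) U
    (fun Q hQ => mem_powersetCard.1 (mem_filter.1 hQ).1)
    (fun D hD => by rw [(hPm D (mem_sdiff.1 hD).1).2]; ring)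
    (by
      intro Q hQ D hDY hDc hQD
      refine mem_sdiff.2 ⟨mem_powersetCard.2 ⟨hDY, by rw [hDc]; ring⟩, fun hDG => ?_⟩
      exact (mem_filter.1 hQ).2 D hDG hQD)
  have hU2 : U.card ≤ 2 * M.card := by
    have e1 : (k + 2 + 1).choose (k + 2) = k + 3 := Nat.choose_succ_self_right _
    rw [hYc, Nat.choose_one_right, e1] at hQ
    have h5 : 2 * K * (k + 3) ≤ n - t - (k + 2) := by omega
    have h6 : (𝒟.shadow \ G.shadow).card * (2 * K * (k + 3)) ≤ U.card * (k + 3) :=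
      (Nat.mul_le_mul_left _ h5).trans hQ
    have h7 : (𝒟.shadow \ G.shadow).card * (2 * K) ≤ U.card := by
      refine Nat.le_of_mul_le_mul_right ?_ (show 0 < k + 3 by omega)
      rw [mul_assoc]; exact h6
    have h8 : K * (𝒟.shadow \ G.shadow).card * 2 ≤ U.card := by
      calc _ = (𝒟.shadow \ G.shadow).card * (2 * K) := by ring
        _ ≤ _ := h7
    omega
  refine ⟨G, hGfull, fun D hD => ⟨(hPm D (hGP hD)).2, fun v hv => ⟨fun hvD => ?_, ?_⟩⟩, ?_⟩
  · exact (hYL v).1 ((hPm D (hGP hD)).1 hvD) hv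
  · exact (mem_filter.1 (hG𝒟 hD)).2 v hv
  · set b := ((powersetCard 2 Y).filter (fun P => ∀ D ∈ G, ¬ P ⊆ D)).card with hb
    rw [hYc, Nat.sub_sub, show 2 + (k + 1) = k + 3 by ring] at hB
    calc b * n ^ (k + 1)
        ≤ b * (2 ^ (k + 1) * (k + 1).factorial * (n - (t + 2)).choose (k + 1)) :=
          Nat.mul_le_mul_left _ hn1
      _ = 2 ^ (k + 1) * (k + 1).factorial * (b * (n - (t + 2)).choose (k + 1)) := by ring
      _ ≤ 2 ^ (k + 1) * (k + 1).factorial * (U.card * (k + 3).choose 2) :=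
          Nat.mul_le_mul_left _ hB
      _ ≤ 2 ^ (k + 1) * (k + 1).factorial * (2 * M.card * (k + 3).choose 2) :=
          Nat.mul_le_mul_left _ (Nat.mul_le_mul_right _ hU2)
      _ = _ := by ring

/-- If a graph `Γ` has at most `n² / g²` edges, then the shadow of a family of cliques of `Γ` has
`O(|Γ| n ^ (k + 1) / g)` members. -/
theorem clique_shadow {Γ F₁ : Finset (Finset (Fin n))} (h2 : ∀ P ∈ Γ, P.card = 2) (k g : ℕ)
    (hF : ∀ e ∈ F₁, e.card = k + 4) (hcl : ∀ e ∈ F₁, ∀ P ⊆ e, P.card = 2 → P ∈ Γ)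
    (hn : 0 < n) (hg : g * g * Γ.card ≤ n * n) :
    g * F₁.shadow.card ≤ 4 * Γ.card * n ^ (k + 1) := by
  have hs : ∀ e ∈ F₁.shadow, e.card = k + 3 ∧ ∀ P ⊆ e, P.card = 2 → P ∈ Γ := by
    intro e he
    obtain ⟨s, hs, a, ha, rfl⟩ := mem_shadow_iff.1 he
    exact ⟨by rw [card_erase_of_mem ha, hF s hs]; rfl,
      fun P hP hc => hcl s hs P (hP.trans (erase_subset _ _)) hc⟩
  set low := F₁.shadow.filter (fun e => ∃ x ∈ e, g * pdeg Γ x < n) with hlow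
  set high := F₁.shadow.filter (fun e => ¬ ∃ x ∈ e, g * pdeg Γ x < n) with hhigh
  have hsum : low.card + high.card = F₁.shadow.card := card_filter_add_card_filter_not _
  have h1 : g * low.card ≤ 2 * Γ.card * n ^ (k + 1) := by
    refine light_count h2 g (k + 2) (by omega) low fun e he => ?_
    obtain ⟨he1, x, hx, hxd⟩ := mem_filter.1 he
    refine ⟨(hs e he1).1, x, hx, hxd, fun y hy hyx => (hs e he1).2 _ ?_ (card_pair hyx.symm)⟩
    exact insert_subset hx (singleton_subset_iff.2 hy)
  set W := univ.filter (fun x => n ≤ g * pdeg Γ x) with hW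
  have h3 : high.card ≤ Γ.card * W.card * n ^ k := by
    have : high ⊆ ((Γ ×ˢ W) ×ˢ (powersetCard k (univ : Finset (Fin n)))).image
        (fun z => insert z.1.2 (z.1.1 ∪ z.2)) := by
      intro e he
      obtain ⟨he1, he2⟩ := mem_filter.1 he
      obtain ⟨hc, hP⟩ := hs e he1
      obtain ⟨P, hPe, hPc⟩ := exists_subset_card_eq (show 2 ≤ e.card by omega)
      have hc2 : (e \ P).card = k + 1 := by rw [card_sdiff_of_subset hPe, hc, hPc]; rfl
      obtain ⟨x, hx⟩ : (e \ P).Nonempty := card_pos.1 (by omega)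
      refine mem_image.2 ⟨((P, x), (e \ P).erase x), mem_product.2 ⟨mem_product.2
        ⟨hP P hPe hPc, mem_filter.2 ⟨mem_univ _, ?_⟩⟩, mem_powersetCard.2 ⟨subset_univ _, ?_⟩⟩, ?_⟩
      · by_contra hlt
        exact he2 ⟨x, (mem_sdiff.1 hx).1, not_le.1 hlt⟩
      · rw [card_erase_of_mem hx, hc2]; rfl
      · show insert x (P ∪ (e \ P).erase x) = e
        rw [← union_insert, insert_erase hx, union_sdiff_of_subset hPe]
    refine (card_le_card this).trans (card_image_le.trans ?_)
    rw [card_product, card_product]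
    exact Nat.mul_le_mul_left _ (card_powersetCard_le_pow k)
  have h4 := heavy_card h2 g
  have h5 : g * high.card ≤ 2 * Γ.card * n ^ (k + 1) := by
    refine Nat.le_of_mul_le_mul_right ?_ hn
    calc g * high.card * n ≤ g * (Γ.card * W.card * n ^ k) * n :=
          Nat.mul_le_mul_right _ (Nat.mul_le_mul_left _ h3)
      _ = g * Γ.card * n ^ k * (W.card * n) := by ring
      _ ≤ g * Γ.card * n ^ k * (2 * g * Γ.card) := Nat.mul_le_mul_left _ h4
      _ = 2 * Γ.card * n ^ k * (g * g * Γ.card) := by ring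
      _ ≤ 2 * Γ.card * n ^ k * (n * n) := Nat.mul_le_mul_left _ hg
      _ = _ := by ring
  rw [← hsum, mul_add]
  calc _ ≤ 2 * Γ.card * n ^ (k + 1) + 2 * Γ.card * n ^ (k + 1) := add_le_add h1 h5
    _ = _ := by ring

/-- Once `F` contains almost all sets meeting a set `L` of `t` vertices, the exact bound holds:
the edges of `F` avoiding `L` either contain a pair covered by the full part of the common link
of `L`, and then contain no linear star, or are outnumbered by the sets meeting `L` that are
missing from `F`. -/
theorem TreeData.exact [DecidableEq α] {r t m : ℕ} {E : ℕ → Finset α}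
    {H : Finset (Finset α)} {S A : Finset α} {w : α} {i₀ j₀ : ℕ}
    (h : TreeData r t m E H S A w i₀ j₀) (hr : 4 ≤ r) {p : ℕ}
    (hp : (H.filter (fun B => w ∈ B)).card = p) :
    ∃ q' n₀, ∀ n ≥ n₀, ∀ F : Finset (Finset (Fin n)), (∀ e ∈ F, e.card = r) →
      ¬ ContainsCopy F H → ∀ L : Finset (Fin n), L.card = t →
      q' * ((powersetCard r univ).filter (fun e => ¬ Disjoint e L ∧ e ∉ F)).card ≤ n ^ (r - 1) →
      F.card + (n - t).choose r ≤ n.choose r + exNum (n - t) r (linearStar r p) := by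
  obtain ⟨k, rfl⟩ : ∃ k, r = k + 4 := ⟨r - 4, by omega⟩
  set K := m * (k + 4) + t + m * (k + 4) with hK
  obtain ⟨C, n₀, hC, hlink⟩ := exists_full_link K t k
  set g := 4 * K * C with hgdef
  refine ⟨g * g * C, n₀ + 1, fun n hn F hF hfree L hL hM => ?_⟩
  obtain ⟨G, hGfull, hGF, hBM⟩ := hlink n (by omega) F L hL
  set M := (powersetCard (k + 4) univ).filter (fun e => ¬ Disjoint e L ∧ e ∉ F) with hMdef
  set Y : Finset (Fin n) := univ \ L with hY
  set Γ := (powersetCard 2 Y).filter (fun P => ∀ D ∈ G, ¬ P ⊆ D) with hΓ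
  have hYc : Y.card = n - t := by
    rw [hY, card_sdiff_of_subset (subset_univ _), hL, card_univ, Fintype.card_fin]
  have hYL : ∀ e : Finset (Fin n), e ⊆ Y ↔ Disjoint e L := fun e => by
    rw [disjoint_left]
    exact ⟨fun h x hx hxL => (mem_sdiff.1 (h hx)).2 hxL,
      fun h x hx => mem_sdiff.2 ⟨mem_univ _, h hx⟩⟩
  have hn0 : 0 < n := by omega
  have hg : g * g * Γ.card ≤ n * n := by
    have hpos : 0 < C * n ^ (k + 1) := by positivity
    refine Nat.le_of_mul_le_mul_right ?_ hpos
    calc g * g * Γ.card * (C * n ^ (k + 1)) = g * g * C * (Γ.card * n ^ (k + 1)) := by ring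
      _ ≤ g * g * C * (C * M.card) := Nat.mul_le_mul_left _ hBM
      _ = C * (g * g * C * M.card) := by ring
      _ ≤ C * n ^ (k + 4 - 1) := Nat.mul_le_mul_left _ hM
      _ = n * n * (C * n ^ (k + 1)) := by
        rw [show k + 4 - 1 = k + 1 + 2 by omega]; ring
  have hΓ2 : ∀ P ∈ Γ, P.card = 2 := fun P hP => (mem_powersetCard.1 (mem_filter.1 hP).1).2
  set F₀ := F.filter (fun e => Disjoint e L) with hF₀
  set F₁ := F₀.filter (fun e => ∀ P ⊆ e, P.card = 2 → P ∈ Γ) with hF₁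
  set F₂ := F₀.filter (fun e => ¬ ∀ P ⊆ e, P.card = 2 → P ∈ Γ) with hF₂
  set F₃ := F.filter (fun e => ¬ Disjoint e L) with hF₃
  have hc1 : F₁.card + F₂.card = F₀.card := card_filter_add_card_filter_not _
  have hc2 : F₀.card + F₃.card = F.card := card_filter_add_card_filter_not _
  have hF₀F : F₀ ⊆ F := filter_subset _ _
  have hF₁F : F₁ ⊆ F := (filter_subset _ _).trans hF₀F
  have hF₂F : F₂ ⊆ F := (filter_subset _ _).trans hF₀F
  have hb1 : F₁.card ≤ M.card := by
    have h1 : F₁.card ≤ K * F₁.shadow.card := by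
      refine card_le_of_no_full fun G' hG' hfull => ?_
      by_contra hne
      obtain ⟨f, f1, f2⟩ := h.contains_of_full hfull (nonempty_iff_ne_empty.2 hne)
        (fun e he => hF e (hF₁F (hG' he))) (by omega)
      exact hfree ⟨f, f1, fun B hB => hF₁F (hG' (f2 B hB))⟩
    have h2 := clique_shadow hΓ2 k g (fun e he => hF e (hF₁F he))
      (fun e he => (mem_filter.1 he).2) hn0 hg
    refine h1.trans ?_
    refine Nat.le_of_mul_le_mul_left ?_ (show 0 < 4 * C by omega)
    calc 4 * C * (K * F₁.shadow.card) = g * F₁.shadow.card := by rw [hgdef]; ring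
      _ ≤ 4 * Γ.card * n ^ (k + 1) := h2
      _ = 4 * (Γ.card * n ^ (k + 1)) := by ring
      _ ≤ 4 * (C * M.card) := Nat.mul_le_mul_left _ hBM
      _ = _ := by ring
  have hb2 : F₂.card ≤ exNum (n - t) (k + 4) (linearStar (k + 4) p) := by
    refine card_le_exNum_of_subset Y hYc F₂ (fun e he => hF e (hF₂F he)) ?_ ?_
    · intro e he
      exact (hYL e).2 (mem_filter.1 (mem_filter.1 he).1).2
    · refine h.no_star hr hp hGfull (fun D hD => (hGF D hD).1) L hL (fun D hD => (hGF D hD).2)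
        le_rfl hF₂F (fun e he => (mem_filter.1 (mem_filter.1 he).1).2) ?_ hfree
      intro e he
      obtain ⟨he0, hne⟩ := mem_filter.1 he
      push Not at hne
      obtain ⟨P, hPe, hP2, hPΓ⟩ := hne
      refine ⟨P, hPe, hP2, ?_⟩
      by_contra hno
      push Not at hno
      exact hPΓ (mem_filter.2 ⟨mem_powersetCard.2
        ⟨hPe.trans ((hYL e).2 (mem_filter.1 he0).2), hP2⟩, hno⟩)
  have hb3 : F₃.card + M.card + (n - t).choose (k + 4) ≤ n.choose (k + 4) := by
    have hd1 : Disjoint F₃ M :=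
      disjoint_left.2 fun e h1 h2 => (mem_filter.1 h2).2.2 (mem_filter.1 h1).1
    have hd2 : Disjoint (F₃ ∪ M) (powersetCard (k + 4) Y) := by
      refine disjoint_left.2 fun e h1 h2 => ?_
      have hdis := (hYL e).1 (mem_powersetCard.1 h2).1
      rcases mem_union.1 h1 with h1 | h1
      · exact (mem_filter.1 h1).2 hdis
      · exact (mem_filter.1 h1).2.1 hdis
    rw [← hYc, ← card_powersetCard, ← card_union_of_disjoint hd1, ← card_union_of_disjoint hd2]
    calc _ ≤ (powersetCard (k + 4) (univ : Finset (Fin n))).card := by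
          refine card_le_card (union_subset (union_subset ?_ (filter_subset _ _))
            (powersetCard_mono (subset_univ _)))
          intro e he
          exact mem_powersetCard.2 ⟨subset_univ _, hF e (mem_filter.1 he).1⟩
      _ = n.choose (k + 4) := by rw [card_powersetCard, card_univ, Fintype.card_fin]
  omega

end Exact

/-! ### Extracting the structure from the hypotheses -/

section Assembly

variable [DecidableEq α]

theorem hdeg_ne_one {H : Finset (Finset α)} {B C : Finset α} (hB : B ∈ H) (hC : C ∈ H)
    (hne : C ≠ B) {x : α} (hxB : x ∈ B) (hxC : x ∈ C) : hdeg H x ≠ 1 := by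
  have : 1 < hdeg H x :=
    one_lt_card.2 ⟨C, mem_filter.2 ⟨hC, hxC⟩, B, mem_filter.2 ⟨hB, hxB⟩, hne⟩
  omega

theorem card_hdeg_ne_one {r : ℕ} (hr : 4 ≤ r) {H : Finset (Finset α)} (hred : Reducible (r - 2) H)
    {B : Finset α} (hB : B ∈ H) (hc : B.card = r) :
    (B.filter (fun x => hdeg H x ≠ 1)).card ≤ 2 := by
  have h1 := hred B hB
  have h2 := card_filter_add_card_filter_not (s := B) (fun x => hdeg H x = 1)
  have h3 : (B.filter (fun x => hdeg H x ≠ 1)).card =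
      (B.filter (fun x => ¬ hdeg H x = 1)).card := by congr
  omega

/-- Edges through `w` and edges avoiding `w` meet only in vertices that the first edge `E i₀`
through `w` shares with earlier edges. Descend to the parent of the later of the two edges: the
parent of an edge avoiding `w` avoids `w` too, since it contains the cross-cut vertex of that
edge, which appears before `w` does. -/
theorem attach_aux {m : ℕ} {E : ℕ → Finset α} (hT : TreeOrd m E) {S : Finset α} {w : α} {i₀ : ℕ}
    (huniq : ∀ i < m, ∀ x ∈ E i, x ∈ S → ∀ y ∈ E i, y ∈ S → x = y)
    (hex : ∀ i < m, ∃ x ∈ E i, x ∈ S) (hw : w ∈ S)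
    (hwi : w ∈ E i₀) (hmin : ∀ i < i₀, w ∉ E i) (hlast : ∀ v ∈ S, ∃ j ≤ i₀, v ∈ E j) :
    ∀ N k l, k + l = N → k < m → l < m → w ∉ E k → w ∈ E l → ∀ x ∈ E k, x ∈ E l →
      x ∈ E i₀ ∩ (range i₀).biUnion E := by
  intro N
  induction N using Nat.strong_induction_on with
  | _ N ih =>
    intro k l hN hk hl hwk hwl x hxk hxl
    have hl₀ : i₀ ≤ l := by
      by_contra hlt
      exact hmin l (not_le.1 hlt) hwl
    rcases lt_trichotomy k l with hkl | rfl | hlk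
    · rcases hl₀.eq_or_lt with rfl | hlt
      · exact mem_inter.2 ⟨hxl, mem_biUnion.2 ⟨k, mem_range.2 hkl, hxk⟩⟩
      · obtain ⟨q, hq, hpar⟩ := hT l (by omega) hl
        exact ih (k + q) (by omega) k q rfl hk (by omega) hwk
          (hpar i₀ hlt (mem_inter.2 ⟨hwl, hwi⟩)) x hxk (hpar k hkl (mem_inter.2 ⟨hxl, hxk⟩))
    · exact absurd hwl hwk
    · obtain ⟨q, hq, hpar⟩ := hT k (by omega) hk
      obtain ⟨s, hsk, hsS⟩ := hex k hk
      obtain ⟨j, hj, hsj⟩ := hlast s hsS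
      have hsq : s ∈ E q := hpar j (by omega) (mem_inter.2 ⟨hsk, hsj⟩)
      have hwq : w ∉ E q := fun hwq =>
        hwk (huniq q (by omega) s hsq hsS w hwq hw ▸ hsk)
      exact ih (q + l) (by omega) q l rfl (by omega) hl hwq hwl x
        (hpar l hlk (mem_inter.2 ⟨hxk, hxl⟩)) hxl

/-- The hypotheses of the theorem provide `TreeData` if `t > 0`: `E i₀` is the first edge containing
`w`, `E j₀` is its parent, and `A` consists of the vertices of `E i₀` lying in earlier edges. -/
theorem exists_treeData {r t m : ℕ} (hr : 4 ≤ r) (ht : 0 < t) {E : ℕ → Finset α}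
    (hT : TreeOrd m E) (hcard : ∀ i < m, (E i).card = r) {H : Finset (Finset α)}
    (hH : H = (range m).image E) (hred : Reducible (r - 2) H) {S : Finset α}
    (hS : IsCrossCut H S) (hScard : S.card = t + 1) {w : α} (hwS : w ∈ S)
    (hwlast : ∀ v ∈ S, ∀ i < m, w ∈ E i → ∃ j ≤ i, v ∈ E j) (hcov : ∃ i < m, w ∈ E i)
    (hstar : ∀ B ∈ H, ∀ C ∈ H, w ∈ B → w ∈ C → B ≠ C → B ∩ C = {w}) :
    ∃ A i₀ j₀, TreeData r t m E H S A w i₀ j₀ := by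
  have hmem : ∀ i < m, E i ∈ H := fun i hi => by
    rw [hH]; exact mem_image_of_mem _ (mem_range.2 hi)
  have hidx : ∀ B ∈ H, ∃ i < m, E i = B := by
    intro B hB
    rw [hH] at hB
    obtain ⟨i, hi, rfl⟩ := mem_image.1 hB
    exact ⟨i, mem_range.1 hi, rfl⟩
  obtain ⟨i₀, ⟨hi₀, hwi⟩, hmin'⟩ : ∃ i₀, (i₀ < m ∧ w ∈ E i₀) ∧ ∀ i < i₀, ¬ (i < m ∧ w ∈ E i) :=
    ⟨Nat.find hcov, Nat.find_spec hcov, fun i hi => Nat.find_min hcov hi⟩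
  have hmin : ∀ i < i₀, w ∉ E i := fun i hi hw => hmin' i hi ⟨by omega, hw⟩
  have hpos : 0 < i₀ := by
    by_contra h0
    have h0 : i₀ = 0 := by omega
    subst h0
    have hsub : S ⊆ E 0 ∩ S := by
      intro v hv
      obtain ⟨j, hj, hvj⟩ := hwlast v hv 0 hi₀ hwi
      have : j = 0 := by omega
      exact mem_inter.2 ⟨this ▸ hvj, hv⟩
    have := card_le_card hsub
    rw [hS _ (hmem 0 hi₀), hScard] at this
    omega
  obtain ⟨j₀, hj₀, hpar⟩ := hT i₀ hpos hi₀
  have hwj : w ∉ E j₀ := hmin j₀ hj₀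
  set A := E i₀ ∩ (range i₀).biUnion E with hA
  have hAi : A ⊆ E i₀ := inter_subset_left
  have hAj : A ⊆ E j₀ := by
    intro x hx
    obtain ⟨h1, h2⟩ := mem_inter.1 hx
    obtain ⟨l, hl, hxl⟩ := mem_biUnion.1 h2
    exact hpar l (mem_range.1 hl) (mem_inter.2 ⟨h1, hxl⟩)
  have hne : E j₀ ≠ E i₀ := fun e => hwj (e ▸ hwi)
  have hAdeg : A ⊆ (E i₀).filter (fun x => hdeg H x ≠ 1) := fun x hx =>
    mem_filter.2 ⟨hAi hx, hdeg_ne_one (hmem i₀ hi₀) (hmem j₀ (by omega)) hne (hAi hx) (hAj hx)⟩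
  have hdeg2 := card_hdeg_ne_one hr hred (hmem i₀ hi₀) (hcard i₀ hi₀)
  refine ⟨A, i₀, j₀, hT, hcard, hH, hS, hScard, hwS, hi₀, by omega, hwi, hwj, hAi, hAj,
    (card_le_card hAdeg).trans hdeg2, ?_, ?_, hstar, ?_⟩
  · intro hdw
    have h1 : insert w A ⊆ (E i₀).filter (fun x => hdeg H x ≠ 1) :=
      insert_subset (mem_filter.2 ⟨hwi, by omega⟩) hAdeg
    have h2 := (card_le_card h1).trans hdeg2
    rw [card_insert_of_notMem (fun hw => hwj (hAj hw))] at h2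
    omega
  · intro B hB C hC hwB hwC x hx
    obtain ⟨l, hl, rfl⟩ := hidx B hB
    obtain ⟨k, hk, rfl⟩ := hidx C hC
    obtain ⟨hx1, hx2⟩ := mem_inter.1 hx
    refine attach_aux hT (S := S)
      (fun i hi x hx hxS y hy hyS => crosscut_unique hS (hmem i hi) hx hxS hy hyS) (fun i hi => ?_)
      hwS hwi hmin (fun v hv => hwlast v hv i₀ hi₀ hwi) (k + l) k l rfl hk hl hwC hwB x hx2 hx1
    have : (E i ∩ S).Nonempty := card_pos.1 (by rw [hS _ (hmem i hi)]; exact one_pos)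
    obtain ⟨y, hy⟩ := this
    exact ⟨y, (mem_inter.1 hy).1, (mem_inter.1 hy).2⟩
  · have : ∀ B, B ∈ H → ∃ Z, B.filter (fun x => hdeg H x ≠ 1) ⊆ Z ∧ Z ⊆ B ∧ Z.card = 2 := by
      intro B hB
      obtain ⟨i, hi, rfl⟩ := hidx B hB
      exact exists_subsuperset_card_eq (filter_subset _ _)
        (card_hdeg_ne_one hr hred hB (hcard i hi)) (by rw [hcard i hi]; omega)
    choose! Cr h1 h2 h3 using this
    exact ⟨Cr, fun B hB => ⟨h2 B hB, h3 B hB, fun x hx C hC hCB hxC =>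
      h1 B hB (mem_filter.2 ⟨hx, hdeg_ne_one hB hC hCB hx hxC⟩)⟩⟩

/-- A family of sets forming a linear star is contained in every family containing the standard
linear star of the same size. -/
theorem containsCopy_of_linearStar [DecidableEq β] {r p : ℕ} (hr : 4 ≤ r) {H : Finset (Finset α)}
    {w : α} (hw : ∀ B ∈ H, w ∈ B) (hstar : ∀ B ∈ H, ∀ C ∈ H, B ≠ C → B ∩ C = {w})
    (hc : ∀ B ∈ H, B.card = r) (hp : H.card = p) (hne : H.Nonempty) {F : Finset (Finset β)}
    (hF : ContainsCopy F (linearStar r p)) : ContainsCopy F H := by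
  obtain ⟨Pt, hPt, κ, h1, h2, h3, h4⟩ := exists_star_of_containsCopy hr hF
  obtain ⟨E₀, hE₀⟩ := hne
  obtain ⟨e₀, he₀⟩ : Pt.Nonempty := card_pos.1 (by rw [h1, ← hp]; exact card_pos.2 ⟨_, hE₀⟩)
  obtain ⟨f, -, f2, f3⟩ := star_embed hw hstar hc h2 h4 h3 (by rw [hp, h1]) hE₀ he₀ {w}
    (by simpa using hw _ hE₀) (by simp) (fun _ => κ) (by simp) (by simpa using h2 _ he₀) rfl
  exact ⟨f, by rw [sup_eq_biUnion]; exact f2, fun B hB => hPt (f3 B hB)⟩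

end Assembly

/-- Sharper result on multi-expansions of `2`-trees. If `H` is an `(r-2)`-reducible
`r`-tree with `σ(H) = t+1`, `S` a minimum cross-cut, `w` the last vertex of `S` to be
included in a tree-defining ordering of `H`, and the subgraph `H_w` of edges containing
`w` is a linear star `L^r_p`, then for large `n`,
`ex(n,H) ≤ C(n,r) - C(n-t,r) + ex(n-t, L^r_p)`. -/
theorem two_tree_expansion {α : Type*} [DecidableEq α]
    (r t p m : ℕ) (hr : 4 ≤ r)
    (E : Fin m → Finset α) (hord : IsTreeOrder E) (hcard : ∀ i, (E i).card = r)
    (H : Finset (Finset α)) (hHdef : H = Finset.image E Finset.univ)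
    (hred : Reducible (r - 2) H)
    (hσ : crossCutNum H = t + 1)
    (S : Finset α) (hS : IsCrossCut H S) (hScard : S.card = t + 1)
    (w : α) (hwS : w ∈ S)
    (hwlast : ∀ v ∈ S, ∀ i : Fin m, w ∈ E i → ∃ j : Fin m, j ≤ i ∧ v ∈ E j)
    (hp : (H.filter (fun A => w ∈ A)).card = p)
    (hstar : ∀ A ∈ H.filter (fun A => w ∈ A), ∀ B ∈ H.filter (fun A => w ∈ A),
      A ≠ B → A ∩ B = {w}) :
    ∃ n₁ : ℕ, 0 < n₁ ∧ ∀ n, n₁ ≤ n →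
      exNum n r H ≤
        Nat.choose n r - Nat.choose (n - t) r + exNum (n - t) r (linearStar r p) := by
  obtain ⟨E', hE'⟩ : ∃ E' : ℕ → Finset α, ∀ i : Fin m, E' i = E i :=
    ⟨fun i => if h : i < m then E ⟨i, h⟩ else ∅, fun i => by simp⟩
  have hT : TreeOrd m E' := by
    intro i hi him
    obtain ⟨j, hj, hpar⟩ := hord ⟨i, him⟩ hi
    refine ⟨j, hj, fun l hl x hx => ?_⟩
    have hlm : l < m := hl.trans him
    obtain ⟨hx1, hx2⟩ := mem_inter.1 hx
    rw [hE' j]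
    rw [show E' i = E ⟨i, him⟩ from hE' ⟨i, him⟩] at hx1
    rw [show E' l = E ⟨l, hlm⟩ from hE' ⟨l, hlm⟩] at hx2
    exact hpar (mem_inter.2 ⟨hx1, Finset.mem_sup.2 ⟨⟨l, hlm⟩, mem_Iio.2 hl, hx2⟩⟩)
  have hcard' : ∀ i < m, (E' i).card = r := fun i hi => by
    rw [show E' i = E ⟨i, hi⟩ from hE' ⟨i, hi⟩]; exact hcard _
  have hH : H = (range m).image E' := by
    rw [hHdef]
    ext B
    simp only [mem_image, mem_univ, true_and, mem_range]
    constructor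
    · rintro ⟨i, rfl⟩; exact ⟨i, i.2, hE' i⟩
    · rintro ⟨i, hi, rfl⟩; exact ⟨⟨i, hi⟩, (hE' ⟨i, hi⟩).symm⟩
  have hwlast' : ∀ v ∈ S, ∀ i < m, w ∈ E' i → ∃ j ≤ i, v ∈ E' j := by
    intro v hv i hi hwi
    rw [show E' i = E ⟨i, hi⟩ from hE' ⟨i, hi⟩] at hwi
    obtain ⟨j, hj, hvj⟩ := hwlast v hv ⟨i, hi⟩ hwi
    exact ⟨j, hj, by rw [hE' j]; exact hvj⟩
  have hcov : ∃ i < m, w ∈ E' i := by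
    -- otherwise `w` could be removed from the minimum cross-cut `S`
    by_contra hno
    push Not at hno
    have hS' : IsCrossCut H (S.erase w) := by
      intro B hB
      have hwB : w ∉ B := by
        rw [hH] at hB
        obtain ⟨i, hi, rfl⟩ := mem_image.1 hB
        exact hno i (mem_range.1 hi)
      rw [inter_erase, erase_eq_of_notMem (fun h => hwB (mem_inter.1 h).1)]
      exact hS B hB
    have : crossCutNum H ≤ t :=
      Nat.sInf_le ⟨S.erase w, hS', by rw [card_erase_of_mem hwS, hScard]; rfl⟩
    omega
  have hstar' : ∀ B ∈ H, ∀ C ∈ H, w ∈ B → w ∈ C → B ≠ C → B ∩ C = {w} :=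
    fun B hB C hC hwB hwC => hstar B (mem_filter.2 ⟨hB, hwB⟩) C (mem_filter.2 ⟨hC, hwC⟩)
  rcases Nat.eq_zero_or_pos t with rfl | ht
  · -- here `S = {w}`, so `H` itself is the linear star
    have hw : ∀ B ∈ H, w ∈ B := by
      intro B hB
      obtain ⟨x, hx⟩ : (B ∩ S).Nonempty := card_pos.1 (by rw [hS B hB]; exact one_pos)
      obtain ⟨hxB, hxS⟩ := mem_inter.1 hx
      exact card_le_one.1 hScard.le x hxS w hwS ▸ hxB
    have hcH : ∀ B ∈ H, B.card = r := by
      intro B hB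
      rw [hH] at hB
      obtain ⟨i, hi, rfl⟩ := mem_image.1 hB
      exact hcard' i (mem_range.1 hi)
    have hne : H.Nonempty := by
      obtain ⟨i, hi, -⟩ := hcov
      exact ⟨E' i, hH ▸ mem_image_of_mem _ (mem_range.2 hi)⟩
    rw [filter_true_of_mem hw] at hp
    refine ⟨1, one_pos, fun n _ => exNum_le fun F hF hfree => ?_⟩
    refine le_trans ?_ (Nat.le_add_left _ _)
    exact le_exNum hF fun hcopy => hfree (containsCopy_of_linearStar hr hw
      (fun B hB C hC => hstar' B hB C hC (hw B hB) (hw C hC)) hcH hp hne hcopy)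
  · obtain ⟨A, i₀, j₀, h⟩ := exists_treeData hr ht hT hcard' hH hred hS hScard hwS hwlast' hcov
      hstar'
    obtain ⟨q', n₂, hexact⟩ := h.exact hr hp
    obtain ⟨n₃, hstab⟩ := h.stability hr q'
    refine ⟨max n₂ n₃ + 1, Nat.succ_pos _, fun n hn => exNum_le fun F hF hfree => ?_⟩
    have hn2 : n₂ ≤ n := by omega
    have hn3 : n₃ ≤ n := by omega
    by_cases hbig : n.choose r ≤ F.card + (n - t).choose r
    · obtain ⟨L, hL, hM⟩ := hstab n hn3 F hF hfree hbig
      have := hexact n hn2 F hF hfree L hL hM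
      omega
    · omega


end
end

section
/- Every r-tree H is contained in a tight r-tree G with V(G) = V(H). Furthermore, a starting edge of H can be used as a starting edge of G (i.e., G has a tree-defining ordering whose first edge is the first edge of a given tree-defining ordering of H). -/
/-!
The tight tree is grown along the given ordering. Call an edge set *tightly grown* from `S`
(`TightGrown`) if it arises from `{S}` by repeatedly taking a present edge `F`, deleting a vertex
`c ∈ F` and adding a brand-new vertex `b`. Listing the edges in order of creation gives a tight
tree-defining ordering that starts at `S` (`TightGrown.exists_order`).

Suppose the edges before `E i` lie in a tightly grown `G` spanning exactly their union, and let
`F ∈ G` be the parent of `E i`. As `E i` meets the union only inside `F`, the vertices of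
`E i \ F` are new to `G`; exchanging the vertices of `F \ E i` for them, one at a time, is a
sequence of growth steps that ends in `E i` and adds no vertex outside `E i`
(`TightGrown.extend`). Iterating over `i` gives the theorem.
-/

open Finset
open scoped Classical

noncomputable section

variable {α β : Type*}

/-- `TightGrown S G`: the edge set `G` arises from the single edge `S` by successively adding
edges `(F \ {c}) ∪ {b}`, where `F` is a present edge, `c ∈ F`, and `b` lies in no present edge. -/
inductive TightGrown {α : Type*} [DecidableEq α] (S : Finset α) : Finset (Finset α) → Prop
  | single : TightGrown S {S}
  | grow {G : Finset (Finset α)} {F : Finset α} {b c : α} (hG : TightGrown S G) (hF : F ∈ G)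
      (hb : ∀ e ∈ G, b ∉ e) (hc : c ∈ F) : TightGrown S (insert (insert b (F.erase c)) G)

theorem TightGrown.card_eq {α : Type*} [DecidableEq α] {S : Finset α} {G : Finset (Finset α)}
    (h : TightGrown S G) : ∀ e ∈ G, e.card = S.card := by
  induction h with
  | single => simp
  | @grow G F b c hG hF hb hc ih =>
    intro e he
    rcases Finset.mem_insert.1 he with rfl | he
    · rw [Finset.card_insert_of_notMem (fun h => hb F hF (Finset.mem_of_mem_erase h)),
        Finset.card_erase_add_one hc, ih F hF]
    · exact ih e he

/-- The order of creation is a tight tree-defining ordering of a tightly grown edge set. -/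
theorem TightGrown.exists_order {α : Type*} [DecidableEq α] {S : Finset α}
    {G : Finset (Finset α)} (h : TightGrown S G) :
    ∃ (n : ℕ) (E' : Fin (n + 1) → Finset α), IsTightTreeOrder S.card E' ∧ E' 0 = S ∧
      Finset.image E' Finset.univ = G := by
  induction h with
  | single =>
    refine ⟨0, fun _ => S, ?_, rfl, by simp⟩
    intro i hi
    omega
  | @grow G F b c hG hF hb hc ih =>
    obtain ⟨n, E', hT, h0, rfl⟩ := ih
    refine ⟨n + 1, Fin.snoc E' (insert b (F.erase c)), ?_, ?_, ?_⟩
    · intro i hi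
      refine Fin.lastCases (fun _ => ?_) (fun i hi => ?_) i hi
      · obtain ⟨j, -, hj⟩ := Finset.mem_image.1 hF
        refine ⟨j.castSucc, Fin.castSucc_lt_last j, ?_, ?_⟩
        · intro v hv
          simp only [Fin.snoc_last, Fin.snoc_castSucc, Finset.mem_inter, Finset.mem_insert,
            Finset.mem_erase, Finset.mem_sup, Finset.mem_Iio] at hv ⊢
          obtain ⟨rfl | hv, k, hk, hvk⟩ := hv
          · induction k using Fin.lastCases with
            | last => exact absurd hk (lt_irrefl _)
            | cast k =>
              rw [Fin.snoc_castSucc] at hvk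
              exact absurd hvk (hb _ (Finset.mem_image_of_mem _ (Finset.mem_univ k)))
          · rw [hj]; exact hv.2
        · have hbF := hb F hF
          have : insert b (F.erase c) ∩ F = F.erase c := by
            ext v
            simp only [Finset.mem_inter, Finset.mem_insert, Finset.mem_erase]
            constructor
            · rintro ⟨rfl | h, h'⟩
              · exact absurd h' hbF
              · exact h
            · exact fun h => ⟨Or.inr h, h.2⟩
          rw [Fin.snoc_last, Fin.snoc_castSucc, hj, this, Finset.card_erase_of_mem hc,
            hG.card_eq F hF]
      · obtain ⟨j, hji, hsub, hcard⟩ := hT i hi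
        refine ⟨j.castSucc, Fin.castSucc_lt_castSucc_iff.2 hji, ?_, ?_⟩
        · intro v hv
          simp only [Fin.snoc_castSucc, Finset.mem_inter, Finset.mem_sup, Finset.mem_Iio] at hv ⊢
          obtain ⟨hvi, k, hk, hvk⟩ := hv
          induction k using Fin.lastCases with
          | last => exact absurd (hk.trans (Fin.castSucc_lt_last i)) (lt_irrefl _)
          | cast k =>
            rw [Fin.snoc_castSucc] at hvk
            exact hsub (Finset.mem_inter.2 ⟨hvi, Finset.mem_sup.2
              ⟨k, Finset.mem_Iio.2 (Fin.castSucc_lt_castSucc_iff.1 hk), hvk⟩⟩)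
        · simpa only [Fin.snoc_castSucc] using hcard
    · rw [← h0, ← Fin.castSucc_zero, Fin.snoc_castSucc]
    · ext e
      simp only [Finset.mem_image, Finset.mem_univ, true_and, Finset.mem_insert,
        Fin.exists_fin_succ', Fin.snoc_castSucc, Fin.snoc_last]
      tauto

/-- Exchange argument: an edge `A` whose old vertices all lie in one present edge `F` can be
reached from `F` by growth steps that add exactly the vertices of `A \ F`. -/
theorem TightGrown.extend {α : Type*} [DecidableEq α] {S A : Finset α} (hA : A.card = S.card) :
    ∀ (k : ℕ) (G : Finset (Finset α)) (F : Finset α), TightGrown S G → F ∈ G →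
      (A \ F).card = k → (∀ v ∈ A, v ∈ G.sup id → v ∈ F) →
      ∃ G', TightGrown S G' ∧ G ⊆ G' ∧ A ∈ G' ∧ G'.sup id = G.sup id ∪ A := by
  intro k
  induction k with
  | zero =>
    intro G F hG hF hk _
    have hsub : A ⊆ F := Finset.sdiff_eq_empty_iff_subset.1 (Finset.card_eq_zero.1 hk)
    obtain rfl : A = F := Finset.eq_of_subset_of_card_le hsub (by rw [hA, hG.card_eq F hF])
    exact ⟨G, hG, subset_rfl, hF, (Finset.union_eq_left.2 (Finset.le_sup (f := id) hF)).symm⟩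
  | succ k ih =>
    intro G F hG hF hk hold
    have hFcard : A.card = F.card := by rw [hA, hG.card_eq F hF]
    obtain ⟨b, hb⟩ : (A \ F).Nonempty := Finset.card_pos.1 (by omega)
    obtain ⟨c, hc⟩ : (F \ A).Nonempty :=
      Finset.card_pos.1 (by rw [← Finset.card_sdiff_comm hFcard]; omega)
    rw [Finset.mem_sdiff] at hb hc
    have hbG : b ∉ G.sup id := fun h => hb.2 (hold b hb.1 h)
    have hbG' : ∀ e ∈ G, b ∉ e := fun e he hbe => hbG (Finset.mem_sup.2 ⟨e, he, hbe⟩)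
    have hsup : (insert (insert b (F.erase c)) G).sup id = insert b (G.sup id) := by
      have hFG : F ⊆ G.sup id := Finset.le_sup (f := id) hF
      ext v
      simp only [Finset.sup_insert, id, Finset.sup_eq_union, Finset.mem_union, Finset.mem_insert,
        Finset.mem_erase]
      have := @hFG v
      tauto
    have hdiff : A \ insert b (F.erase c) = (A \ F).erase b := by
      ext v
      simp only [Finset.mem_sdiff, Finset.mem_insert, Finset.mem_erase]
      have : v ∈ A → v ≠ c := fun h h' => hc.2 (h' ▸ h)
      tauto
    obtain ⟨G', hG', hsub, hAG', hs⟩ := ih _ (insert b (F.erase c))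
      (hG.grow hF hbG' hc.1) (Finset.mem_insert_self _ _)
      (by rw [hdiff, Finset.card_erase_of_mem (Finset.mem_sdiff.2 hb), hk]; rfl)
      (by
        intro v hvA hv
        rw [hsup, Finset.mem_insert] at hv
        rcases hv with rfl | hv
        · exact Finset.mem_insert_self _ _
        · exact Finset.mem_insert_of_mem
            (Finset.mem_erase.2 ⟨fun h => hc.2 (h ▸ hvA), hold v hvA hv⟩))
    refine ⟨G', hG', (Finset.subset_insert _ _).trans hsub, hAG', ?_⟩
    rw [hs, hsup, Finset.insert_union, Finset.insert_eq_of_mem (Finset.mem_union_right _ hb.1)]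

/-- The first `k + 1` edges of a tree-defining ordering lie in a set that is tightly grown from
the first edge and has the same vertices. -/
theorem TightGrown.exists_initial_segment {α : Type*} [DecidableEq α] {r m : ℕ} (hm : 0 < m)
    {E : Fin m → Finset α} (hord : IsTreeOrder E) (hcard : ∀ i, (E i).card = r) (k : ℕ)
    (hk : k < m) : ∃ G, TightGrown (E ⟨0, hm⟩) G ∧ (∀ i : Fin m, i.1 ≤ k → E i ∈ G) ∧
      G.sup id = (Finset.Iic (⟨k, hk⟩ : Fin m)).sup E := by
  induction k with
  | zero =>
    have h0 : ∀ i : Fin m, i.1 ≤ 0 → i = ⟨0, hm⟩ := fun i hi => Fin.ext (by simpa using hi)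
    refine ⟨_, .single, fun i hi => by simp [h0 i hi], ?_⟩
    have : Finset.Iic (⟨0, hm⟩ : Fin m) = {⟨0, hm⟩} := by
      ext i
      simp only [Finset.mem_Iic, Finset.mem_singleton]
      exact ⟨fun h => h0 i h, fun h => h.le⟩
    rw [this]
    simp
  | succ k ih =>
    obtain ⟨G, hG, hmem, hsup⟩ := ih (by omega)
    obtain ⟨j, hj, hsub⟩ := hord ⟨k + 1, hk⟩ (Nat.succ_pos k)
    have hIio : Finset.Iio (⟨k + 1, hk⟩ : Fin m) = Finset.Iic ⟨k, by omega⟩ := by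
      ext i
      simp only [Finset.mem_Iio, Finset.mem_Iic, Fin.lt_def, Fin.le_def]
      omega
    rw [hIio, ← hsup] at hsub
    obtain ⟨G', hG', hGG', hE, hs⟩ := TightGrown.extend (S := E ⟨0, hm⟩)
      (A := E ⟨k + 1, hk⟩) (by rw [hcard, hcard]) _ G (E j) hG
      (hmem j (Nat.lt_succ_iff.1 hj)) rfl (fun v hv hv' => hsub (Finset.mem_inter.2 ⟨hv, hv'⟩))
    refine ⟨G', hG', fun i hi => ?_, ?_⟩
    · rcases Nat.lt_or_eq_of_le hi with hi | hi
      · exact hGG' (hmem i (Nat.lt_succ_iff.1 hi))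
      · obtain rfl : i = ⟨k + 1, hk⟩ := Fin.ext hi
        exact hE
    · rw [hs, hsup, ← hIio, ← Finset.Iio_insert, Finset.sup_insert, Finset.sup_eq_union,
        Finset.union_comm]

/-- Every `r`-tree is contained in a tight `r`-tree on the same vertex set, and a
starting edge of the tree can be used as starting edge of the tight tree. -/
theorem rTree_subset_tight_rTree {α : Type*} [DecidableEq α]
    (r m : ℕ) (hm : 0 < m)
    (E : Fin m → Finset α) (hord : IsTreeOrder E) (hcard : ∀ i, (E i).card = r) :
    ∃ (m' : ℕ) (hm' : 0 < m') (E' : Fin m' → Finset α),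
      IsTightTreeOrder r E' ∧ (∀ i, (E' i).card = r) ∧
      E' ⟨0, hm'⟩ = E ⟨0, hm⟩ ∧
      Finset.image E Finset.univ ⊆ Finset.image E' Finset.univ ∧
      (Finset.image E' Finset.univ).sup id = (Finset.image E Finset.univ).sup id := by
  obtain ⟨G, hG, hmem, hsup⟩ := TightGrown.exists_initial_segment hm hord hcard (m - 1) (by omega)
  obtain ⟨n, E', hT, h0, rfl⟩ := hG.exists_order
  rw [hcard] at hT
  refine ⟨n + 1, n.succ_pos, E', hT, fun i => ?_, h0, ?_, ?_⟩
  · rw [hG.card_eq _ (Finset.mem_image_of_mem _ (Finset.mem_univ i)), hcard]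
  · intro e he
    obtain ⟨i, -, rfl⟩ := Finset.mem_image.1 he
    exact hmem i (by omega)
  · have huniv : Finset.Iic (⟨m - 1, by omega⟩ : Fin m) = Finset.univ := by
      ext i
      simp only [Finset.mem_Iic, Finset.mem_univ, iff_true, Fin.le_def]
      omega
    rw [hsup, huniv, Finset.sup_image]
    rfl

end
end

section
/- Let H be an r-tree, where r ≥ 2, with starting edge E_1 (the first edge in a tree-defining ordering of H). Let F be an r-graph with δ_{r−1}(F) ≥ |V(H)| − r + 1. Then any injective mapping f: E_1 → V(F) with f(E_1) ∈ F can be extended to an embedding of H in F (an injection g: V(H) → V(F) extending f with g(E) ∈ F for every edge E of H). -/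
/-!
The edges of the tree are embedded one at a time along the tree-defining ordering. Suppose the
union `U` of the earlier edges has been embedded by `g`, with image `W`. The next edge `Eᵢ` meets
`U` in a set contained in an earlier edge `Eⱼ`, whose image is an edge of `F` containing
`S = g(Eᵢ ∩ U)`. It suffices to find an edge `B` of `F` with `B ∩ W = S`: the new vertices of `Eᵢ`
are then mapped bijectively onto `B \ W`.

Such an edge is found by exchanging vertices (`exists_edge_inter_eq`). As long as an edge
`B ⊇ S` has a further vertex `x ∈ W \ S`, the `(r-1)`-set `D = B \ {x}` lies in more edges of `F`
than there are vertices in `W \ D`, so `x` may be replaced by a vertex outside `W`.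
The extension of the map is `exists_extend_step`.
-/

open Finset
open scoped Classical

noncomputable section

variable {α β : Type*}

/-- Vertex exchange: an edge `B ⊇ S` of `F` can be moved off `W`, keeping exactly `S` fixed, as
long as `W` together with the `r - |S|` new vertices has at most `n` elements, where `n - r + 1` is
the lower bound on the positive `(r-1)`-degrees of `F`. -/
lemma exists_edge_inter_eq {β : Type*} [DecidableEq β] {r n : ℕ} (hr : 1 ≤ r)
    {F : Finset (Finset β)} (hF : ∀ A ∈ F, A.card = r)
    (hδ : ∀ D : Finset β, D.card = r - 1 → (∃ A ∈ F, D ⊆ A) →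
      n - r + 1 ≤ (F.filter (fun A => D ⊆ A)).card)
    {S W : Finset β} (hSW : S ⊆ W) (hn : W.card + r ≤ n + S.card)
    (k : ℕ) : ∀ B ∈ F, S ⊆ B → ((B ∩ W) \ S).card = k → ∃ B' ∈ F, B' ∩ W = S := by
  induction k with
  | zero =>
    intro B hB hSB hk
    refine ⟨B, hB, Finset.Subset.antisymm ?_ (Finset.subset_inter hSB hSW)⟩
    rwa [Finset.card_eq_zero, Finset.sdiff_eq_empty_iff_subset] at hk
  | succ k ih =>
    intro B hB hSB hk
    obtain ⟨x, hx⟩ : ((B ∩ W) \ S).Nonempty := by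
      rw [← Finset.card_pos]; omega
    simp only [Finset.mem_sdiff, Finset.mem_inter] at hx
    obtain ⟨⟨hxB, hxW⟩, hxS⟩ := hx
    have hBr := hF B hB
    have hDcard : (B.erase x).card = r - 1 := by rw [Finset.card_erase_of_mem hxB, hBr]
    have hdeg := hδ (B.erase x) hDcard ⟨B, hB, Finset.erase_subset _ _⟩
    -- `B` still has at most `r - |S| - 1` vertices outside `W`, which bounds `|W \ D|`.
    have hWD : (W \ B.erase x).card ≤ n - r := by
      have h1 : (W \ B.erase x).card + (r - 1) = (W ∪ B).card := by
        rw [← hDcard, Finset.card_sdiff_add_card]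
        congr 1
        ext y
        by_cases hy : y = x
        · simp [hy, hxW]
        · simp [hy]
      have h2 := Finset.card_union_add_card_inter W B
      have h3 : S.card + 1 ≤ (W ∩ B).card := by
        rw [← Finset.card_insert_of_notMem hxS]
        apply Finset.card_le_card
        intro y hy
        rcases Finset.mem_insert.1 hy with rfl | hy
        · exact Finset.mem_inter.2 ⟨hxW, hxB⟩
        · exact Finset.mem_inter.2 ⟨hSW hy, hSB hy⟩
      omega
    -- Every edge containing `D` is `D ∪ {y}`; those with `y ∈ W` are at most `|W \ D|` many.
    obtain ⟨A, hA, hAn⟩ : ∃ A ∈ F.filter (fun A => B.erase x ⊆ A),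
        A ∉ (W \ B.erase x).image (fun y => insert y (B.erase x)) := by
      by_contra! hcon
      have := (Finset.card_le_card hcon).trans Finset.card_image_le
      omega
    obtain ⟨hAF, hDA⟩ := Finset.mem_filter.1 hA
    obtain ⟨y, hyD, hyA⟩ : ∃ y, y ∉ B.erase x ∧ insert y (B.erase x) = A := by
      have h1 : (A \ B.erase x).card = 1 := by
        rw [Finset.card_sdiff_of_subset hDA, hF A hAF, hDcard]; omega
      obtain ⟨y, hy⟩ := Finset.card_eq_one.1 h1
      have hy' : y ∈ A \ B.erase x := by simp [hy]
      refine ⟨y, (Finset.mem_sdiff.1 hy').2, ?_⟩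
      rw [← Finset.sdiff_union_of_subset hDA, hy]
      rfl
    have hyW : y ∉ W := fun h =>
      hAn (Finset.mem_image.2 ⟨y, Finset.mem_sdiff.2 ⟨h, hyD⟩, hyA⟩)
    refine ih A hAF ?_ ?_
    · intro z hz
      exact hDA (Finset.mem_erase.2 ⟨fun h => hxS (h ▸ hz), hSB hz⟩)
    · have : (A ∩ W) \ S = ((B ∩ W) \ S).erase x := by
        rw [← hyA]
        ext z
        by_cases hz : z = y
        · subst hz; simp [hyW]
        · simp [hz, and_assoc]
      rw [this, Finset.card_erase_of_mem (by simp [hxB, hxW, hxS]), hk]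
      rfl

/-- One step of the embedding: an injection on `U` extends over an edge `C` whose intersection
with `U` lies in a set `P` that is already mapped onto an edge of `F`. -/
lemma exists_extend_step {α β : Type*} [DecidableEq α] [DecidableEq β] {r n : ℕ} (hr : 1 ≤ r)
    {F : Finset (Finset β)} (hF : ∀ A ∈ F, A.card = r)
    (hδ : ∀ D : Finset β, D.card = r - 1 → (∃ A ∈ F, D ⊆ A) →
      n - r + 1 ≤ (F.filter (fun A => D ⊆ A)).card)
    {U C P : Finset α} (hC : C.card = r) (hCP : C ∩ U ⊆ P)
    (hn : (U ∪ C).card ≤ n) {g : α → β} (hg : Set.InjOn g ↑U) (hgP : P.image g ∈ F) :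
    ∃ g' : α → β, Set.InjOn g' ↑(U ∪ C) ∧ (∀ x ∈ U, g' x = g x) ∧ C.image g' ∈ F := by
  have hcardS : ((C ∩ U).image g).card = (C ∩ U).card :=
    Finset.card_image_of_injOn (hg.mono (by simp))
  have hcardW : (U.image g).card = U.card := Finset.card_image_of_injOn hg
  have hsplit := Finset.card_sdiff_add_card_inter C U
  have hunion := Finset.card_union_add_card_inter U C
  rw [Finset.inter_comm U C] at hunion
  obtain ⟨B, hBF, hBW⟩ := exists_edge_inter_eq (n := n) hr hF hδ
    (S := (C ∩ U).image g) (W := U.image g)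
    (Finset.image_subset_image Finset.inter_subset_right) (by omega) _ (P.image g) hgP
    (Finset.image_subset_image hCP) rfl
  have hsplitB := Finset.card_sdiff_add_card_inter B (U.image g)
  have hcardT : (C \ U).card = (B \ U.image g).card := by
    rw [hBW, hF B hBF] at hsplitB
    omega
  let e := Finset.equivOfCardEq hcardT
  let g' : α → β := fun x => if h : x ∈ C \ U then (e ⟨x, h⟩ : β) else g x
  have hold : ∀ x ∈ U, g' x = g x := fun x hx => by simp [g', hx]
  have hnew : ∀ x (h : x ∈ C \ U), g' x = e ⟨x, h⟩ := fun x h => dif_pos h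
  have hnewmem : ∀ x ∈ C \ U, g' x ∈ B \ U.image g := fun x h => by
    rw [hnew x h]; exact (e ⟨x, h⟩).2
  have hinj : Set.InjOn g' ↑(U ∪ C) := by
    have hcross : ∀ x ∈ U, ∀ y ∈ C \ U, g' x ≠ g' y := fun x hx y hy h => by
      have := (Finset.mem_sdiff.1 (hnewmem y hy)).2
      rw [← h, hold x hx] at this
      exact this (Finset.mem_image_of_mem g hx)
    intro x hx y hy hxy
    rw [← Finset.union_sdiff_self_eq_union, Finset.mem_coe, Finset.mem_union] at hx hy
    rcases hx with hx | hx <;> rcases hy with hy | hy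
    · rw [hold x hx, hold y hy] at hxy
      exact hg hx hy hxy
    · exact (hcross x hx y hy hxy).elim
    · exact (hcross y hy x hx hxy.symm).elim
    · rw [hnew x hx, hnew y hy] at hxy
      simpa using e.injective (Subtype.ext hxy)
  refine ⟨g', hinj, hold, ?_⟩
  have hsub : C.image g' ⊆ B := by
    intro z hz
    obtain ⟨x, hx, rfl⟩ := Finset.mem_image.1 hz
    by_cases hxU : x ∈ U
    · have : g x ∈ B ∩ U.image g := by
        rw [hBW]; exact Finset.mem_image_of_mem g (Finset.mem_inter.2 ⟨hx, hxU⟩)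
      rw [hold x hxU]
      exact (Finset.mem_inter.1 this).1
    · exact (Finset.mem_sdiff.1 (hnewmem x (Finset.mem_sdiff.2 ⟨hx, hxU⟩))).1
  have hcardC : (C.image g').card = r := by
    rw [Finset.card_image_of_injOn (hinj.mono (by simp)), hC]
  rw [Finset.eq_of_subset_of_card_le hsub (by rw [hcardC, hF B hBF])]
  exact hBF

/-- Tree embedding lemma: if `δ_{r-1}(F) ≥ |V(H)| - r + 1` then any placement of a
starting edge of the `r`-tree `H` onto an edge of `F` extends to an embedding of `H`
into `F`. -/
theorem tree_embedding {α β : Type*} [DecidableEq α] [DecidableEq β]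
    (r m : ℕ) (hr : 2 ≤ r) (hm : 0 < m)
    (E : Fin m → Finset α) (hord : IsTreeOrder E) (hcard : ∀ i, (E i).card = r)
    (F : Finset (Finset β)) (hF : ∀ A ∈ F, A.card = r)
    (hδ : ∀ D : Finset β, D.card = r - 1 → (∃ A ∈ F, D ⊆ A) →
      ((Finset.image E Finset.univ).sup id).card - r + 1 ≤
        (F.filter (fun A => D ⊆ A)).card)
    (f : α → β) (hf : Set.InjOn f ↑(E ⟨0, hm⟩)) (hfE : (E ⟨0, hm⟩).image f ∈ F) :
    ∃ g : α → β, Set.InjOn g ↑((Finset.image E Finset.univ).sup id) ∧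
      (∀ x ∈ E ⟨0, hm⟩, g x = f x) ∧ ∀ i : Fin m, (E i).image g ∈ F := by
  -- Induct on the number `k + 1` of edges already embedded.
  have key : ∀ k : ℕ, k < m → ∃ g : α → β,
      Set.InjOn g ↑((Finset.univ.filter (fun i : Fin m => i.1 ≤ k)).sup E) ∧
      (∀ x ∈ E ⟨0, hm⟩, g x = f x) ∧ ∀ i : Fin m, i.1 ≤ k → (E i).image g ∈ F := by
    intro k
    induction k with
    | zero =>
      intro _
      have h0 : ∀ i : Fin m, i.1 ≤ 0 → i = ⟨0, hm⟩ := fun i hi => Fin.ext (by simpa using hi)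
      refine ⟨f, hf.mono ?_, fun _ _ => rfl, fun i hi => by rwa [h0 i hi]⟩
      rw [Finset.coe_subset]
      refine Finset.sup_le fun i hi => ?_
      rw [h0 i (Finset.mem_filter.1 hi).2]
    | succ k ih =>
      intro hk
      obtain ⟨g, hg, hgf, hgF⟩ := ih (by omega)
      have hIio : Finset.univ.filter (fun i : Fin m => i.1 ≤ k) = Finset.Iio ⟨k + 1, hk⟩ := by
        ext i
        simp [Fin.lt_def]
      have hIic : Finset.univ.filter (fun i : Fin m => i.1 ≤ k + 1) =
          insert ⟨k + 1, hk⟩ (Finset.Iio ⟨k + 1, hk⟩) := by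
        ext i
        simp only [Finset.mem_filter, Finset.mem_univ, true_and, Finset.mem_insert,
          Finset.mem_Iio, Fin.lt_def, Fin.ext_iff]
        omega
      rw [hIio] at hg
      obtain ⟨j, hj, hEj⟩ := hord ⟨k + 1, hk⟩ (Nat.succ_pos k)
      have hle : ∀ i : Fin m, i.1 ≤ k → E i ⊆ (Finset.Iio (⟨k + 1, hk⟩ : Fin m)).sup E :=
        fun i hi => Finset.le_sup (f := E) (Finset.mem_Iio.2 (Fin.lt_def.2 (Nat.lt_succ_of_le hi)))
      have hsub : ∀ i, E i ⊆ (Finset.image E Finset.univ).sup id := fun i =>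
        Finset.le_sup (f := id) (Finset.mem_image_of_mem E (Finset.mem_univ i))
      have hjk : j.1 ≤ k := Nat.lt_succ_iff.1 hj
      obtain ⟨g', hg', hext, hC⟩ := exists_extend_step (by omega) hF hδ
        (hcard ⟨k + 1, hk⟩) hEj
        (Finset.card_le_card (Finset.union_subset (Finset.sup_le fun i _ => hsub i) (hsub _)))
        hg (hgF j hjk)
      refine ⟨g', ?_, ?_, ?_⟩
      · rwa [hIic, Finset.sup_insert, sup_comm]
      · intro x hx
        rw [hext x (hle ⟨0, hm⟩ (Nat.zero_le k) hx), hgf x hx]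
      · intro i hi
        rcases Nat.lt_or_ge k i.1 with h | h
        · have : i = ⟨k + 1, hk⟩ := Fin.ext (by simp; omega)
          rwa [this]
        · rw [Finset.image_congr (g := g) fun x hx => hext x (hle i h hx)]
          exact hgF i h
  obtain ⟨g, hg, hgf, hgF⟩ := key (m - 1) (by omega)
  refine ⟨g, hg.mono ?_, hgf, fun i => hgF i (by omega)⟩
  rw [Finset.coe_subset]
  refine Finset.sup_le fun A hA => ?_
  obtain ⟨i, -, rfl⟩ := Finset.mem_image.1 hA
  exact Finset.le_sup (f := E) (Finset.mem_filter.2 ⟨Finset.mem_univ i, by omega⟩)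

end
end

section
/- Let r ≥ 2 and let G be an r-graph with s vertices, and let S be a set of vertices of G each having degree 1 in G. Let F be an r-graph. If there is an injection f from V(G) ∖ S into V(F) such that for every edge E of G the set f(E ∖ S) belongs to Ker_s(F) (i.e., has kernel degree at least s in F), then G is embeddable in F. -/
/-!
The vertices in `S` are embedded greedily, one edge at a time.  Start from `f` on `V(G) \ S`.
Since vertices of `S` have degree 1, the vertices of `E ∩ S` are still unplaced when the edge `E`
is reached, so at most `s - |E ∩ S|` vertices of `F` are occupied.  By uniformity every petal of the
star with kernel `f(E \ S)` has exactly `|E ∩ S|` elements, and petals are nonempty, so fewer than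
`s` vertices are occupied.  The `s` petals are pairwise disjoint, hence one of them avoids all
occupied vertices (`HasKernelStar.exists_petal_disjoint`), and `E ∩ S` is mapped bijectively onto it.
The induction over the set of treated edges is `exists_partial_embedding`.
-/

open Finset
open scoped Classical

noncomputable section

variable {α β : Type*}

/-- `F` contains an `s`-star (sunflower with `s` petals) with kernel `D`, i.e. the kernel
degree of `D` in `F` is at least `s`. -/
def HasKernelStar [DecidableEq β] (F : Finset (Finset β)) (D : Finset β) (s : ℕ) : Prop :=
  ∃ P : Finset (Finset β), P ⊆ F ∧ P.card = s ∧
    (∀ A ∈ P, D ⊆ A ∧ (A \ D).Nonempty) ∧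
    ∀ A ∈ P, ∀ B ∈ P, A ≠ B → A ∩ B = D

/-- Pigeonhole: the petals of an `s`-star are pairwise disjoint, so a set `U` with fewer than `s`
elements misses one of them. -/
theorem HasKernelStar.exists_petal_disjoint {β : Type*} [DecidableEq β] {F : Finset (Finset β)}
    {D : Finset β} {s : ℕ} (h : HasKernelStar F D s) (U : Finset β) (hU : U.card < s) :
    ∃ A ∈ F, D ⊆ A ∧ Disjoint (A \ D) U := by
  obtain ⟨P, hPF, hPs, hPD, hPP⟩ := h
  by_contra! hcon
  have hmeet : ∀ A ∈ P, ∃ x, x ∈ A \ D ∧ x ∈ U := fun A hA =>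
    Finset.not_disjoint_iff.mp (hcon A (hPF hA) (hPD A hA).1)
  obtain ⟨A₀, hA₀⟩ := Finset.card_pos.mp (hPs ▸ Nat.zero_lt_of_lt hU)
  have : Nonempty β := ⟨(hmeet A₀ hA₀).choose⟩
  choose! p hpA hpU using hmeet
  have hinj : Set.InjOn p ↑P := by
    intro A hA B hB hAB
    by_contra hne
    have h1 := Finset.mem_sdiff.mp (hpA A hA)
    have h2 := Finset.mem_sdiff.mp (hpA B hB)
    rw [← hAB] at h2
    exact h1.2 (hPP A hA B hB hne ▸ Finset.mem_inter.mpr ⟨h1.1, h2.1⟩)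
  have := Finset.card_le_card_of_injOn p (fun A hA => hpU A hA) hinj
  omega

theorem eq_of_mem_of_hdeg_eq_one {α : Type*} [DecidableEq α] {G : Finset (Finset α)} {x : α}
    (hx : hdeg G x = 1) {A B : Finset α} (hA : A ∈ G) (hB : B ∈ G) (hxA : x ∈ A) (hxB : x ∈ B) :
    A = B :=
  Finset.card_le_one.mp hx.le A (Finset.mem_filter.mpr ⟨hA, hxA⟩) B
    (Finset.mem_filter.mpr ⟨hB, hxB⟩)

/-- The greedy process after the edges in `H` have been treated: `f` on `V(G) \ S` extends to a
map that is injective also on the vertices of `H` and sends the edges of `H` to edges of `F`. -/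
theorem exists_partial_embedding {α β : Type*} [DecidableEq α] [DecidableEq β]
    (r s : ℕ)
    (G : Finset (Finset α)) (hG : ∀ E ∈ G, E.card = r) (hs : (G.sup id).card = s)
    (S : Finset α) (hS : ∀ x ∈ S, hdeg G x = 1)
    (F : Finset (Finset β)) (hF : ∀ A ∈ F, A.card = r)
    (f : α → β) (hf : Set.InjOn f ↑(G.sup id \ S))
    (hker : ∀ E ∈ G, HasKernelStar F ((E \ S).image f) s)
    (hcut : ∀ E ∈ G, (E ∩ S).Nonempty)
    (H : Finset (Finset α)) (hH : H ⊆ G) :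
    ∃ g : α → β, (∀ x ∈ G.sup id \ S, g x = f x) ∧
      Set.InjOn g ↑((G.sup id \ S) ∪ H.sup id) ∧ ∀ E ∈ H, E.image g ∈ F := by
  induction H using Finset.induction_on with
  | empty => exact ⟨f, fun _ _ => rfl, by simpa using hf, by simp⟩
  | insert E H hEH ih =>
    obtain ⟨g, hgf, hginj, hgF⟩ := ih ((Finset.subset_insert _ _).trans hH)
    have hE : E ∈ G := hH (Finset.mem_insert_self _ _)
    have hHG : ∀ B ∈ H, B ∈ G := fun B hB => hH (Finset.mem_insert_of_mem hB)
    have hEV : E ⊆ G.sup id := Finset.le_sup (f := id) hE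
    set W := (G.sup id \ S) ∪ H.sup id with hW
    have hWV : W ⊆ G.sup id :=
      Finset.union_subset Finset.sdiff_subset (Finset.sup_mono hHG)
    have hdisj : Disjoint W (E ∩ S) := by
      rw [Finset.disjoint_left]
      intro x hxW hx
      obtain ⟨hxE, hxS⟩ := Finset.mem_inter.mp hx
      rcases Finset.mem_union.mp hxW with h | h
      · exact (Finset.mem_sdiff.mp h).2 hxS
      · obtain ⟨B, hB, hxB⟩ := Finset.mem_sup.mp h
        have hBE : B = E := eq_of_mem_of_hdeg_eq_one (hS x hxS) (hHG B hB) hE hxB hxE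
        exact hEH (hBE ▸ hB)
    have hWcard : (W.image g).card < s := by
      have h1 : (W ∪ (E ∩ S)).card ≤ s :=
        hs ▸ Finset.card_le_card (Finset.union_subset hWV (Finset.inter_subset_left.trans hEV))
      rw [Finset.card_union_of_disjoint hdisj] at h1
      have h2 := (hcut E hE).card_pos
      have h3 := Finset.card_image_le (s := W) (f := g)
      omega
    obtain ⟨A, hAF, hDA, hAW⟩ := (hker E hE).exists_petal_disjoint _ hWcard
    have hsub : E \ S ⊆ G.sup id \ S := Finset.sdiff_subset_sdiff hEV subset_rfl
    have hcard : (E ∩ S).card = (A \ (E \ S).image f).card := by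
      rw [Finset.card_sdiff_of_subset hDA, hF A hAF,
        Finset.card_image_of_injOn (hf.mono (by exact_mod_cast hsub)), ← hG E hE,
        ← Finset.card_sdiff_add_card_inter E S]
      omega
    obtain ⟨x₀, -⟩ := hcut E hE
    have : Nonempty β := ⟨f x₀⟩
    obtain ⟨e, he⟩ := (E ∩ S).finite_toSet.exists_bijOn_of_encard_eq
      (t := ((A \ (E \ S).image f : Finset β) : Set β)) (by
        rw [Set.encard_coe_eq_coe_finsetCard, Set.encard_coe_eq_coe_finsetCard, hcard])
    let g' : α → β := fun x => if x ∈ E ∩ S then e x else g x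
    have hg'e : ∀ x ∈ E ∩ S, g' x = e x := fun x hx => if_pos hx
    have hg'g : ∀ x ∈ W, g' x = g x := fun x hx => if_neg (Finset.disjoint_left.mp hdisj hx)
    have hsubW : G.sup id \ S ⊆ W := Finset.subset_union_left
    have hcover : (G.sup id \ S) ∪ (insert E H).sup id = W ∪ (E ∩ S) := by
      ext x
      have := @hEV x
      simp only [hW, Finset.sup_insert, id, Finset.sup_eq_union, Finset.mem_union,
        Finset.mem_sdiff, Finset.mem_inter]
      tauto
    have hne : ∀ x ∈ W, ∀ y ∈ E ∩ S, g' x ≠ g' y := by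
      intro x hx y hy hxy
      rw [hg'g x hx, hg'e y hy] at hxy
      exact Finset.disjoint_left.mp hAW (Finset.mem_coe.mp (he.mapsTo hy))
        (hxy ▸ Finset.mem_image_of_mem g hx)
    refine ⟨g', fun x hx => (hg'g x (hsubW hx)).trans (hgf x hx), ?_, ?_⟩
    · rw [hcover]
      intro x hx y hy hxy
      rcases Finset.mem_union.mp hx with hx | hx <;> rcases Finset.mem_union.mp hy with hy | hy
      · exact hginj hx hy (by rwa [hg'g x hx, hg'g y hy] at hxy)
      · exact absurd hxy (hne x hx y hy)
      · exact absurd hxy.symm (hne y hy x hx)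
      · exact he.injOn hx hy (by rwa [hg'e x hx, hg'e y hy] at hxy)
    · intro B hB
      rcases Finset.mem_insert.mp hB with rfl | hB
      · have h1 : (B \ S).image g' = (B \ S).image f := Finset.image_congr fun x hx =>
          (hg'g x (hsubW (hsub hx))).trans (hgf x (hsub hx))
        have h2 : (B ∩ S).image g' = A \ (B \ S).image f := by
          rw [← Finset.coe_inj, Finset.coe_image, ← he.image_eq]
          exact Set.image_congr fun x hx => hg'e x hx
        rw [← Finset.sdiff_union_inter B S, Finset.image_union, h1, h2,
          Finset.union_sdiff_of_subset hDA]
        exact hAF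
      · have hBW : B ⊆ W := (Finset.le_sup (f := id) hB).trans Finset.subset_union_right
        have : B.image g' = B.image g := Finset.image_congr fun x hx => hg'g x (hBW hx)
        rw [this]
        exact hgF B hB

/-- Embedding an expansion: if `G` has `s` vertices, `S` is a set of degree-1 vertices
of `G`, and an injection `f` of `V(G) ∖ S` into `V(F)` sends every reduced edge
`E ∖ S` into `Ker_s(F)`, then `G` is embeddable in `F`. -/
theorem expansion_embedding {α β : Type*} [DecidableEq α] [DecidableEq β]
    (r s : ℕ) (hr : 2 ≤ r)
    (G : Finset (Finset α)) (hG : ∀ E ∈ G, E.card = r) (hs : (G.sup id).card = s)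
    (S : Finset α) (hS : ∀ x ∈ S, hdeg G x = 1)
    (F : Finset (Finset β)) (hF : ∀ A ∈ F, A.card = r)
    (f : α → β) (hf : Set.InjOn f ↑(G.sup id \ S))
    (hker : ∀ E ∈ G, HasKernelStar F ((E \ S).image f) s) :
    ∃ g : α → β, Set.InjOn g ↑(G.sup id) ∧ ∀ E ∈ G, E.image g ∈ F := by
  -- `s ≥ r > 0`, so the star of `E` has a petal; it is nonempty and, by uniformity, as large
  -- as `E ∩ S`.
  have hcut : ∀ E ∈ G, (E ∩ S).Nonempty := by
    intro E hE
    have hEV : E ⊆ G.sup id := Finset.le_sup (f := id) hE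
    have hpos : 0 < s := by
      have := Finset.card_le_card hEV
      rw [hG E hE] at this
      omega
    obtain ⟨P, hPF, hPs, hPD, -⟩ := hker E hE
    obtain ⟨A, hA⟩ := Finset.card_pos.mp (hPs ▸ hpos)
    obtain ⟨hDA, hAD⟩ := hPD A hA
    have h1 := hAD.card_pos
    rw [Finset.card_sdiff_of_subset hDA, hF A (hPF hA), Finset.card_image_of_injOn
      (hf.mono (by exact_mod_cast Finset.sdiff_subset_sdiff hEV subset_rfl))] at h1
    have h2 := Finset.card_sdiff_add_card_inter E S
    rw [hG E hE] at h2
    exact Finset.card_pos.mp (by omega)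
  obtain ⟨g, -, hinj, hgF⟩ := exists_partial_embedding r s G hG hs S hS F hF f hf hker hcut G
    subset_rfl
  exact ⟨g, hinj.mono (by exact_mod_cast Finset.subset_union_right), hgF⟩

end
end
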